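/- Let F/K be a finite unramified extension of p-adic fields and L/K a finite Galois extension. Then m_{LF/F} = m_{L/K}, where m_{E/E'} denotes the largest upper-numbering jump of the ramification filtration of Gal(E/E'). In particular, if L/K is abelian then the conductor exponents satisfy f(LF/F) = f(L/K). -/

import Mathlib

universe v

/-- An (additive) normalized discrete valuation on `K`. -/
def IsNormalizedVal (p : ℕ) (K : Type*) [Field K] (v : K → ℤ) : Prop :=
  (∀ x y : K, x ≠ 0 → y ≠ 0 → v (x * y) = v x + v y) ∧
  (∀ x y : K, x ≠ 0 → y ≠ 0 → x + y ≠ 0 → min (v x) (v y) ≤ v (x + y)) ∧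
  (∃ π : K, π ≠ 0 ∧ v π = 1) ∧
  (0 < v ((p : K)))

/-- The abelian conductor exponent of `L/K`, defined via norm groups. -/
noncomputable def condExp {K : Type*} [Field K] (vK : K → ℤ)
    (L : Type v) [Field L] [Algebra K L] : ℕ :=
  sInf {n : ℕ | ∀ u : K, u ≠ 0 → vK u = 0 →
    (n = 0 ∨ u = 1 ∨ (n : ℤ) ≤ vK (u - 1)) →
      ∃ x : L, x ≠ 0 ∧ Algebra.norm K x = u}

open scoped Classical in
/-- The largest upper-numbering ramification jump `m_{L/K} = φ_{L/K}(c_{L/K})` of a finite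
Galois extension `L/K`, computed via the index function `i_{L/K}(g) = ord_{π_L}(gθ − θ)`
for a generator `θ` of `O_L` over `O_K`, using the explicit formula
`φ(u) = (1/|G₀|)·∑_{g ∈ G₀} min(i(g), u+1) − 1` for the Herbrand function
(by convention `m_{L/K} = −1` when `L/K` is unramified). -/
noncomputable def mJump (K : Type*) {L : Type*} [Field K] [Field L] [Algebra K L]
    [FiniteDimensional K L] (vL : L → ℤ) (θ : L) : ℝ :=
  let i : (L ≃ₐ[K] L) → ℕ := fun g => (vL (g θ - θ)).toNat
  let c : ℕ := (Finset.univ.filter (fun g : L ≃ₐ[K] L => g ≠ 1)).sup i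
  let G₀ : Finset (L ≃ₐ[K] L) :=
    Finset.univ.filter (fun g => g = 1 ∨ (g θ - θ ≠ 0 ∧ 1 ≤ vL (g θ - θ)))
  ((c : ℝ) + ∑ g ∈ G₀.filter (fun g => g ≠ 1), (min (i g) c : ℝ)) / (G₀.card : ℝ) - 1

set_option linter.unusedSectionVars false
set_option linter.style.haveILetI false

namespace UBC

section basics
variable (p : ℕ) [Fact p.Prime] {E : Type*} [Field E] [Algebra ℚ_[p] E]
  [FiniteDimensional ℚ_[p] E]

/-- the extended p-adic absolute value -/
noncomputable def nm : E →*₀ ℝ where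
  toFun x := spectralMulAlgNorm ℚ_[p] E x
  map_zero' := map_zero _
  map_one' := map_one _
  map_mul' := map_mul _

theorem nm_def (x : E) : nm p x = spectralNorm ℚ_[p] E x := rfl

theorem nm_nonneg (x : E) : 0 ≤ nm p x := apply_nonneg (spectralMulAlgNorm ℚ_[p] E) x

theorem nm_pos {x : E} (h : x ≠ 0) : 0 < nm p x :=
  lt_of_le_of_ne (nm_nonneg p x) (Ne.symm ((map_ne_zero (nm p : E →*₀ ℝ)).2 h))

theorem nm_add_le (x y : E) : nm p (x + y) ≤ max (nm p x) (nm p y) :=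
  isNonarchimedean_spectralNorm x y

theorem nm_neg (x : E) : nm p (-x) = nm p x := map_neg_eq_map (spectralMulAlgNorm ℚ_[p] E) x

theorem nm_sub_comm (x y : E) : nm p (x - y) = nm p (y - x) := by rw [← nm_neg, neg_sub]

theorem nm_sub_le (x y : E) : nm p (x - y) ≤ max (nm p x) (nm p y) := by
  rw [sub_eq_add_neg, ← nm_neg p y]; exact nm_add_le p _ _

theorem nm_add_le' {x y : E} {c : ℝ} (hx : nm p x ≤ c) (hy : nm p y ≤ c) : nm p (x + y) ≤ c :=
  (nm_add_le p x y).trans (max_le hx hy)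

theorem nm_sub_le' {x y : E} {c : ℝ} (hx : nm p x ≤ c) (hy : nm p y ≤ c) : nm p (x - y) ≤ c :=
  (nm_sub_le p x y).trans (max_le hx hy)

theorem nm_add_lt' {x y : E} {c : ℝ} (hx : nm p x < c) (hy : nm p y < c) : nm p (x + y) < c :=
  (nm_add_le p x y).trans_lt (max_lt hx hy)

theorem nm_sub_lt' {x y : E} {c : ℝ} (hx : nm p x < c) (hy : nm p y < c) : nm p (x - y) < c :=
  (nm_sub_le p x y).trans_lt (max_lt hx hy)

theorem nm_sum_le {ι : Type*} (s : Finset ι) (f : ι → E) {c : ℝ} (hc : 0 ≤ c)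
    (h : ∀ i ∈ s, nm p (f i) ≤ c) : nm p (∑ i ∈ s, f i) ≤ c := by
  classical
  induction s using Finset.induction_on with
  | empty => simpa using hc
  | insert a s ha ih =>
    rw [Finset.sum_insert ha]
    exact nm_add_le' p (h a (by simp)) (ih fun i hi => h i (by simp [hi]))

theorem nm_sum_lt {ι : Type*} (s : Finset ι) (f : ι → E) {c : ℝ} (hc : 0 < c)
    (h : ∀ i ∈ s, nm p (f i) < c) : nm p (∑ i ∈ s, f i) < c := by
  classical
  induction s using Finset.induction_on with
  | empty => simpa using hc
  | insert a s ha ih =>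
    rw [Finset.sum_insert ha]
    exact nm_add_lt' p (h a (by simp)) (ih fun i hi => h i (by simp [hi]))

/-- if `|x - y| < |y|` then `|x| = |y|` -/
theorem nm_eq_of_sub_lt {x y : E} (h : nm p (x - y) < nm p y) : nm p x = nm p y := by
  apply le_antisymm
  · have := nm_add_le p (x - y) y
    rw [sub_add_cancel] at this
    exact this.trans (max_le h.le le_rfl)
  · by_contra hlt
    push Not at hlt
    have := nm_sub_le p x (x - y)
    rw [sub_sub_cancel] at this
    exact absurd (this.trans_lt (max_lt hlt h)) (lt_irrefl _)

theorem nm_natCast_le (n : ℕ) : nm p (n : E) ≤ 1 := by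
  induction n with
  | zero => simp
  | succ n ih => push_cast; exact nm_add_le' p ih (by simp)

theorem nm_algebraMap_Qp (x : ℚ_[p]) : nm p (algebraMap ℚ_[p] E x) = ‖x‖ :=
  spectralNorm_extends x

theorem nm_p_lt : nm p (p : E) < 1 := by
  have := nm_algebraMap_Qp p (E := E) (p : ℚ_[p])
  rw [map_natCast] at this
  rw [this]; exact Padic.norm_p_lt_one

theorem p_ne_zero : (p : E) ≠ 0 := by
  have : CharZero E := charZero_of_injective_algebraMap (algebraMap ℚ_[p] E).injective
  exact_mod_cast (Fact.out : p.Prime).ne_zero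

theorem nm_tower {E' : Type*} [Field E'] [Algebra ℚ_[p] E'] [FiniteDimensional ℚ_[p] E']
    [Algebra E E'] [IsScalarTower ℚ_[p] E E'] (x : E) : nm p (algebraMap E E' x) = nm p x :=
  (spectralNorm.eq_of_tower (K := ℚ_[p]) (L := E') x).symm

theorem nm_aut {E' : Type*} [Field E'] [Algebra ℚ_[p] E'] [FiniteDimensional ℚ_[p] E']
    [Algebra E E'] [IsScalarTower ℚ_[p] E E'] (g : E' ≃ₐ[E] E') (x : E') :
    nm p (g x) = nm p x :=
  (spectralNorm_eq_of_equiv (g.restrictScalars ℚ_[p]) x).symm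

theorem net (ε : ℝ) (hε : 0 < ε) : ∃ S : Set E, S.Finite ∧ ∀ x : E, nm p x ≤ 1 →
    ∃ y ∈ S, nm p (x - y) < ε := by
  letI := spectralNorm.nontriviallyNormedField ℚ_[p] E
  letI : NormedSpace ℚ_[p] E := spectralNorm.normedSpace ℚ_[p] E
  haveI := FiniteDimensional.proper ℚ_[p] E
  have hc : IsCompact (Metric.closedBall (0 : E) 1) := isCompact_closedBall _ _
  obtain ⟨S, hS, hS2⟩ := Metric.totallyBounded_iff.1 hc.totallyBounded ε hε
  refine ⟨S, hS, fun x hx => ?_⟩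
  have hx' : x ∈ Metric.closedBall (0 : E) 1 := by
    rw [mem_closedBall_zero_iff]; exact hx
  obtain ⟨y, hy, hxy⟩ := Set.mem_iUnion₂.1 (hS2 hx')
  refine ⟨y, hy, ?_⟩
  rw [Metric.mem_ball, dist_eq_norm] at hxy
  exact hxy

variable (E) in
theorem exists_unif : ∃ π : E, π ≠ 0 ∧ nm p π < 1 ∧ ∀ x : E, nm p x < 1 → nm p x ≤ nm p π := by
  have hp0 : 0 < nm p (p : E) := nm_pos p (p_ne_zero p)
  obtain ⟨S, hS, hS2⟩ := net p (E := E) (nm p (p : E)) hp0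
  have hfin : ({y ∈ S | nm p y < 1} ∪ {(p : E)}).Finite := (hS.subset (by intro x hx; exact hx.1)).union (Set.finite_singleton _)
  obtain ⟨π, hπ, hmax⟩ := Set.exists_max_image _ (nm p) hfin ⟨(p : E), by simp⟩
  have hpp : nm p (p : E) ≤ nm p π := hmax _ (by simp)
  have h1 : nm p π < 1 := by
    rcases hπ with h | h
    · exact h.2
    · rw [Set.mem_singleton_iff.1 h]; exact nm_p_lt p
  refine ⟨π, fun h => ?_, h1, fun x hx => ?_⟩
  · rw [h, map_zero] at hpp; linarith
  · rcases le_or_gt (nm p x) (nm p (p : E)) with h | h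
    · exact h.trans hpp
    · obtain ⟨y, hy, hxy⟩ := hS2 x hx.le
      have : nm p y = nm p x := nm_eq_of_sub_lt p (by rw [nm_sub_comm]; exact hxy.trans h)
      rw [← this]
      exact hmax _ (Or.inl ⟨hy, by rwa [this]⟩)

variable (E) in
/-- a uniformizer -/
noncomputable def unif : E := (exists_unif p E).choose

variable (E) in
/-- absolute value of a uniformizer -/
noncomputable def rr : ℝ := nm p (unif p E)

theorem unif_ne : unif p E ≠ 0 := (exists_unif p E).choose_spec.1
theorem nm_unif : nm p (unif p E) = rr p E := rfl
variable (E) in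
theorem rr_pos : 0 < rr p E := nm_pos p (unif_ne p)
variable (E) in
theorem rr_lt : rr p E < 1 := (exists_unif p E).choose_spec.2.1
theorem le_rr {x : E} (h : nm p x < 1) : nm p x ≤ rr p E := (exists_unif p E).choose_spec.2.2 x h

theorem nm_zpow_exists {x : E} (hx : x ≠ 0) : ∃ k : ℤ, nm p x = rr p E ^ k := by
  have h0 := rr_pos p E
  have h1 := rr_lt p E
  obtain ⟨n, hn, hn'⟩ := exists_mem_Ico_zpow (nm_pos p hx) ((one_lt_inv₀ h0).2 h1)
  refine ⟨-n, ?_⟩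
  rw [inv_zpow, ← zpow_neg] at hn
  rw [inv_zpow, ← zpow_neg] at hn'
  apply le_antisymm _ hn
  have h3 : nm p (x * unif p E ^ (n + 1)) < 1 := by
    rw [map_mul, map_zpow₀, nm_unif]
    calc _ < rr p E ^ (-(n+1)) * rr p E ^ (n+1) := by gcongr
      _ = 1 := by rw [← zpow_add₀ h0.ne']; simp
  have h4 := le_rr p h3
  rw [map_mul, map_zpow₀, nm_unif] at h4
  rw [zpow_neg]
  rw [zpow_add₀ h0.ne', zpow_one, ← mul_assoc] at h4
  have h5 : nm p x * rr p E ^ n ≤ 1 := by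
    by_contra h; push Not at h
    nlinarith
  rwa [← one_div, le_div_iff₀ (by positivity)]

theorem rr_zpow_le_iff {a b : ℤ} : rr p E ^ a ≤ rr p E ^ b ↔ b ≤ a :=
  zpow_le_zpow_iff_right_of_lt_one₀ (rr_pos p E) (rr_lt p E)

theorem rr_zpow_inj {a b : ℤ} (h : rr p E ^ a = rr p E ^ b) : a = b :=
  le_antisymm ((rr_zpow_le_iff p).1 h.ge) ((rr_zpow_le_iff p).1 h.le)

end basics
end UBC

namespace UBC
section uniq
variable {p : ℕ} [Fact p.Prime] {E : Type*} [Field E] [Algebra ℚ_[p] E]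
  [FiniteDimensional ℚ_[p] E] {v : E → ℤ}

theorem v_one (h : IsNormalizedVal p E v) : v 1 = 0 := by
  have := h.1 1 1 one_ne_zero one_ne_zero
  rw [mul_one] at this; omega

theorem v_neg_one (h : IsNormalizedVal p E v) : v (-1) = 0 := by
  have := h.1 (-1) (-1) (by simp) (by simp)
  rw [neg_mul_neg, mul_one, v_one h] at this; omega

theorem v_neg (h : IsNormalizedVal p E v) {x : E} (hx : x ≠ 0) : v (-x) = v x := by
  have := h.1 (-1) x (by simp) hx
  rw [v_neg_one h] at this; rw [← neg_one_mul, this, zero_add]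

theorem v_pow (h : IsNormalizedVal p E v) {x : E} (hx : x ≠ 0) (n : ℕ) : v (x ^ n) = n * v x := by
  induction n with
  | zero => simp [v_one h]
  | succ n ih => rw [pow_succ, h.1 _ _ (pow_ne_zero _ hx) hx, ih]; push_cast; ring

theorem v_inv (h : IsNormalizedVal p E v) {x : E} (hx : x ≠ 0) : v (x⁻¹) = - v x := by
  have := h.1 x x⁻¹ hx (inv_ne_zero hx)
  rw [mul_inv_cancel₀ hx, v_one h] at this; omega

theorem v_div (h : IsNormalizedVal p E v) {x y : E} (hx : x ≠ 0) (hy : y ≠ 0) :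
    v (x / y) = v x - v y := by
  rw [div_eq_mul_inv, h.1 _ _ hx (inv_ne_zero hy), v_inv h hy]; ring

theorem v_zpow (h : IsNormalizedVal p E v) {x : E} (hx : x ≠ 0) (n : ℤ) : v (x ^ n) = n * v x := by
  cases n with
  | ofNat n => simpa using v_pow h hx n
  | negSucc n =>
    rw [zpow_negSucc, v_inv h (pow_ne_zero _ hx), v_pow h hx, Int.negSucc_eq]; push_cast; ring

theorem root_exists (x : ℤ_[p]) (m : ℕ) (hm : m.Coprime p) : ∃ z : ℤ_[p], z ^ m = 1 + p * x := by
  have hm1 : ‖(m : ℤ_[p])‖ = 1 := by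
    rw [PadicInt.norm_natCast_eq_one_iff]; exact hm.symm
  have := hensels_lemma (p := p) (R := ℤ_[p])
    (F := Polynomial.X ^ m - Polynomial.C (1 + p * x)) (a := 1) (by
      simp only [map_sub, map_pow, Polynomial.aeval_X, one_pow, Polynomial.aeval_C,
        Polynomial.derivative_sub, Polynomial.derivative_X_pow, Polynomial.derivative_C, map_mul, map_zero]
      simp only [Algebra.algebraMap_self, RingHom.id_apply, sub_zero, mul_one, hm1, one_pow, map_natCast]
      have : (1 : ℤ_[p]) - (1 + p * x) = -(p * x) := by ring
      rw [this, norm_neg, norm_mul]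
      have h1 : ‖(p : ℤ_[p])‖ < 1 := by rw [PadicInt.norm_def]; exact Padic.norm_p_lt_one
      have h2 := PadicInt.norm_le_one x
      have h3 := norm_nonneg x
      nlinarith [norm_nonneg (p : ℤ_[p])])
  obtain ⟨z, hz, -⟩ := this
  refine ⟨z, ?_⟩
  simp only [map_sub, map_pow, Polynomial.aeval_X, Polynomial.aeval_C, Algebra.algebraMap_self, RingHom.id_apply] at hz
  exact sub_eq_zero.1 hz

theorem v_Zp (h : IsNormalizedVal p E v) (z : ℤ_[p]) (hz : z ≠ 0) :
    0 ≤ v (algebraMap ℚ_[p] E (z : ℚ_[p])) := by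
  set ι : ℤ_[p] →+* E := (algebraMap ℚ_[p] E).comp (PadicInt.Coe.ringHom) with hι
  have hinj : Function.Injective ι := by
    rw [hι]; exact (algebraMap ℚ_[p] E).injective.comp Subtype.val_injective
  change 0 ≤ v (ι z)
  have hz0 : ι z ≠ 0 := by rwa [Ne, map_eq_zero_iff _ hinj]
  have hp0 : (p : E) ≠ 0 := p_ne_zero p
  have key : ∀ x : ℤ_[p], 1 + (p : ℤ_[p]) * x ≠ 0 → v (ι (1 + p * x)) = 0 := by
    intro x hx
    set k := v (ι (1 + p * x)) with hk
    have hcop : Nat.Coprime (p * k.natAbs + 1) p := by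
      simp [Nat.coprime_mul_right_add_left]
    obtain ⟨y, hy⟩ := root_exists x (p * k.natAbs + 1) hcop
    have hy0 : ι y ≠ 0 := by
      rw [Ne, map_eq_zero_iff _ hinj]; rintro rfl
      rw [zero_pow (by omega)] at hy; exact hx hy.symm
    have h1 : k = ((p * k.natAbs + 1 : ℕ) : ℤ) * v (ι y) := by
      rw [← v_pow h hy0, ← map_pow, hy]
    by_contra hk0
    have hdvd : ((p * k.natAbs + 1 : ℕ) : ℤ) ∣ k := ⟨_, h1⟩
    have := Int.natAbs_dvd_natAbs.2 hdvd
    rw [Int.natAbs_natCast] at this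
    have := Nat.le_of_dvd (by omega) this
    have hp := (Fact.out : p.Prime).two_le
    have h7 : k.natAbs ≤ p * k.natAbs := Nat.le_mul_of_pos_left _ (by omega)
    omega
  by_contra hneg
  push Not at hneg
  obtain ⟨k, hk⟩ : ∃ k : ℕ, v (p : E) + k * v (ι z) < 0 := ⟨(v (p : E) + 1).toNat, by
    have := Int.self_le_toNat (v (p : E) + 1)
    nlinarith⟩
  have e1 : v (ι (p * z ^ k)) = v (p : E) + k * v (ι z) := by
    rw [map_mul, map_pow, map_natCast, h.1 _ _ hp0 (pow_ne_zero _ hz0), v_pow h hz0]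
  have hne : 1 + (p : ℤ_[p]) * z ^ k ≠ 0 := by
    intro h0
    have : (p : ℤ_[p]) * z ^ k = -1 := by linear_combination h0
    rw [this, map_neg, map_one, v_neg_one h] at e1; omega
  have e2 := key _ hne
  have e3 := h.2.1 (ι (1 + p * z ^ k)) (-1) (by rwa [Ne, map_eq_zero_iff _ hinj]) (by simp) (by
    rw [map_add, map_one, add_neg_cancel_comm, map_mul, map_pow, map_natCast]
    exact mul_ne_zero hp0 (pow_ne_zero _ hz0))
  rw [e2, v_neg_one h, min_self, map_add, map_one, add_neg_cancel_comm, e1] at e3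
  omega

theorem v_sum_ge (h : IsNormalizedVal p E v) {ι : Type*} (s : Finset ι) (f : ι → E) (k : ℤ)
    (hf : ∀ i ∈ s, f i = 0 ∨ k ≤ v (f i)) : ∑ i ∈ s, f i = 0 ∨ k ≤ v (∑ i ∈ s, f i) := by
  classical
  induction s using Finset.induction_on with
  | empty => simp
  | insert a s ha ih =>
    rw [Finset.sum_insert ha]
    have h1 := hf a (by simp)
    have h2 := ih fun i hi => hf i (by simp [hi])
    by_cases h0 : f a + ∑ i ∈ s, f i = 0
    · exact Or.inl h0
    right
    rcases h1 with h1 | h1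
    · rw [h1, zero_add] at h0 ⊢; exact h2.resolve_left h0
    by_cases hb : ∑ i ∈ s, f i = 0
    · rwa [hb, add_zero]
    by_cases hc : f a = 0
    · rw [hc, zero_add]; exact h2.resolve_left hb
    exact (le_min h1 (h2.resolve_left hb)).trans (h.2.1 _ _ hc hb h0)

theorem coeff_le {x : E} (hx : nm p x ≤ 1) (i : ℕ) : ‖(minpoly ℚ_[p] x).coeff i‖ ≤ 1 := by
  have hm := minpoly.monic (IsIntegral.of_finite ℚ_[p] x)
  rcases lt_trichotomy i (minpoly ℚ_[p] x).natDegree with hi | hi | hi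
  · have h1 : spectralValueTerms (minpoly ℚ_[p] x) i ≤ 1 :=
      (le_ciSup (spectralValueTerms_bddAbove _) i).trans hx
    rw [spectralValueTerms_of_lt_natDegree _ hi] at h1
    by_contra hc
    push Not at hc
    have : 0 < (1 / (((minpoly ℚ_[p] x).natDegree : ℝ) - i)) := by
      have : (i : ℝ) < (minpoly ℚ_[p] x).natDegree := by exact_mod_cast hi
      apply one_div_pos.2; linarith
    exact absurd h1 (not_le.2 (Real.one_lt_rpow hc this))
  · rw [hi, Polynomial.coeff_natDegree, hm.leadingCoeff]; simp
  · rw [Polynomial.coeff_eq_zero_of_natDegree_lt hi]; simp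

theorem v_nonneg (h : IsNormalizedVal p E v) {x : E} (hx0 : x ≠ 0) (hx : nm p x ≤ 1) :
    0 ≤ v x := by
  by_contra hneg
  push Not at hneg
  set f := minpoly ℚ_[p] x
  have hm : f.Monic := minpoly.monic (IsIntegral.of_finite ℚ_[p] x)
  have h0 : Polynomial.aeval x f = 0 := minpoly.aeval _ _
  rw [Polynomial.aeval_eq_sum_range, Finset.sum_range_succ, hm.coeff_natDegree, one_smul] at h0
  have h1 := v_sum_ge h (Finset.range f.natDegree) (fun i => f.coeff i • x ^ i) (f.natDegree * v x + 1) (by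
    intro i hi
    rw [Finset.mem_range] at hi
    by_cases hc : f.coeff i = 0
    · left; simp [hc]
    right
    rw [Algebra.smul_def, h.1 _ _ (by simpa using hc) (pow_ne_zero _ hx0), v_pow h hx0]
    have := v_Zp h ⟨f.coeff i, coeff_le hx i⟩ (by
      intro h; apply hc; exact congrArg Subtype.val h)
    have h3 : 0 ≤ v (algebraMap ℚ_[p] E (f.coeff i)) := this
    have : (i : ℤ) + 1 ≤ f.natDegree := by exact_mod_cast hi
    nlinarith)
  have h2 : ∑ i ∈ Finset.range f.natDegree, f.coeff i • x ^ i = - x ^ f.natDegree := by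
    linear_combination h0
  rw [h2] at h1
  have h3 : -x ^ f.natDegree ≠ 0 := by simpa using fun h => absurd h hx0
  have h4 := h1.resolve_left h3
  rw [v_neg h (pow_ne_zero _ hx0), v_pow h hx0] at h4
  omega

theorem v_pos (h : IsNormalizedVal p E v) {x : E} (hx0 : x ≠ 0) (hx : nm p x < 1) :
    0 < v x := by
  have hp0 : (p : E) ≠ 0 := p_ne_zero p
  obtain ⟨m, hm⟩ := exists_pow_lt_of_lt_one (nm_pos p hp0) hx
  have := v_nonneg h (x := x ^ m / p) (div_ne_zero (pow_ne_zero _ hx0) hp0) (by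
    rw [map_div₀, map_pow]; exact (div_le_one (nm_pos p hp0)).2 hm.le)
  rw [v_div h (pow_ne_zero _ hx0) hp0, v_pow h hx0] at this
  have h1 := h.2.2.2
  by_contra hc
  push Not at hc
  nlinarith

theorem nm_eq_v (h : IsNormalizedVal p E v) {x : E} (hx0 : x ≠ 0) : nm p x = rr p E ^ (v x) := by
  have hu : unif p E ≠ 0 := unif_ne p
  have key : ∀ y : E, y ≠ 0 → ∀ k : ℤ, nm p y = rr p E ^ k → v y = k * v (unif p E) := by
    intro y hy k hk
    have hne : y / unif p E ^ k ≠ 0 := div_ne_zero hy (zpow_ne_zero _ hu)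
    have hn : nm p (y / unif p E ^ k) = 1 := by
      rw [map_div₀, map_zpow₀, hk, nm_unif]; exact div_self (zpow_ne_zero _ (rr_pos p E).ne')
    have h1 := v_nonneg h hne hn.le
    have h2 := v_nonneg h (inv_ne_zero hne) (by rw [map_inv₀, hn, inv_one])
    rw [v_inv h hne] at h2
    rw [v_div h hy (zpow_ne_zero _ hu), v_zpow h hu] at h1 h2
    omega
  obtain ⟨π, hπ0, hπ⟩ := h.2.2.1
  obtain ⟨k, hk⟩ := nm_zpow_exists p hπ0
  have h1 := key π hπ0 k hk
  have h2 := v_pos h hu (rr_lt p E)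
  have h3 : v (unif p E) = 1 := by
    rw [hπ] at h1
    rcases Int.isUnit_iff.1 (IsUnit.of_mul_eq_one _ (by rw [mul_comm]; exact h1.symm) : IsUnit (v (unif p E))) with h | h <;> omega
  obtain ⟨l, hl⟩ := nm_zpow_exists p hx0
  have := key x hx0 l hl
  rw [this, h3, mul_one]; exact hl

end uniq
end UBC

namespace UBC
section ring
variable (p : ℕ) [Fact p.Prime] {E : Type*} [Field E] [Algebra ℚ_[p] E]
  [FiniteDimensional ℚ_[p] E]

theorem pow_open (m : ℕ) (hm : m ≠ 0) (ε : ℝ) (hε : 0 < ε) : ∃ δ : ℝ, 0 < δ ∧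
    ∀ u : E, nm p (u - 1) ≤ δ → ∃ t : E, t ^ m = u ∧ nm p (t - 1) ≤ ε := by
  letI := spectralNorm.nontriviallyNormedField ℚ_[p] E
  haveI : CompleteSpace E := spectralNorm.completeSpace ℚ_[p] E
  have : CharZero E := charZero_of_injective_algebraMap (algebraMap ℚ_[p] E).injective
  have hd := hasStrictDerivAt_pow (𝕜 := E) m 1
  have hn := hd.map_nhds_eq (by simpa using hm)
  rw [one_pow] at hn
  have h1 : (fun x : E => x ^ m) '' Metric.closedBall (1 : E) ε ∈ nhds (1 : E) := by
    rw [← hn]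
    exact Filter.image_mem_map (Metric.closedBall_mem_nhds _ hε)
  obtain ⟨δ, hδ, hsub⟩ := Metric.nhds_basis_closedBall.mem_iff.1 h1
  refine ⟨δ, hδ, fun u hu => ?_⟩
  obtain ⟨t, ht, htu⟩ := hsub (show u ∈ Metric.closedBall (1 : E) δ by
    rw [Metric.mem_closedBall, dist_eq_norm]; exact hu)
  refine ⟨t, htu, ?_⟩
  rw [Metric.mem_closedBall, dist_eq_norm] at ht; exact ht

variable (E) in
/-- the valuation ring -/
noncomputable def OO : ValuationSubring E where
  carrier := {x | nm p x ≤ 1}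
  mul_mem' := fun {a b} ha hb => by
    simp only [Set.mem_setOf_eq, map_mul] at *
    exact mul_le_one₀ ha (nm_nonneg p b) hb
  one_mem' := by simp
  add_mem' := fun ha hb => nm_add_le' p ha hb
  zero_mem' := by simp
  neg_mem' := fun {x} hx => by simpa [nm_neg] using hx
  mem_or_inv_mem' := fun x => by
    simp only [Set.mem_setOf_eq, map_inv₀]
    rcases le_or_gt (nm p x) 1 with h | h
    · exact Or.inl h
    · exact Or.inr (inv_le_one_of_one_le₀ h.le)

theorem mem_OO {x : E} : x ∈ OO p E ↔ nm p x ≤ 1 := Iff.rfl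

theorem isUnit_OO {x : OO p E} : IsUnit x ↔ nm p (x : E) = 1 := by
  constructor
  · intro h
    obtain ⟨y, hy⟩ := h.exists_right_inv
    have h1 : nm p (x : E) * nm p (y : E) = 1 := by
      rw [← map_mul, ← map_one (nm p : E →*₀ ℝ)]; congr 1
      exact congrArg Subtype.val hy
    have hx : nm p (x : E) ≤ 1 := x.2
    have hy : nm p (y : E) ≤ 1 := y.2
    nlinarith [nm_nonneg p (x : E), nm_nonneg p (y : E)]
  · intro h
    have h0 : (x : E) ≠ 0 := by intro h0; rw [h0, map_zero] at h; norm_num at h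
    refine IsUnit.of_mul_eq_one ⟨(x : E)⁻¹, ?_⟩ ?_
    · rw [mem_OO, map_inv₀, h, inv_one]
    · ext; simp [h0]

theorem mem_max_OO {x : OO p E} : x ∈ IsLocalRing.maximalIdeal (OO p E) ↔ nm p (x : E) < 1 := by
  rw [IsLocalRing.mem_maximalIdeal, mem_nonunits_iff, isUnit_OO]
  exact ⟨fun h => lt_of_le_of_ne x.2 h, fun h => h.ne⟩

instance : IsDiscreteValuationRing (OO p E) := by
  apply IsDiscreteValuationRing.ofHasUnitMulPowIrreducibleFactorization
  have hu : nm p (unif p E) ≤ 1 := (rr_lt p E).le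
  refine ⟨⟨unif p E, hu⟩, ?_, ?_⟩
  · constructor
    · rw [isUnit_OO]; exact (rr_lt p E).ne
    · intro a b hab
      rw [isUnit_OO, isUnit_OO]
      by_contra hc
      push Not at hc
      have ha : nm p (a : E) < 1 := lt_of_le_of_ne a.2 hc.1
      have hb : nm p (b : E) < 1 := lt_of_le_of_ne b.2 hc.2
      have h1 := le_rr p ha
      have h2 : rr p E = nm p (a : E) * nm p (b : E) := by
        rw [← map_mul, ← nm_unif]; congr 1; exact congrArg Subtype.val hab
      nlinarith [rr_pos p E, nm_nonneg p (b : E)]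
  · intro x hx
    have hx0 : (x : E) ≠ 0 := by simpa using hx
    obtain ⟨k, hk⟩ := nm_zpow_exists p hx0
    have hk0 : 0 ≤ k := by
      rw [← rr_zpow_le_iff p (E := E), ← hk, zpow_zero]; exact x.2
    lift k to ℕ using hk0
    refine ⟨k, ?_⟩
    have hun : nm p ((x : E) / unif p E ^ k) = 1 := by
      rw [map_div₀, map_pow, hk, nm_unif, zpow_natCast]
      exact div_self (pow_ne_zero _ (rr_pos p E).ne')
    have : IsUnit (⟨(x : E) / unif p E ^ k, hun.le⟩ : OO p E) := (isUnit_OO p).2 hun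
    refine ⟨this.unit, ?_⟩
    ext
    simp only [IsUnit.unit_spec, MulMemClass.coe_mul, SubmonoidClass.coe_pow]
    rw [mul_div_cancel₀ _ (pow_ne_zero _ (unif_ne p))]

instance : Finite (IsLocalRing.ResidueField (OO p E)) := by
  obtain ⟨S, hS, hS2⟩ := net p (E := E) 1 one_pos
  have : Finite S := hS
  classical
  let f : S → IsLocalRing.ResidueField (OO p E) := fun s =>
    if h : nm p (s : E) ≤ 1 then IsLocalRing.residue (OO p E) ⟨s, h⟩ else 0
  apply Finite.of_surjective f
  intro y
  obtain ⟨x, rfl⟩ := IsLocalRing.residue_surjective y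
  obtain ⟨s, hs, hxs⟩ := hS2 x x.2
  have h1 : nm p s ≤ 1 := by
    have := nm_sub_le' p x.2 hxs.le
    simpa using this
  refine ⟨⟨s, hs⟩, ?_⟩
  simp only [f, h1, dif_pos]
  rw [eq_comm, ← sub_eq_zero, ← map_sub, IsLocalRing.residue_eq_zero_iff, mem_max_OO]
  exact hxs

variable (E) in
/-- residue cardinality -/
noncomputable def qq : ℕ := Nat.card (IsLocalRing.ResidueField (OO p E))

variable (E) in
theorem qq_gt : 1 < qq p E := Finite.one_lt_card

theorem qq_spec {x : E} (hx : nm p x ≤ 1) : nm p (x ^ qq p E - x) < 1 := by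
  have := Fintype.ofFinite (IsLocalRing.ResidueField (OO p E))
  have h : (IsLocalRing.residue (OO p E) ⟨x, hx⟩) ^ qq p E = IsLocalRing.residue (OO p E) ⟨x, hx⟩ := by
    rw [qq, Nat.card_eq_fintype_card]; exact FiniteField.pow_card _
  rw [← map_pow, ← sub_eq_zero, ← map_sub, IsLocalRing.residue_eq_zero_iff, mem_max_OO] at h
  exact h

theorem nm_qq_lt : nm p (qq p E : E) < 1 := by
  have := Fintype.ofFinite (IsLocalRing.ResidueField (OO p E))
  have h : ((qq p E : ℕ) : IsLocalRing.ResidueField (OO p E)) = 0 := by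
    rw [qq, Nat.card_eq_fintype_card]; exact Nat.cast_card_eq_zero _
  rw [← map_natCast (IsLocalRing.residue (OO p E)), IsLocalRing.residue_eq_zero_iff, mem_max_OO] at h
  simpa using h

theorem pow_congr {x d : E} (hx : nm p x ≤ 1) (hd : nm p d ≤ 1) (q : ℕ) :
    nm p ((x + d) ^ q - x ^ q) ≤ max (nm p (q : E) * nm p d) (nm p d ^ 2) := by
  obtain ⟨k, hk⟩ := Polynomial.powAddExpansion (⟨x, hx⟩ : OO p E) ⟨d, hd⟩ q
  have h1 : (x + d) ^ q = x ^ q + q * x ^ (q - 1) * d + k * d ^ 2 := by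
    have := congrArg Subtype.val hk
    simpa using this
  rw [h1, add_assoc, add_sub_cancel_left]
  refine (nm_add_le p _ _).trans (max_le_max ?_ ?_)
  · rw [map_mul, map_mul, map_pow]
    have h2 := pow_le_one₀ (n := q - 1) (nm_nonneg p x) hx
    have := mul_le_mul_of_nonneg_left h2 (mul_nonneg (nm_nonneg p (q : E)) (nm_nonneg p d))
    linarith
  · rw [map_mul, map_pow]
    have : nm p (k : E) ≤ 1 := k.2
    nlinarith [sq_nonneg (nm p d)]

/-- roots of unity of order dividing `q^j - 1` close to 1 are trivial -/
theorem teich_eq_one {x : E} {Q : ℕ} (hQ : nm p (Q : E) < 1) (hx : x ^ Q = x)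
    (h1 : nm p (x - 1) < 1) : x = 1 := by
  by_contra hne
  have h0 : 0 < nm p (x - 1) := nm_pos p (sub_ne_zero.2 hne)
  have := pow_congr p (x := 1) (d := x - 1) (by simp) h1.le Q
  rw [add_sub_cancel, hx, one_pow] at this
  rcases le_max_iff.1 this with h | h <;> nlinarith

variable {K : Type*} [Field K] [Algebra ℚ_[p] K] [FiniteDimensional ℚ_[p] K]
  [Algebra K E] [IsScalarTower ℚ_[p] K E]

theorem der_aux (g : E ≃ₐ[K] E) (h1 : ∀ x : E, nm p x ≤ 1 → nm p (g x - x) < 1)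
    (π : E) (hπ : nm p π = rr p E)
    (N : ℕ) (hN : nm p (g (π) - π) ≤ rr p E ^ N) (j : ℕ) (hj : j + 1 ≤ N) :
    ∀ x : E, nm p x ≤ 1 → nm p (g x - x) ≤ rr p E ^ (j + 1) := by
  have r0 := rr_pos p E
  have r1 := rr_lt p E
  have hπ0 : π ≠ 0 := by rintro rfl; rw [map_zero] at hπ; exact r0.ne hπ
  induction j with
  | zero => intro x hx; simpa using le_rr p (h1 x hx)
  | succ j ih =>
    intro x hx
    have ih := ih (by omega)
    set q := qq p E
    have hq : nm p (q : E) ≤ rr p E := le_rr p (nm_qq_lt p)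
    set z := (x - x ^ q) / π with hz
    have hz1 : nm p z ≤ 1 := by
      rw [hz, map_div₀, hπ]
      apply (div_le_one r0).2
      rw [nm_sub_comm]; exact le_rr p (qq_spec p hx)
    have hxz : x = x ^ q + π * z := by
      rw [hz, mul_div_cancel₀ _ hπ0]; ring
    have e : g x - x = ((g x) ^ q - x ^ q) + ((g (π) - π) * g z + π * (g z - z)) := by
      conv_lhs => rw [hxz]
      rw [map_add, map_pow, map_mul]; ring
    rw [e]
    apply nm_add_le'
    · have := pow_congr p (x := x) (d := g x - x) hx (h1 x hx).le q
      rw [add_sub_cancel] at this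
      refine this.trans (max_le ?_ ?_)
      · have := mul_le_mul hq (ih x hx) (nm_nonneg p _) r0.le
        rwa [← pow_succ'] at this
      · refine (pow_le_pow_left₀ (nm_nonneg p _) (ih x hx) 2).trans ?_
        rw [← pow_mul]
        exact pow_le_pow_of_le_one r0.le r1.le (by omega)
    · apply nm_add_le'
      · rw [map_mul, nm_aut]
        have : rr p E ^ N ≤ rr p E ^ (j + 1 + 1) := pow_le_pow_of_le_one r0.le r1.le hj
        have h3 := mul_le_mul (hN.trans this) hz1 (nm_nonneg p _) (by positivity)
        rwa [mul_one] at h3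
      · rw [map_mul, hπ]
        have := mul_le_mul_of_nonneg_left (ih z hz1) r0.le
        rwa [← pow_succ'] at this

end ring
end UBC

namespace UBC
section inert
variable (p : ℕ) [Fact p.Prime] (K L : Type*) [Field K] [Algebra ℚ_[p] K]
  [FiniteDimensional ℚ_[p] K] [Field L] [Algebra ℚ_[p] L]
  [FiniteDimensional ℚ_[p] L] [Algebra K L] [IsScalarTower ℚ_[p] K L]

/-- inertia group -/
noncomputable def Inert : Subgroup (L ≃ₐ[K] L) where
  carrier := {g | ∀ x : L, nm p x ≤ 1 → nm p (g x - x) < 1}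
  mul_mem' := fun {a b} ha hb x hx => by
    have h1 := ha (b x) (by rwa [nm_aut])
    have h2 := nm_add_lt' p h1 (hb x hx)
    simpa using h2
  one_mem' := fun x _ => by simp
  inv_mem' := fun {a} ha x hx => by
    have h1 := ha (a⁻¹ x) (by rwa [nm_aut])
    rw [nm_sub_comm, ← AlgEquiv.mul_apply, mul_inv_cancel] at h1
    exact h1

theorem mem_Inert {g : L ≃ₐ[K] L} : g ∈ Inert p K L ↔ ∀ x : L, nm p x ≤ 1 → nm p (g x - x) < 1 :=
  Iff.rfl

/-- algebra structure on valuation rings -/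
@[reducible] noncomputable def algOO : Algebra (OO p K) (OO p L) :=
  RingHom.toAlgebra (((algebraMap K L).comp (OO p K).subtype).codRestrict (OO p L).toSubring
    (fun x => by
      change nm p (algebraMap K L x) ≤ 1
      rw [nm_tower]; exact x.2))

/-- Galois action on the valuation ring -/
@[reducible] noncomputable def actOO : MulSemiringAction (L ≃ₐ[K] L) (OO p L) where
  smul g x := ⟨g x, by rw [mem_OO, nm_aut]; exact x.2⟩
  one_smul x := by ext; rfl
  mul_smul g h x := by ext; rfl
  smul_zero g := by ext; exact map_zero g
  smul_add g x y := by ext; exact map_add g _ _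
  smul_one g := by ext; exact map_one g
  smul_mul g x y := by ext; exact map_mul g _ _

attribute [local instance] algOO actOO

theorem coe_alg (x : OO p K) : ((algebraMap (OO p K) (OO p L) x : OO p L) : L) = algebraMap K L x := rfl

theorem towerOO : IsScalarTower (OO p K) (OO p L) L := IsScalarTower.of_algebraMap_eq (fun _ => rfl)

attribute [local instance] towerOO

theorem integralOO : Algebra.IsIntegral (OO p K) (OO p L) := by
  constructor
  intro x
  have hx : nm p (x : L) ≤ 1 := x.2
  set f := (minpoly ℚ_[p] (x : L)).map (algebraMap ℚ_[p] K) with hf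
  have hm : f.Monic := (minpoly.monic (IsIntegral.of_finite ℚ_[p] (x : L))).map _
  have hl : f ∈ Polynomial.lifts (OO p K).subtype := by
    rw [Polynomial.lifts_iff_coeff_lifts]
    intro n
    refine ⟨⟨f.coeff n, ?_⟩, rfl⟩
    rw [mem_OO, hf, Polynomial.coeff_map, nm_algebraMap_Qp]
    exact coeff_le hx n
  obtain ⟨g, hg, -, hgm⟩ := Polynomial.lifts_and_natDegree_eq_and_monic hl hm
  refine ⟨g, hgm, ?_⟩
  have hinj : Function.Injective (algebraMap (OO p L) L) := Subtype.val_injective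
  apply hinj
  rw [map_zero, Polynomial.hom_eval₂]
  have h1 : (algebraMap (OO p L) L).comp (algebraMap (OO p K) (OO p L)) =
      (algebraMap K L).comp (OO p K).subtype := rfl
  rw [h1, ← Polynomial.eval₂_map, hg, hf, Polynomial.eval₂_map, ← IsScalarTower.algebraMap_eq]
  exact minpoly.aeval ℚ_[p] (x : L)

attribute [local instance] integralOO

theorem smulDistribOO : SMulDistribClass (L ≃ₐ[K] L) (OO p L) L := by
  constructor
  intro g x y
  exact map_mul g _ _

attribute [local instance] smulDistribOO

theorem galoisOO [FiniteDimensional K L] [IsGalois K L] : IsGaloisGroup (L ≃ₐ[K] L) (OO p K) (OO p L) :=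
  IsGaloisGroup.of_isFractionRing (L ≃ₐ[K] L) (OO p K) (OO p L) K L

attribute [local instance] galoisOO

theorem finiteOO [FiniteDimensional K L] [IsGalois K L] : Module.Finite (OO p K) (OO p L) := by
  have : IsIntegralClosure (OO p L) (OO p K) L := IsIntegralClosure.of_isIntegrallyClosed _ _ _
  exact IsIntegralClosure.finite (OO p K) K L (OO p L)

attribute [local instance] finiteOO

theorem tfOO : Module.IsTorsionFree (OO p K) (OO p L) := by
  have : FaithfulSMul (OO p K) (OO p L) := by
    rw [faithfulSMul_iff_algebraMap_injective]
    intro x y h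
    ext
    have := congrArg Subtype.val h
    rw [coe_alg, coe_alg] at this
    exact (algebraMap K L).injective this
  infer_instance

attribute [local instance] tfOO

theorem liesOO : (IsLocalRing.maximalIdeal (OO p L)).LiesOver (IsLocalRing.maximalIdeal (OO p K)) := by
  constructor
  ext x
  rw [Ideal.mem_comap, mem_max_OO, mem_max_OO, coe_alg, nm_tower]

attribute [local instance] liesOO

theorem mem_max_pow {E : Type*} [Field E] [Algebra ℚ_[p] E] [FiniteDimensional ℚ_[p] E]
    {x : OO p E} {n : ℕ} :
    x ∈ IsLocalRing.maximalIdeal (OO p E) ^ n ↔ nm p (x : E) ≤ rr p E ^ n := by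
  have hu : unif p E ∈ OO p E := (rr_lt p E).le
  have h1 : IsLocalRing.maximalIdeal (OO p E) = Ideal.span {⟨unif p E, hu⟩} := by
    ext y
    rw [mem_max_OO, Ideal.mem_span_singleton]
    constructor
    · intro hy
      refine ⟨⟨(y : E) / unif p E, ?_⟩, ?_⟩
      · rw [mem_OO, map_div₀, nm_unif]; exact (div_le_one (rr_pos p E)).2 (le_rr p hy)
      · ext; simp [mul_div_cancel₀ _ (unif_ne p (E := E))]
    · rintro ⟨z, rfl⟩
      have hz : nm p (z : E) ≤ 1 := z.2
      simp only [MulMemClass.coe_mul, map_mul, nm_unif]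
      nlinarith [rr_lt p E, rr_pos p E]
  rw [h1, Ideal.span_singleton_pow, Ideal.mem_span_singleton]
  have hr := rr_pos p E
  constructor
  · rintro ⟨z, rfl⟩
    have hz : nm p (z : E) ≤ 1 := z.2
    simp only [MulMemClass.coe_mul, map_mul, SubmonoidClass.coe_pow, map_pow, nm_unif]
    exact mul_le_of_le_one_right (by positivity) hz
  · intro hx
    refine ⟨⟨(x : E) / unif p E ^ n, ?_⟩, ?_⟩
    · rw [mem_OO, map_div₀, map_pow, nm_unif]; exact (div_le_one (by positivity)).2 hx
    · ext; simp [mul_div_cancel₀ _ (pow_ne_zero n (unif_ne p (E := E)))]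

theorem exists_e : ∃ e : ℕ, 0 < e ∧ rr p K = rr p L ^ e := by
  have h0 : algebraMap K L (unif p K) ≠ 0 := by simpa using unif_ne p
  obtain ⟨k, hk⟩ := nm_zpow_exists p h0
  rw [nm_tower, nm_unif] at hk
  have : 0 < k := by
    have h1 := rr_lt p K
    rw [hk, ← zpow_zero (rr p L)] at h1
    by_contra hc
    push Not at hc
    exact absurd ((rr_zpow_le_iff p (E := L)).2 hc) (not_le.2 h1)
  lift k to ℕ using this.le
  exact ⟨k, by omega, by exact_mod_cast hk⟩

theorem rr_pow_inj {a b : ℕ} (h : rr p L ^ a = rr p L ^ b) : a = b := by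
  have := rr_zpow_inj p (E := L) (a := a) (b := b) (by exact_mod_cast h)
  exact_mod_cast this

theorem card_Inert [FiniteDimensional K L] [IsGalois K L] :
    rr p K = rr p L ^ Nat.card (Inert p K L) := by
  obtain ⟨e, he0, he⟩ := exists_e p K L
  have hr := rr_pos p L
  have hI : Inert p K L = Ideal.inertia (L ≃ₐ[K] L) (IsLocalRing.maximalIdeal (OO p L)) := by
    ext g
    rw [mem_Inert, AddSubgroup.mem_inertia]
    constructor
    · intro h x
      rw [Submodule.mem_toAddSubgroup, mem_max_OO]
      exact h x x.2
    · intro h x hx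
      have := h ⟨x, hx⟩
      rw [Submodule.mem_toAddSubgroup, mem_max_OO] at this
      exact this
  have : Finite (OO p K ⧸ IsLocalRing.maximalIdeal (OO p K)) :=
    inferInstanceAs (Finite (IsLocalRing.ResidueField (OO p K)))
  have : Finite (IsLocalRing.maximalIdeal (OO p K)).ResidueField :=
    Finite.of_surjective _ (Ideal.bijective_algebraMap_quotient_residueField (IsLocalRing.maximalIdeal (OO p K))).2
  have hmapne : (IsLocalRing.maximalIdeal (OO p K)).map (algebraMap (OO p K) (OO p L)) ≠ ⊥ := by
    apply Ideal.map_ne_bot_of_ne_bot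
    intro h
    have h1 := (mem_max_OO p (x := ⟨unif p K, (rr_lt p K).le⟩)).2 (rr_lt p K)
    rw [h, Ideal.mem_bot] at h1
    exact unif_ne p (congrArg Subtype.val h1)
  have hle : ∀ n : ℕ, (IsLocalRing.maximalIdeal (OO p K)).map (algebraMap (OO p K) (OO p L)) ≤
      IsLocalRing.maximalIdeal (OO p L) ^ n ↔ rr p K ≤ rr p L ^ n := by
    intro n
    rw [Ideal.map_le_iff_le_comap]
    constructor
    · intro h
      have := h (x := ⟨unif p K, (rr_lt p K).le⟩) ((mem_max_OO p).2 (rr_lt p K))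
      rw [Ideal.mem_comap, mem_max_pow, coe_alg, nm_tower] at this
      exact this
    · intro h x hx
      rw [Ideal.mem_comap, mem_max_pow, coe_alg, nm_tower]
      exact (le_rr p ((mem_max_OO p).1 hx)).trans h
  rw [hI, Ideal.card_inertia_eq_ramificationIdxIn (IsLocalRing.maximalIdeal (OO p K)),
    Ideal.ramificationIdxIn_eq_ramificationIdx _ (IsLocalRing.maximalIdeal (OO p L)) (L ≃ₐ[K] L),
    ← Ideal.ramificationIdx'_eq_ramificationIdx' (IsLocalRing.maximalIdeal (OO p K)) _ hmapne,
    Ideal.ramificationIdx'_spec (n := e), ← he]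
  · rw [hle, he]
  · rw [hle, he, not_le]; exact pow_lt_pow_right_of_lt_one₀ hr (rr_lt p L) (by omega)

theorem exists_frob [FiniteDimensional K L] [IsGalois K L] :
    ∃ φ : L ≃ₐ[K] L, ∀ x : L, nm p x ≤ 1 → nm p (φ x - x ^ qq p K) < 1 := by
  have : Finite (OO p L ⧸ IsLocalRing.maximalIdeal (OO p L)) :=
    inferInstanceAs (Finite (IsLocalRing.ResidueField (OO p L)))
  obtain ⟨φ, hφ⟩ := IsArithFrobAt.exists_of_isInvariant (OO p K) (L ≃ₐ[K] L) (IsLocalRing.maximalIdeal (OO p L))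
  refine ⟨φ, fun x hx => ?_⟩
  have := hφ ⟨x, hx⟩
  rw [← (liesOO p K L).over, mem_max_OO] at this
  exact this

theorem frob_gen [FiniteDimensional K L] (g : L ≃ₐ[K] L) :
    ∃ i : ℕ, ∀ x : L, nm p x ≤ 1 → nm p (g x - x ^ (qq p K ^ i)) < 1 := by
  have hloc : IsLocalHom (algebraMap (OO p K) (OO p L)) := by
    constructor
    intro x hx
    rw [isUnit_OO, coe_alg, nm_tower] at hx
    rwa [isUnit_OO]
  have := Fintype.ofFinite (IsLocalRing.ResidueField (OO p K))
  let g1 : OO p L ≃+* OO p L := MulSemiringAction.toRingEquiv (L ≃ₐ[K] L) (OO p L) g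
  let g2 : IsLocalRing.ResidueField (OO p L) ≃+* IsLocalRing.ResidueField (OO p L) :=
    IsLocalRing.ResidueField.mapEquiv g1
  let g3 : IsLocalRing.ResidueField (OO p L) ≃ₐ[IsLocalRing.ResidueField (OO p K)]
      IsLocalRing.ResidueField (OO p L) := AlgEquiv.ofRingEquiv (f := g2) (by
    intro x
    obtain ⟨y, rfl⟩ := IsLocalRing.residue_surjective x
    have h1 : algebraMap (IsLocalRing.ResidueField (OO p K)) (IsLocalRing.ResidueField (OO p L))
      (IsLocalRing.residue (OO p K) y) = IsLocalRing.residue (OO p L) (algebraMap (OO p K) (OO p L) y) := rfl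
    have h2 : ∀ z, g2 (IsLocalRing.residue (OO p L) z) = IsLocalRing.residue (OO p L) (g1 z) := fun _ => rfl
    rw [h1, h2]
    congr 1
    ext
    exact g.commutes y)
  obtain ⟨i, hi⟩ := (FiniteField.bijective_frobeniusAlgEquivOfAlgebraic_pow
    (IsLocalRing.ResidueField (OO p K)) (IsLocalRing.ResidueField (OO p L))).2 g3
  refine ⟨i, fun x hx => ?_⟩
  have h3 : g3 (IsLocalRing.residue (OO p L) ⟨x, hx⟩) = (IsLocalRing.residue (OO p L) ⟨x, hx⟩) ^ (qq p K ^ (i : ℕ)) := by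
    rw [← hi]
    simp only [FiniteField.coe_frobeniusAlgEquivOfAlgebraic_iterate, AlgEquiv.coe_pow, qq, Nat.card_eq_fintype_card]
  have h2 : ∀ z, g3 (IsLocalRing.residue (OO p L) z) = IsLocalRing.residue (OO p L) (g1 z) := fun _ => rfl
  rw [h2, ← map_pow, ← sub_eq_zero, ← map_sub, IsLocalRing.residue_eq_zero_iff, mem_max_OO] at h3
  exact h3

theorem nm_pow_sub_lt {E : Type*} [Field E] [Algebra ℚ_[p] E] [FiniteDimensional ℚ_[p] E]
    {x y : E} (hx : nm p x ≤ 1) (hy : nm p y ≤ 1) (h : nm p (x - y) < 1) (n : ℕ) :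
    nm p (x ^ n - y ^ n) < 1 := by
  have := pow_congr p hy h.le n
  rw [add_sub_cancel] at this
  refine this.trans_lt (max_lt ?_ ?_)
  · have := nm_natCast_le p (E := E) n
    nlinarith [nm_nonneg p (x - y), nm_nonneg p (n : E)]
  · nlinarith [nm_nonneg p (x - y)]

theorem frob_pow (φ : L ≃ₐ[K] L) (q : ℕ) (h : ∀ x : L, nm p x ≤ 1 → nm p (φ x - x ^ q) < 1)
    (i : ℕ) : ∀ x : L, nm p x ≤ 1 → nm p ((φ ^ i) x - x ^ (q ^ i)) < 1 := by
  induction i with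
  | zero => intro x hx; simp
  | succ i ih =>
    intro x hx
    have h1 := h ((φ ^ i) x) (by rwa [nm_aut])
    have h2 := nm_pow_sub_lt p (x := (φ ^ i) x) (y := x ^ (q ^ i)) (by rwa [nm_aut]) (by
      rw [map_pow]; exact pow_le_one₀ (nm_nonneg p x) hx) (ih x hx) q
    have := nm_add_lt' p h1 h2
    rw [sub_add_sub_cancel, ← pow_mul, ← pow_succ] at this
    rwa [pow_succ', AlgEquiv.mul_apply]

theorem frob_decomp [FiniteDimensional K L] (φ : L ≃ₐ[K] L)
    (h : ∀ x : L, nm p x ≤ 1 → nm p (φ x - x ^ qq p K) < 1) (g : L ≃ₐ[K] L) :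
    ∃ i : ℕ, ∃ ρ ∈ Inert p K L, g = φ ^ i * ρ := by
  obtain ⟨i, hi⟩ := frob_gen p K L g
  refine ⟨i, (φ ^ i)⁻¹ * g, ?_, by group⟩
  intro x hx
  have h1 := nm_sub_lt' p (hi x hx) (frob_pow p K L φ _ h i x hx)
  rw [sub_sub_sub_cancel_right, ← nm_aut p ((φ ^ i)⁻¹), map_sub, ← AlgEquiv.mul_apply, ← AlgEquiv.mul_apply] at h1
  simpa using h1

end inert
end UBC

namespace UBC
section bc
variable (p : ℕ) [Fact p.Prime] (K F L M : Type*) [Field K] [Algebra ℚ_[p] K]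
  [FiniteDimensional ℚ_[p] K] [Field L] [Algebra ℚ_[p] L]
  [FiniteDimensional ℚ_[p] L] [Algebra K L] [IsScalarTower ℚ_[p] K L]
  [Field F] [Algebra ℚ_[p] F] [FiniteDimensional ℚ_[p] F]
  [Field M] [Algebra ℚ_[p] M] [FiniteDimensional ℚ_[p] M]
  [Algebra K F] [IsScalarTower ℚ_[p] K F]
  [Algebra K M] [IsScalarTower ℚ_[p] K M]
  [Algebra F M] [IsScalarTower ℚ_[p] F M]
  [Algebra L M] [IsScalarTower ℚ_[p] L M]
  [IsScalarTower K F M] [IsScalarTower K L M]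
  [FiniteDimensional K F] [FiniteDimensional K L] [FiniteDimensional K M]
  [FiniteDimensional F M] [IsGalois K L] [IsGalois F M]

/-- restriction -/
noncomputable def res : (M ≃ₐ[F] M) →* (L ≃ₐ[K] L) where
  toFun g := (g.restrictScalars K).restrictNormal L
  map_one' := by
    ext x
    apply (algebraMap L M).injective
    rw [AlgEquiv.restrictNormal_commutes]; simp
  map_mul' g h := by
    ext x
    apply (algebraMap L M).injective
    rw [AlgEquiv.restrictNormal_commutes, AlgEquiv.mul_apply, AlgEquiv.restrictNormal_commutes,
      AlgEquiv.restrictNormal_commutes]; simp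

theorem res_apply (g : M ≃ₐ[F] M) (x : L) : algebraMap L M (res K F L M g x) = g (algebraMap L M x) :=
  AlgEquiv.restrictNormal_commutes _ L x

theorem res_inj (hcomp : IntermediateField.adjoin K
      (Set.range (algebraMap F M) ∪ Set.range (algebraMap L M)) = ⊤) :
    Function.Injective (res K F L M) := by
  rw [injective_iff_map_eq_one]
  intro g hg
  ext x
  have hx : x ∈ IntermediateField.adjoin K
      (Set.range (algebraMap F M) ∪ Set.range (algebraMap L M)) := by rw [hcomp]; trivial
  have hle : IntermediateField.adjoin K
      (Set.range (algebraMap F M) ∪ Set.range (algebraMap L M)) ≤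
      IntermediateField.fixedField (Subgroup.zpowers (g.restrictScalars K)) := by
    rw [IntermediateField.adjoin_le_iff]
    have key : ∀ y : M, g y = y → y ∈ IntermediateField.fixedField (Subgroup.zpowers (g.restrictScalars K)) := by
      intro y hy
      have h1 : Subgroup.zpowers (g.restrictScalars K) ≤ MulAction.stabilizer (M ≃ₐ[K] M) y := by
        rw [Subgroup.zpowers_le]; exact hy
      rintro ⟨h, hh⟩
      exact h1 hh
    rintro y (⟨z, rfl⟩ | ⟨z, rfl⟩)
    · exact key _ (g.commutes z)
    · apply key
      rw [← res_apply K F L M, hg]; rfl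
  exact hle hx ⟨_, Subgroup.mem_zpowers _⟩

theorem res_mem {g : M ≃ₐ[F] M} (hg : g ∈ Inert p F M) : res K F L M g ∈ Inert p K L := by
  intro x hx
  have := hg (algebraMap L M x) (by rwa [nm_tower])
  rwa [← res_apply K F L M, ← map_sub, nm_tower] at this

theorem bc_main (hK : rr p K = rr p F) (hcomp : IntermediateField.adjoin K
      (Set.range (algebraMap F M) ∪ Set.range (algebraMap L M)) = ⊤) :
    rr p L = rr p M ∧ Nat.card (Inert p F M) = Nat.card (Inert p K L) ∧
      ∀ σ ∈ Inert p K L, ∃ g ∈ Inert p F M, res K F L M g = σ := by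
  obtain ⟨e, he0, he⟩ := exists_e p L M
  have h1 := card_Inert p K L
  have h2 := card_Inert p F M
  rw [← hK, h1, he, ← pow_mul] at h2
  have h3 := rr_pow_inj p M h2
  let f : Inert p F M → Inert p K L := fun g => ⟨res K F L M g, res_mem p K F L M g.2⟩
  have hf : Function.Injective f := by
    intro a b hab
    exact Subtype.ext (res_inj K F L M hcomp (congrArg Subtype.val hab))
  have h4 := Nat.card_le_card_of_injective f hf
  have h5 : 0 < Nat.card (Inert p K L) := Nat.card_pos
  have h6 : e = 1 := by nlinarith
  subst h6
  rw [one_mul] at h3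
  refine ⟨by simpa using he, h3.symm, ?_⟩
  have hb : Function.Bijective f := (Nat.bijective_iff_injective_and_card f).2 ⟨hf, h3.symm⟩
  intro σ hσ
  obtain ⟨g, hg⟩ := hb.2 ⟨σ, hσ⟩
  exact ⟨g, g.2, congrArg Subtype.val hg⟩
end bc

section gen
variable (p : ℕ) [Fact p.Prime] (K L : Type*) [Field K] [Algebra ℚ_[p] K]
  [FiniteDimensional ℚ_[p] K] [Field L] [Algebra ℚ_[p] L]
  [FiniteDimensional ℚ_[p] L] [Algebra K L] [IsScalarTower ℚ_[p] K L] [FiniteDimensional K L]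
  {vK : K → ℤ} {vL : L → ℤ} {θ : L}

theorem v_nonneg_iff (h : IsNormalizedVal p K vK) (x : K) :
    nm p x ≤ 1 ↔ x = 0 ∨ 0 ≤ vK x := by
  by_cases hx : x = 0
  · simp [hx]
  · rw [nm_eq_v h hx, ← zpow_zero (rr p K), rr_zpow_le_iff]; simp [hx]

theorem v_eq (h : IsNormalizedVal p K vK) {x : K} (hx : x ≠ 0) {k : ℤ} : vK x = k ↔ nm p x = rr p K ^ k := by
  rw [nm_eq_v h hx]
  exact ⟨fun h => by rw [h], fun h => rr_zpow_inj p h⟩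

theorem v_ge (h : IsNormalizedVal p K vK) {x : K} (hx : x ≠ 0) {k : ℤ} : k ≤ vK x ↔ nm p x ≤ rr p K ^ k := by
  rw [nm_eq_v h hx, rr_zpow_le_iff]

/-- generator property -/
def Gen (θ : L) : Prop := nm p θ ≤ 1 ∧ ∀ x : L, nm p x ≤ 1 → ∃ q : Polynomial K,
      (∀ i, nm p (q.coeff i) ≤ 1) ∧ Polynomial.aeval θ q = x

theorem gen_of (hK : IsNormalizedVal p K vK) (hL : IsNormalizedVal p L vL)
    (hθLint : θ = 0 ∨ 0 ≤ vL θ)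
    (hθLgen : ∀ x : L, x ≠ 0 → 0 ≤ vL x → ∃ q : Polynomial K,
      (∀ i, q.coeff i = 0 ∨ 0 ≤ vK (q.coeff i)) ∧ Polynomial.aeval θ q = x) : Gen p K L θ := by
  refine ⟨(v_nonneg_iff p L hL θ).2 hθLint, fun x hx => ?_⟩
  by_cases h0 : x = 0
  · exact ⟨0, by simp, by simp [h0]⟩
  · obtain ⟨q, h1, h2⟩ := hθLgen x h0 (((v_nonneg_iff p L hL x).1 hx).resolve_left h0)
    exact ⟨q, fun i => (v_nonneg_iff p K hK _).2 (h1 i), h2⟩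

variable {K L}

theorem gen_le (h : Gen p K L θ) (g : L ≃ₐ[K] L) {x : L} (hx : nm p x ≤ 1) :
    nm p (g x - x) ≤ nm p (g θ - θ) := by
  obtain ⟨q, h1, rfl⟩ := h.2 x hx
  rw [← Polynomial.aeval_algHom_apply g, Polynomial.aeval_eq_sum_range, Polynomial.aeval_eq_sum_range,
    ← Finset.sum_sub_distrib]
  apply nm_sum_le p _ _ (nm_nonneg p _)
  intro i _
  rw [← smul_sub, Algebra.smul_def, map_mul, nm_tower]
  have hg : nm p (g θ - θ) ≤ 1 := nm_sub_le' p (by rw [nm_aut]; exact h.1) h.1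
  have h2 : nm p ((g θ) ^ i - θ ^ i) ≤ nm p (g θ - θ) := by
    have := pow_congr p h.1 hg i
    rw [add_sub_cancel] at this
    refine this.trans (max_le ?_ ?_)
    · exact mul_le_of_le_one_left (nm_nonneg p _) (nm_natCast_le p i)
    · nlinarith [nm_nonneg p (g θ - θ)]
  exact (mul_le_of_le_one_left (nm_nonneg p _) (h1 i)).trans h2

theorem gen_ne (h : Gen p K L θ) {g : L ≃ₐ[K] L} (hg : g ≠ 1) : g θ - θ ≠ 0 := by
  intro h0
  apply hg
  ext x
  have key : ∀ x : L, nm p x ≤ 1 → g x = x := by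
    intro x hx
    have := gen_le p h g hx
    rw [h0, map_zero] at this
    by_contra hc
    exact absurd (nm_pos p (sub_ne_zero.2 hc)) (not_lt.2 this)
  by_cases hx : nm p x ≤ 1
  · exact key x hx
  · have := key x⁻¹ (by rw [map_inv₀]; exact inv_le_one_of_one_le₀ (not_le.1 hx).le)
    rw [map_inv₀] at this
    exact inv_injective this

theorem gen_inert (h : Gen p K L θ) (g : L ≃ₐ[K] L) : g ∈ Inert p K L ↔ nm p (g θ - θ) < 1 :=
  ⟨fun hg => hg θ h.1, fun hg _ hx => (gen_le p h g hx).trans_lt hg⟩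

theorem gen_inert' (h : Gen p K L θ) (hL : IsNormalizedVal p L vL) (g : L ≃ₐ[K] L) :
    (g = 1 ∨ (g θ - θ ≠ 0 ∧ 1 ≤ vL (g θ - θ))) ↔ g ∈ Inert p K L := by
  by_cases hg : g = 1
  · simp [hg, one_mem]
  · have h0 := gen_ne p h hg
    rw [gen_inert p h, v_ge p L hL h0]
    simp only [hg, h0, false_or, ne_eq, not_false_eq_true, true_and, zpow_one]
    exact ⟨fun hh => hh.trans_lt (rr_lt p L), le_rr p⟩

theorem i_zero (h : Gen p K L θ) (hL : IsNormalizedVal p L vL) {g : L ≃ₐ[K] L} (hg : g ∉ Inert p K L) :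
    (vL (g θ - θ)).toNat = 0 := by
  have hg1 : g ≠ 1 := by rintro rfl; exact hg (one_mem _)
  have h0 := gen_ne p h hg1
  have := (gen_inert' p h hL g).not.2 hg
  simp only [hg1, h0, false_or, ne_eq, not_false_eq_true, true_and] at this
  omega

end gen

section mj
variable (p : ℕ) [Fact p.Prime] (K F L M : Type*) [Field K] [Algebra ℚ_[p] K]
  [FiniteDimensional ℚ_[p] K] [Field L] [Algebra ℚ_[p] L]
  [FiniteDimensional ℚ_[p] L] [Algebra K L] [IsScalarTower ℚ_[p] K L]
  [Field F] [Algebra ℚ_[p] F] [FiniteDimensional ℚ_[p] F]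
  [Field M] [Algebra ℚ_[p] M] [FiniteDimensional ℚ_[p] M]
  [Algebra K F] [IsScalarTower ℚ_[p] K F]
  [Algebra K M] [IsScalarTower ℚ_[p] K M]
  [Algebra F M] [IsScalarTower ℚ_[p] F M]
  [Algebra L M] [IsScalarTower ℚ_[p] L M]
  [IsScalarTower K F M] [IsScalarTower K L M]
  [FiniteDimensional K F] [FiniteDimensional K L] [FiniteDimensional K M]
  [FiniteDimensional F M] [IsGalois K L] [IsGalois F M]

theorem nm_res (hLM : rr p L = rr p M) {θL : L} {θM : M} (hL : Gen p K L θL) (hM : Gen p F M θM)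
    {g : M ≃ₐ[F] M} (hg : g ∈ Inert p F M) :
    nm p (g θM - θM) = nm p (res K F L M g θL - θL) := by
  apply le_antisymm
  · have hd : nm p (g (algebraMap L M (unif p L)) - algebraMap L M (unif p L)) ≤
        nm p (res K F L M g θL - θL) := by
      rw [← res_apply K F L M, ← map_sub, nm_tower]
      exact gen_le p hL _ (rr_lt p L).le
    by_cases h0 : res K F L M g θL - θL = 0
    · by_contra hc
      rw [h0, map_zero] at hc hd
      push Not at hc
      have hne : g θM - θM ≠ 0 := by
        intro h; rw [h, map_zero] at hc; exact lt_irrefl _ hc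
      obtain ⟨N, hN⟩ := exists_pow_lt_of_lt_one hc (rr_lt p M)
      have := der_aux p g hg (algebraMap L M (unif p L)) (by rw [nm_tower, nm_unif, hLM]) (N + 1)
        (hd.trans (pow_nonneg (rr_pos p M).le _)) N le_rfl θM hM.1
      have h3 : rr p M ^ (N + 1) ≤ rr p M ^ N := pow_le_pow_of_le_one (rr_pos p M).le (rr_lt p M).le (by omega)
      linarith
    · obtain ⟨k, hk⟩ := nm_zpow_exists p h0
      have h1 : nm p (res K F L M g θL - θL) < 1 := (gen_inert p hL _).1 (res_mem p K F L M hg)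
      have hk1 : 1 ≤ k := by
        have := le_rr p h1
        rw [hk] at this
        rw [← rr_zpow_le_iff p (E := L), zpow_one]
        exact this
      obtain ⟨j, rfl⟩ : ∃ j : ℕ, k = (j : ℤ) + 1 := ⟨(k - 1).toNat, by omega⟩
      have hk' : nm p (res K F L M g θL - θL) = rr p M ^ (j + 1) := by rw [hk, hLM]; norm_cast
      rw [hk'] at hd ⊢
      exact der_aux p g hg (algebraMap L M (unif p L)) (by rw [nm_tower, nm_unif, hLM]) (j + 1)
        hd j le_rfl θM hM.1
  · have := gen_le p hM g (x := algebraMap L M θL) (by rw [nm_tower]; exact hL.1)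
    rwa [← res_apply K F L M, ← map_sub, nm_tower] at this

theorem mJump_eq {vL : L → ℤ} {vM : M → ℤ} (hvL : IsNormalizedVal p L vL) (hvM : IsNormalizedVal p M vM)
    (hK : rr p K = rr p F) (hcomp : IntermediateField.adjoin K
      (Set.range (algebraMap F M) ∪ Set.range (algebraMap L M)) = ⊤)
    {θL : L} {θM : M} (hL : Gen p K L θL) (hM : Gen p F M θM) :
    mJump F vM θM = mJump K vL θL := by
  classical
  obtain ⟨hLM, -, hsurj⟩ := bc_main p K F L M hK hcomp
  have hinj := res_inj K F L M hcomp
  have hi : ∀ g ∈ Inert p F M, g ≠ 1 → vM (g θM - θM) = vL (res K F L M g θL - θL) := by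
    intro g hg hg1
    have hr1 : res K F L M g ≠ 1 := fun h => hg1 (hinj (by rw [h, map_one]))
    rw [v_eq p M hvM (gen_ne p hM hg1), nm_res p K F L M hLM hL hM hg, nm_eq_v hvL (gen_ne p hL hr1), hLM]
  have hc : (Finset.univ.filter (fun g : M ≃ₐ[F] M => g ≠ 1)).sup (fun g => (vM (g θM - θM)).toNat) =
      (Finset.univ.filter (fun g : L ≃ₐ[K] L => g ≠ 1)).sup (fun g => (vL (g θL - θL)).toNat) := by
    apply le_antisymm
    · apply Finset.sup_le
      intro g hg
      simp only [Finset.mem_filter, Finset.mem_univ, true_and] at hg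
      by_cases hgI : g ∈ Inert p F M
      · have hr1 : res K F L M g ≠ 1 := fun h => hg (hinj (by rw [h, map_one]))
        rw [hi g hgI hg]
        exact Finset.le_sup (f := fun g : L ≃ₐ[K] L => (vL (g θL - θL)).toNat) (by simpa using hr1)
      · rw [i_zero p hM hvM hgI]; exact Nat.zero_le _
    · apply Finset.sup_le
      intro σ hσ
      simp only [Finset.mem_filter, Finset.mem_univ, true_and] at hσ
      by_cases hgI : σ ∈ Inert p K L
      · obtain ⟨g, hg, rfl⟩ := hsurj σ hgI
        have hg1 : g ≠ 1 := by rintro rfl; exact hσ (map_one _)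
        rw [← hi g hg hg1]
        exact Finset.le_sup (f := fun g : M ≃ₐ[F] M => (vM (g θM - θM)).toNat) (by simpa using hg1)
      · rw [i_zero p hL hvL hgI]; exact Nat.zero_le _
  unfold mJump
  simp only [gen_inert' p hL hvL, gen_inert' p hM hvM]
  rw [hc]
  congr 2
  · congr 1
    refine Finset.sum_bij (fun g _ => res K F L M g) ?_ ?_ ?_ ?_
    · intro g hg
      simp only [Finset.mem_filter, Finset.mem_univ, true_and] at hg ⊢
      exact ⟨res_mem p K F L M hg.1, fun h => hg.2 (hinj (by rw [h, map_one]))⟩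
    · intro a _ b _ h; exact hinj h
    · intro σ hσ
      simp only [Finset.mem_filter, Finset.mem_univ, true_and] at hσ
      obtain ⟨g, hg, rfl⟩ := hsurj σ hσ.1
      refine ⟨g, ?_, rfl⟩
      simp only [Finset.mem_filter, Finset.mem_univ, true_and]
      exact ⟨hg, by rintro rfl; exact hσ.2 (map_one _)⟩
    · intro g hg
      simp only [Finset.mem_filter, Finset.mem_univ, true_and] at hg
      rw [hi g hg.1 hg.2]
  · norm_cast
    refine Finset.card_bij (fun g _ => res K F L M g) ?_ ?_ ?_
    · intro g hg
      simp only [Finset.mem_filter, Finset.mem_univ, true_and] at hg ⊢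
      exact res_mem p K F L M hg
    · intro a _ b _ h; exact hinj h
    · intro σ hσ
      simp only [Finset.mem_filter, Finset.mem_univ, true_and] at hσ
      obtain ⟨g, hg, rfl⟩ := hsurj σ hσ
      exact ⟨g, by simpa using hg, rfl⟩
end mj
end UBC

namespace UBC
section herb
variable {W : Type*} [CommGroup W]

theorem hb_aux {W' : Type*} [CommGroup W'] (h : W →* W') (A B : Subgroup W) (hBA : B ≤ A) :
    B.relIndex A = (B.map h).relIndex (A.map h) * (B ⊓ h.ker).relIndex (A ⊓ h.ker) := by
  rw [Subgroup.relIndex_map_map]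
  have h1 : A ⊔ h.ker = A ⊔ (B ⊔ h.ker) := by rw [← sup_assoc, sup_eq_left.2 hBA]
  rw [h1, Subgroup.relIndex_sup_right, ← Subgroup.inf_relIndex_right (B ⊔ h.ker)]
  have h2 : (B ⊓ h.ker).relIndex (A ⊓ h.ker) = B.relIndex ((B ⊔ h.ker) ⊓ A) := by
    have h3 : (B ⊔ h.ker) ⊓ A = (A ⊓ h.ker) ⊔ B := by
      rw [inf_comm, sup_comm B, inf_sup_assoc_of_le]
      exact hBA
    rw [h3, Subgroup.relIndex_sup_right, ← Subgroup.inf_relIndex_right B]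
    congr 1
    rw [← inf_assoc, inf_eq_left.2 hBA]
  rw [h2, mul_comm]
  exact (Subgroup.relIndex_mul_relIndex B ((B ⊔ h.ker) ⊓ A) A (le_inf le_sup_left hBA) inf_le_right).symm

theorem herbrand (f g : W →* W) (A B : Subgroup W) (hBA : B ≤ A) (hfin : B.relIndex A ≠ 0)
    (hgA : A.map g ≤ A) (hgB : B.map g ≤ B) (hfB : B.map f ≤ B) (hfA : A.map f ≤ A)
    (hfg : ∀ x, f (g x) = 1) (hgf : ∀ x, g (f x) = 1)
    (h0 : B ⊓ f.ker ≤ B.map g) (e : ℕ) (he : (A.map f).relIndex (A ⊓ g.ker) ≤ e)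
    (he0 : (A.map f).relIndex (A ⊓ g.ker) ≠ 0) :
    (A.map g).relIndex (A ⊓ f.ker) ≠ 0 ∧ (A.map g).relIndex (A ⊓ f.ker) ≤ e := by
  have e1 := hb_aux f A B hBA
  have e2 := hb_aux g A B hBA
  have kf : ∀ C : Subgroup W, C.map g ≤ f.ker := by
    rintro C _ ⟨x, -, rfl⟩; exact hfg x
  have kg : ∀ C : Subgroup W, C.map f ≤ g.ker := by
    rintro C _ ⟨x, -, rfl⟩; exact hgf x
  have h1 : B ⊓ f.ker = B.map g := le_antisymm h0 (le_inf hgB (kf B))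
  have e3 := Subgroup.relIndex_mul_relIndex (B.map g) (A.map g) (A ⊓ f.ker) (Subgroup.map_mono hBA)
    (le_inf hgA (kf A))
  have e4 := Subgroup.relIndex_mul_relIndex (B.map f) (A.map f) (A ⊓ g.ker) (Subgroup.map_mono hBA)
    (le_inf hfA (kg A))
  have e5 := Subgroup.relIndex_mul_relIndex (B.map f) (B ⊓ g.ker) (A ⊓ g.ker) (le_inf hfB (kg B))
    (inf_le_inf_right _ hBA)
  rw [h1] at e1
  rw [← e3] at e1
  set a := B.relIndex A
  set f1 := (B.map f).relIndex (A.map f)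
  set g1 := (B.map g).relIndex (A.map g)
  set g0 := (B ⊓ g.ker).relIndex (A ⊓ g.ker)
  set x := (A.map g).relIndex (A ⊓ f.ker)
  set y := (A.map f).relIndex (A ⊓ g.ker)
  set z := (B.map f).relIndex (B ⊓ g.ker)
  have hx : x ≠ 0 := by rintro hx; rw [hx] at e1; simp at e1; exact hfin e1
  have hf1 : f1 ≠ 0 := by rintro hx; rw [hx] at e1; simp at e1; exact hfin e1
  have hg1 : g1 ≠ 0 := by rintro hx; rw [hx] at e1; simp at e1; exact hfin e1
  have hz : z ≠ 0 := by
    rintro hx; rw [hx, zero_mul] at e5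
    exact mul_ne_zero hf1 he0 (e4.trans e5.symm)
  refine ⟨hx, ?_⟩
  have h6 : g1 * (f1 * x) = g1 * g0 := by rw [← e2, e1]; ring
  have h7 := Nat.eq_of_mul_eq_mul_left (Nat.pos_of_ne_zero hg1) h6
  have h8 : z * g0 = f1 * y := e5.trans e4.symm
  have h9 : f1 * x ≤ f1 * y := by
    rw [h7, ← h8]; exact Nat.le_mul_of_pos_left _ (Nat.pos_of_ne_zero hz)
  exact (Nat.le_of_mul_le_mul_left h9 (Nat.pos_of_ne_zero hf1)).trans he
end herb

section lat
variable (p : ℕ) [Fact p.Prime] (F M : Type*) [Field F] [Algebra ℚ_[p] F]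
  [FiniteDimensional ℚ_[p] F] [Field M] [Algebra ℚ_[p] M]
  [FiniteDimensional ℚ_[p] M] [Algebra F M] [IsScalarTower ℚ_[p] F M] [FiniteDimensional F M]
  [IsGalois F M]

/-- a good lattice -/
structure Lat (Λ : AddSubgroup M) : Prop where
  le : ∀ x ∈ Λ, nm p x ≤ 1
  aut : ∀ (g : M ≃ₐ[F] M), ∀ x ∈ Λ, g x ∈ Λ
  mul : ∀ x ∈ Λ, ∀ y ∈ Λ, x * y ∈ Λ
  smul : ∀ c : F, nm p c ≤ 1 → ∀ x ∈ Λ, algebraMap F M c * x ∈ Λ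
  op : ∃ ε : ℝ, 0 < ε ∧ ∀ x : M, nm p x ≤ ε → x ∈ Λ
  tr : ∀ y : F, algebraMap F M y ∈ Λ → ∃ x ∈ Λ, Algebra.trace F M x = y

variable {F M} {Λ : AddSubgroup M} (hΛ : Lat p F M Λ)

/-- `x ∈ 1 + t Λ` -/
def InV (Λ : AddSubgroup M) (t : F) (x : M) : Prop := ∃ a ∈ Λ, x = 1 + algebraMap F M t * a

include hΛ

theorem prod_lat (t : F) (ht : nm p t ≤ 1) {ι : Type*} (s : Finset ι) (a : ι → M) (ha : ∀ i ∈ s, a i ∈ Λ) :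
    ∃ b ∈ Λ, ∏ i ∈ s, (1 + algebraMap F M t * a i) =
      1 + algebraMap F M t * (∑ i ∈ s, a i) + algebraMap F M (t ^ 2) * b := by
  classical
  induction s using Finset.induction_on with
  | empty => exact ⟨0, Λ.zero_mem, by simp⟩
  | insert i s hi ih =>
    obtain ⟨b, hb, hb'⟩ := ih (fun j hj => ha j (Finset.mem_insert_of_mem hj))
    have hs : ∑ j ∈ s, a j ∈ Λ := Λ.sum_mem (fun j hj => ha j (Finset.mem_insert_of_mem hj))
    have hai := ha i (Finset.mem_insert_self i s)
    refine ⟨b + a i * (∑ j ∈ s, a j) + algebraMap F M t * (a i * b), ?_, ?_⟩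
    · exact Λ.add_mem (Λ.add_mem hb (hΛ.mul _ hai _ hs)) (hΛ.smul t ht _ (hΛ.mul _ hai _ hb))
    · rw [Finset.prod_insert hi, Finset.sum_insert hi, hb', map_pow]; ring

theorem V_mul (t : F) (ht : nm p t ≤ 1) {x y : M} (hx : InV Λ t x) (hy : InV Λ t y) : InV Λ t (x * y) := by
  obtain ⟨a, ha, rfl⟩ := hx
  obtain ⟨b, hb, rfl⟩ := hy
  exact ⟨a + b + algebraMap F M t * (a * b), Λ.add_mem (Λ.add_mem ha hb) (hΛ.smul t ht _ (hΛ.mul _ ha _ hb)), by ring⟩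

theorem V_aut (t : F) {x : M} (hx : InV Λ t x) (g : M ≃ₐ[F] M) : InV Λ t (g x) := by
  obtain ⟨a, ha, rfl⟩ := hx
  exact ⟨g a, hΛ.aut g a ha, by simp⟩

theorem V_nm (t : F) (ht : nm p t < 1) {x : M} (hx : InV Λ t x) : nm p x = 1 := by
  obtain ⟨a, ha, rfl⟩ := hx
  have := nm_eq_of_sub_lt p (x := 1 + algebraMap F M t * a) (y := 1) (by
    rw [add_sub_cancel_left, map_mul, nm_tower, map_one]
    have := hΛ.le a ha
    nlinarith [nm_nonneg p t, nm_nonneg p a])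
  rw [this, map_one]

theorem V_inv_F (t : F) (ht : nm p t < 1) {x : F} (hx : InV Λ t (algebraMap F M x)) :
    InV Λ t (algebraMap F M x)⁻¹ := by
  have h1 := V_nm p hΛ t ht hx
  have h0 : algebraMap F M x ≠ 0 := by intro h; rw [h, map_zero] at h1; exact zero_ne_one h1
  obtain ⟨a, ha, hxa⟩ := hx
  refine ⟨-(algebraMap F M x⁻¹ * a), Λ.neg_mem (hΛ.smul _ ?_ _ ha), ?_⟩
  · rw [map_inv₀, ← nm_tower p (E' := M), h1, inv_one]
  · rw [map_inv₀]
    field_simp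
    linear_combination -hxa

theorem V_prod (t : F) (ht : nm p t ≤ 1) {ι : Type*} (s : Finset ι) (f : ι → M) (hf : ∀ i ∈ s, InV Λ t (f i)) :
    InV Λ t (∏ i ∈ s, f i) := by
  classical
  induction s using Finset.induction_on with
  | empty => exact ⟨0, Λ.zero_mem, by simp⟩
  | insert i s hi ih =>
    rw [Finset.prod_insert hi]
    exact V_mul p hΛ t ht (hf i (by simp)) (ih (fun j hj => hf j (by simp [hj])))

theorem V_norm (t : F) (ht : nm p t ≤ 1) {x : M} (hx : InV Λ t x) :
    InV Λ t (algebraMap F M (Algebra.norm F x)) := by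
  rw [Algebra.norm_eq_prod_automorphisms]
  exact V_prod p hΛ t ht _ _ (fun g _ => V_aut p hΛ t hx g)

theorem V_inv (t : F) (ht : nm p t < 1) {x : M} (hx : InV Λ t x) : InV Λ t x⁻¹ := by
  classical
  have h1 := V_nm p hΛ t ht hx
  have h0 : x ≠ 0 := by rintro rfl; rw [map_zero] at h1; exact zero_ne_one h1
  have h2 := V_inv_F p hΛ t ht (V_norm p hΛ t ht.le hx)
  have h3 := V_mul p hΛ t ht.le h2 (V_prod p hΛ t ht.le (Finset.univ.erase (1 : M ≃ₐ[F] M)) (fun g => g x)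
    (fun g _ => V_aut p hΛ t hx g))
  convert h3 using 1
  have h4 := Algebra.norm_eq_prod_automorphisms F x
  rw [← Finset.mul_prod_erase _ _ (Finset.mem_univ (1 : M ≃ₐ[F] M))] at h4
  have h5 : (algebraMap F M (Algebra.norm F x)) ≠ 0 := by
    rw [map_ne_zero]; exact (Algebra.norm_ne_zero_iff.2 h0)
  rw [AlgEquiv.one_apply] at h4
  field_simp
  linear_combination h4

theorem V_step (t : F) (ht : nm p t < 1) (j : ℕ) (hj : 1 ≤ j) {u : F}
    (hu : InV Λ (t ^ j) (algebraMap F M u)) (ht0 : t ≠ 0) :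
    ∃ w, InV Λ (t ^ j) w ∧ InV Λ (t ^ (j + 1)) (algebraMap F M (u / Algebra.norm F w)) := by
  obtain ⟨y, hy, hu'⟩ := hu
  have htj0 : t ^ j ≠ 0 := pow_ne_zero _ ht0
  have htj : nm p (t ^ j) ≤ 1 := by rw [map_pow]; exact pow_le_one₀ (nm_nonneg p t) ht.le
  have htj' : nm p (t ^ j) < 1 := by rw [map_pow]; exact pow_lt_one₀ (nm_nonneg p t) ht (by omega)
  have hyF : y = algebraMap F M ((u - 1) / t ^ j) := by
    have : algebraMap F M (t ^ j) ≠ 0 := by simpa using htj0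
    rw [map_div₀, map_sub, map_one, hu']; field_simp; ring
  rw [hyF] at hy
  obtain ⟨l, hl, htr⟩ := hΛ.tr _ hy
  have hw : InV Λ (t ^ j) (1 + algebraMap F M (t ^ j) * l) := ⟨l, hl, rfl⟩
  refine ⟨_, hw, ?_⟩
  set w := 1 + algebraMap F M (t ^ j) * l with hwdef
  have hn1 := V_nm p hΛ _ htj' (V_norm p hΛ _ htj hw)
  obtain ⟨b, hb, hb'⟩ := prod_lat p hΛ (t ^ j) htj Finset.univ (fun g : M ≃ₐ[F] M => g l) (fun g _ => hΛ.aut g l hl)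
  have hN : algebraMap F M (Algebra.norm F w) = algebraMap F M u + algebraMap F M ((t ^ j) ^ 2) * b := by
    rw [Algebra.norm_eq_prod_automorphisms]
    have h1 : ∏ g : M ≃ₐ[F] M, g w = ∏ g : M ≃ₐ[F] M, (1 + algebraMap F M (t ^ j) * g l) := by
      refine Finset.prod_congr rfl (fun g _ => ?_)
      rw [hwdef, map_add, map_one, map_mul, AlgEquiv.commutes]
    rw [h1, hb', ← trace_eq_sum_automorphisms, htr, ← hyF, ← hu']
  have hN0 : algebraMap F M (Algebra.norm F w) ≠ 0 := by
    intro h; rw [h, map_zero] at hn1; exact zero_ne_one hn1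
  refine ⟨-(algebraMap F M ((Algebra.norm F w)⁻¹) * (algebraMap F M (t ^ (j - 1)) * b)), ?_, ?_⟩
  · apply Λ.neg_mem
    apply hΛ.smul
    · rw [map_inv₀, ← nm_tower p (E' := M), hn1, inv_one]
    · apply hΛ.smul _ _ _ hb
      rw [map_pow]; exact pow_le_one₀ (nm_nonneg p t) ht.le
  · have e1 : (t ^ j) ^ 2 = t ^ (j + 1) * t ^ (j - 1) := by
      rw [← pow_mul, ← pow_add]; congr 1; omega
    rw [map_div₀, map_inv₀]
    rw [e1, map_mul] at hN
    field_simp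
    linear_combination -hN

theorem V_iter (t : F) (ht : nm p t < 1) (ht0 : t ≠ 0) {u : F}
    (hu : InV Λ t (algebraMap F M u)) (j : ℕ) :
    ∃ w, InV Λ t w ∧ InV Λ (t ^ (j + 1)) (algebraMap F M (u / Algebra.norm F w)) := by
  induction j with
  | zero => exact ⟨1, ⟨0, Λ.zero_mem, by simp⟩, by simpa using hu⟩
  | succ j ih =>
    obtain ⟨w, hw, hw'⟩ := ih
    obtain ⟨z, hz, hz'⟩ := V_step p hΛ t ht (j + 1) (by omega) hw' ht0
    refine ⟨w * z, V_mul p hΛ t ht.le hw ?_, ?_⟩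
    · obtain ⟨a, ha, rfl⟩ := hz
      refine ⟨algebraMap F M (t ^ j) * a, hΛ.smul _ ?_ _ ha, ?_⟩
      · rw [map_pow]; exact pow_le_one₀ (nm_nonneg p t) ht.le
      · rw [pow_succ, map_mul]; ring
    · rw [map_mul, ← div_div]; exact hz'

theorem V_surj (t : F) (ht : nm p t < 1) (ht0 : t ≠ 0) {u : F}
    (hu : InV Λ t (algebraMap F M u)) : ∃ w, InV Λ t w ∧ Algebra.norm F w = u := by
  obtain ⟨ε, hε, hop⟩ := hΛ.op
  have htp := nm_pos p ht0
  obtain ⟨δ, hδ, hpow⟩ := pow_open p (E := F) (Module.finrank F M) Module.finrank_pos.ne' (nm p t * ε) (by positivity)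
  obtain ⟨N, hN⟩ := exists_pow_lt_of_lt_one hδ ht
  obtain ⟨w, hw, a, ha, hwa⟩ := V_iter p hΛ t ht ht0 hu N
  have h1 : nm p (u / Algebra.norm F w - 1) ≤ δ := by
    rw [← nm_tower p (E' := M), map_sub, hwa, map_one, add_sub_cancel_left, map_mul, nm_tower, map_pow]
    have := hΛ.le a ha
    have h2 : nm p t ^ (N + 1) ≤ nm p t ^ N := pow_le_pow_of_le_one htp.le ht.le (by omega)
    have h3 : 0 < nm p t ^ (N + 1) := by positivity
    nlinarith [nm_nonneg p a]
  obtain ⟨s, hs, hs1⟩ := hpow _ h1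
  have hsV : InV Λ t (algebraMap F M s) := by
    refine ⟨(algebraMap F M ((s - 1) / t)), hop _ ?_, ?_⟩
    · rw [nm_tower, map_div₀, div_le_iff₀ htp, mul_comm]; exact hs1
    · rw [← map_mul, mul_div_cancel₀ _ ht0]; simp
  refine ⟨w * algebraMap F M s, V_mul p hΛ t ht.le hw hsV, ?_⟩
  have hw0 : w ≠ 0 := by
    rintro rfl
    have := V_nm p hΛ t ht hw
    rw [map_zero] at this; exact zero_ne_one this
  rw [map_mul, Algebra.norm_algebraMap, hs, mul_div_cancel₀]
  exact Algebra.norm_ne_zero_iff.2 hw0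

end lat
end UBC

namespace UBC
section lat2
universe u
variable (p : ℕ) [Fact p.Prime] (F M : Type u) [Field F] [Algebra ℚ_[p] F]
  [FiniteDimensional ℚ_[p] F] [Field M] [Algebra ℚ_[p] M]
  [FiniteDimensional ℚ_[p] M] [Algebra F M] [IsScalarTower ℚ_[p] F M] [FiniteDimensional F M]
  [IsGalois F M]

theorem nm_trace_le {c : ℝ} (hc : 0 ≤ c) {x : M} (hx : nm p x ≤ c) : nm p (Algebra.trace F M x) ≤ c := by
  rw [← nm_tower p (E' := M), trace_eq_sum_automorphisms]
  exact nm_sum_le p _ _ hc (fun g _ => by rwa [nm_aut])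

theorem repr_aut (h : M ≃ₐ[F] M) (x : M) (g : M ≃ₐ[F] M) :
    (IsGalois.normalBasis F M).repr (h x) g = (IsGalois.normalBasis F M).repr x (h⁻¹ * g) := by
  set b := IsGalois.normalBasis F M with hb
  have hbg : ∀ g, b g = g (b 1) := fun g => IsGalois.normalBasis_apply g
  have h1 : h x = ∑ k, b.repr x (h⁻¹ * k) • b k := by
    conv_lhs => rw [← b.sum_repr x]
    rw [map_sum, ← Equiv.sum_comp (Equiv.mulLeft h⁻¹)]
    refine Finset.sum_congr rfl (fun k _ => ?_)
    rw [map_smul, Equiv.coe_mulLeft, hbg (h⁻¹ * k), hbg k, ← AlgEquiv.mul_apply]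
    congr 2
    group
  rw [h1, b.repr_sum_self]

theorem exists_lat : ∃ Λ : AddSubgroup M, Lat p F M Λ := by
  classical
  set b := IsGalois.normalBasis F M with hb
  have hbg : ∀ g, b g = g (b 1) := fun g => IsGalois.normalBasis_apply g
  set C : ℝ := nm p (b 1) + ∑ g, ∑ h, ∑ k, nm p (b.repr (b g * b h) k) with hC
  have hm : ∀ g h k, nm p (b.repr (b g * b h) k) ≤ C := by
    intro g h k
    have h1 := Finset.single_le_sum (f := fun k => nm p (b.repr (b g * b h) k)) (fun i _ => nm_nonneg p _) (Finset.mem_univ k)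
    have h2 := Finset.single_le_sum (f := fun h => ∑ k, nm p (b.repr (b g * b h) k))
      (fun i _ => Finset.sum_nonneg (fun j _ => nm_nonneg p _)) (Finset.mem_univ h)
    have h3 := Finset.single_le_sum (f := fun g => ∑ h, ∑ k, nm p (b.repr (b g * b h) k))
      (fun i _ => Finset.sum_nonneg (fun j _ => Finset.sum_nonneg (fun j _ => nm_nonneg p _))) (Finset.mem_univ g)
    have h4 := nm_nonneg p (b 1)
    linarith
  have hα : nm p (b 1) ≤ C := by
    have : 0 ≤ ∑ g, ∑ h, ∑ k, nm p (b.repr (b g * b h) k) :=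
      Finset.sum_nonneg (fun j _ => Finset.sum_nonneg (fun j _ => Finset.sum_nonneg (fun j _ => nm_nonneg p _)))
    linarith
  have hC0 : 0 < C := lt_of_lt_of_le (nm_pos p (b.ne_zero 1)) hα
  obtain ⟨N, hN⟩ := exists_pow_lt_of_lt_one (inv_pos.2 hC0) (rr_lt p F)
  set s : ℝ := rr p F ^ N with hs
  have hs0 : 0 < s := pow_pos (rr_pos p F) N
  have hsC : s * C ≤ 1 := by
    have := mul_le_mul_of_nonneg_right hN.le hC0.le
    rwa [inv_mul_cancel₀ hC0.ne'] at this
  let Λ : AddSubgroup M :=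
    { carrier := {x | ∀ g, nm p (b.repr x g) ≤ s}
      add_mem' := fun {x y} hx hy g => by
        rw [map_add, Finsupp.add_apply]; exact nm_add_le' p (hx g) (hy g)
      zero_mem' := fun g => by simpa using hs0.le
      neg_mem' := fun {x} hx g => by rw [map_neg, Finsupp.neg_apply, nm_neg]; exact hx g }
  have hmem : ∀ x, x ∈ Λ ↔ ∀ g, nm p (b.repr x g) ≤ s := fun x => Iff.rfl
  refine ⟨Λ, ?_, ?_, ?_, ?_, ?_, ?_⟩
  · intro x hx
    rw [← b.sum_repr x]
    apply nm_sum_le p _ _ zero_le_one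
    intro g _
    rw [Algebra.smul_def, map_mul, nm_tower, hbg, nm_aut]
    exact (mul_le_mul (hx g) hα (nm_nonneg p _) hs0.le).trans hsC
  · intro h x hx g
    rw [hb, repr_aut]; exact hx _
  · intro x hx y hy k
    have h1 : b.repr (x * y) k = ∑ g, ∑ h, (b.repr x g * b.repr y h) * b.repr (b g * b h) k := by
      conv_lhs => rw [← b.sum_repr x, ← b.sum_repr y]
      rw [Finset.sum_mul_sum, map_sum, Finsupp.finset_sum_apply]
      refine Finset.sum_congr rfl (fun g _ => ?_)
      rw [map_sum, Finsupp.finset_sum_apply]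
      refine Finset.sum_congr rfl (fun h _ => ?_)
      rw [smul_mul_smul_comm, map_smul, Finsupp.smul_apply, smul_eq_mul]
    rw [h1]
    apply nm_sum_le p _ _ hs0.le; intro g _
    apply nm_sum_le p _ _ hs0.le; intro h _
    rw [map_mul, map_mul]
    calc _ ≤ (s * s) * C := mul_le_mul (mul_le_mul (hx g) (hy h) (nm_nonneg p _) hs0.le) (hm g h k)
            (nm_nonneg p _) (by positivity)
      _ = s * (s * C) := by ring
      _ ≤ s * 1 := mul_le_mul_of_nonneg_left hsC hs0.le
      _ = s := mul_one s
  · intro c hc x hx g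
    rw [← Algebra.smul_def, map_smul, Finsupp.smul_apply, smul_eq_mul, map_mul]
    exact (mul_le_of_le_one_left (nm_nonneg p _) hc).trans (hx g)
  · set D : ℝ := 1 + ∑ g, nm p (b.traceDual g) with hD
    have hDg : ∀ g, nm p (b.traceDual g) ≤ D := by
      intro g
      have h1 := Finset.single_le_sum (f := fun k => nm p (b.traceDual k)) (fun i _ => nm_nonneg p _) (Finset.mem_univ g)
      linarith
    have hD0 : 0 < D := by
      have := Finset.sum_nonneg (s := Finset.univ) (f := fun k => nm p (b.traceDual k)) (fun i _ => nm_nonneg p _)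
      linarith
    refine ⟨s / D, by positivity, fun x hx g => ?_⟩
    have h2 : b.repr x g = Algebra.trace F M (x * b.traceDual g) := by
      have := b.traceDual.traceDual_repr_apply x g
      rwa [Module.Basis.traceDual_traceDual, Algebra.traceForm_apply] at this
    rw [h2]
    apply nm_trace_le p F M hs0.le
    rw [map_mul]
    calc _ ≤ s / D * D := mul_le_mul hx (hDg g) (nm_nonneg p _) (by positivity)
      _ = s := by field_simp
  · intro y hy
    set c := b.repr (algebraMap F M y) 1 with hc
    have h1 : ∀ g, b.repr (algebraMap F M y) g = c := by
      intro g
      have := repr_aut F M g (algebraMap F M y) g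
      rw [AlgEquiv.commutes, inv_mul_cancel] at this
      exact this
    refine ⟨c • b 1, fun g => ?_, ?_⟩
    · rw [map_smul, Finsupp.smul_apply, b.repr_self, smul_eq_mul, Finsupp.single_apply]
      split_ifs
      · rw [mul_one]; exact hy 1
      · simpa using hs0.le
    · apply (algebraMap F M).injective
      rw [trace_eq_sum_automorphisms]
      conv_rhs => rw [← b.sum_repr (algebraMap F M y)]
      refine Finset.sum_congr rfl (fun g _ => ?_)
      rw [h1, hbg g, map_smul]

/-- units -/
noncomputable def UU (E : Type*) [Field E] [Algebra ℚ_[p] E] [FiniteDimensional ℚ_[p] E] : Subgroup Eˣ where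
  carrier := {x | nm p (x : E) = 1}
  mul_mem' := fun {x y} hx hy => by
    have hx : nm p (x : E) = 1 := hx
    have hy : nm p (y : E) = 1 := hy
    change nm p ((x * y : Eˣ) : E) = 1
    rw [Units.val_mul, map_mul, hx, hy, one_mul]
  one_mem' := by change nm p ((1 : Eˣ) : E) = 1; rw [Units.val_one, map_one]
  inv_mem' := fun {x} hx => by
    have hx : nm p (x : E) = 1 := hx
    change nm p ((x⁻¹ : Eˣ) : E) = 1
    rw [Units.val_inv_eq_inv_val, map_inv₀, hx, inv_one]

theorem mem_UU {E : Type*} [Field E] [Algebra ℚ_[p] E] [FiniteDimensional ℚ_[p] E] {x : Eˣ} :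
    x ∈ UU p E ↔ nm p (x : E) = 1 := Iff.rfl

/-- norm on units -/
noncomputable def NN (F M : Type*) [Field F] [Field M] [Algebra F M] : Mˣ →* Fˣ := Units.map (Algebra.norm F)

theorem NN_apply (F M : Type*) [Field F] [Field M] [Algebra F M] (x : Mˣ) :
    ((NN F M x : Fˣ) : F) = Algebra.norm F (x : M) := rfl

theorem nm_norm (x : M) : nm p (Algebra.norm F x) = nm p x ^ (Module.finrank F M) := by
  rw [← nm_tower p (E' := M), Algebra.norm_eq_prod_automorphisms, map_prod]
  simp_rw [nm_aut]
  rw [Finset.prod_const, ← IsGalois.card_aut_eq_finrank, Nat.card_eq_fintype_card]; rfl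

theorem NN_mem {x : Mˣ} (hx : x ∈ UU p M) : NN F M x ∈ UU p F := by
  rw [mem_UU] at *
  rw [NN_apply, nm_norm, hx, one_pow]

theorem exists_V : ∃ B : Subgroup Mˣ, B ≤ UU p M ∧ B.relIndex (UU p M) ≠ 0 ∧
    (∀ (g : M ≃ₐ[F] M), ∀ x ∈ B, Units.map (g : M →* M) x ∈ B) ∧
    ∀ x : Mˣ, ∀ u : F, algebraMap F M u = x → x ∈ B → ∃ w ∈ B, Algebra.norm F (w : M) = u := by
  obtain ⟨Λ, hΛ⟩ := exists_lat p F M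
  set t := unif p F
  have ht : nm p t < 1 := rr_lt p F
  have ht0 : t ≠ 0 := unif_ne p
  let B : Subgroup Mˣ :=
    { carrier := {x | InV Λ t (x : M)}
      mul_mem' := fun {x y} hx hy => by
        change InV Λ t ((x * y : Mˣ) : M)
        rw [Units.val_mul]; exact V_mul p hΛ t ht.le hx hy
      one_mem' := ⟨0, Λ.zero_mem, by simp⟩
      inv_mem' := fun {x} hx => by
        change InV Λ t ((x⁻¹ : Mˣ) : M)
        rw [Units.val_inv_eq_inv_val]; exact V_inv p hΛ t ht hx }
  have hB : ∀ x : Mˣ, x ∈ B ↔ InV Λ t (x : M) := fun _ => Iff.rfl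
  refine ⟨B, fun x hx => V_nm p hΛ t ht hx, ?_, fun g x hx => V_aut p hΛ t hx g, ?_⟩
  · obtain ⟨ε, hε, hop⟩ := hΛ.op
    have htp := nm_pos p ht0
    obtain ⟨S, hS, hnet⟩ := net p (E := M) (nm p t * ε) (by positivity)
    have : Finite S := hS
    choose f hf hf' using hnet
    let φ : (UU p M) ⧸ (B.subgroupOf (UU p M)) → S := fun q =>
      ⟨f (q.out : Mˣ) (le_of_eq q.out.2), hf _ _⟩
    have hφ : Function.Injective φ := by
      intro q r hqr
      have h1 := hf' (q.out : Mˣ) (le_of_eq q.out.2)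
      have h2 := hf' (r.out : Mˣ) (le_of_eq r.out.2)
      have h3 : f (q.out : Mˣ) (le_of_eq q.out.2) = f (r.out : Mˣ) (le_of_eq r.out.2) := congrArg Subtype.val hqr
      rw [h3] at h1
      have h4 := nm_sub_lt' p h2 h1
      rw [sub_sub_sub_cancel_right] at h4
      rw [← q.out_eq, ← r.out_eq]
      have hq1 : nm p ((q.out : Mˣ) : M) = 1 := q.out.2
      have hq0 : ((q.out : Mˣ) : M) ≠ 0 := Units.ne_zero _
      set x := ((q.out : Mˣ) : M) with hx
      set y := ((r.out : Mˣ) : M) with hy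
      have ht0' : algebraMap F M t ≠ 0 := by simpa using ht0
      refine QuotientGroup.eq.2 ?_
      rw [Subgroup.mem_subgroupOf, hB]
      refine ⟨(y - x) / (x * algebraMap F M t), hop _ ?_, ?_⟩
      · rw [map_div₀, map_mul, hq1, one_mul, nm_tower, div_le_iff₀ htp, mul_comm ε]; exact h4.le
      · simp only [Subgroup.coe_mul, Units.val_mul, InvMemClass.coe_inv, Units.val_inv_eq_inv_val]
        rw [← hx, ← hy]
        field_simp
        ring
    have := Finite.of_injective φ hφ
    exact Subgroup.index_ne_zero_of_finite
  · intro x u hxu hx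
    have hu : InV Λ t (algebraMap F M u) := by rw [hxu]; exact hx
    obtain ⟨w, hw, hwu⟩ := V_surj p hΛ t ht ht0 hu
    have hw0 : w ≠ 0 := by
      rintro rfl
      have := V_nm p hΛ t ht hw
      rw [map_zero] at this; exact zero_ne_one this
    exact ⟨Units.mk0 w hw0, hw, hwu⟩

end lat2
end UBC

namespace UBC
theorem hilbert90 {F M : Type*} [Field F] [Field M] [Algebra F M] (σ : M ≃ₐ[F] M) (n : ℕ)
    (hn0 : 0 < n) (hn : σ ^ n = 1) (hinj : ∀ i < n, ∀ j < n, σ ^ i = σ ^ j → i = j) (x : M)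
    (hx : ∏ i ∈ Finset.range n, (σ ^ i) x = 1) : ∃ y : M, y ≠ 0 ∧ σ y = x * y := by
  let c : ℕ → M := fun i => ∏ j ∈ Finset.range i, (σ ^ j) x
  have hcs : ∀ i, x * σ (c i) = c (i + 1) := by
    intro i
    simp only [c]
    rw [Finset.prod_range_succ', map_prod, pow_zero, AlgEquiv.one_apply, mul_comm]
    simp_rw [pow_succ', AlgEquiv.mul_apply]
  let ψ : M → M := fun z => ∑ i ∈ Finset.range n, c i * (σ ^ i) z
  have hψ : ∀ z, x * σ (ψ z) = ψ z := by
    intro z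
    simp only [ψ]
    rw [map_sum, Finset.mul_sum]
    have h1 : ∀ i, x * σ (c i * (σ ^ i) z) = c (i + 1) * (σ ^ (i + 1)) z := by
      intro i
      rw [map_mul, ← mul_assoc, hcs, pow_succ', AlgEquiv.mul_apply]
    simp_rw [h1]
    have h2 := Finset.sum_range_succ (fun i => c i * (σ ^ i) z) n
    rw [Finset.sum_range_succ'] at h2
    have h3 : c n * (σ ^ n) z = c 0 * (σ ^ 0) z := by
      rw [hn, pow_zero]; simp only [c]; rw [hx, Finset.range_zero, Finset.prod_empty]
    rw [h3] at h2
    exact add_right_cancel h2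
  have hz : ∃ z, ψ z ≠ 0 := by
    by_contra hc
    push Not at hc
    have hli := linearIndependent_monoidHom M M
    let e : Fin n → (M →* M) := fun i => ((σ ^ (i : ℕ) : M ≃ₐ[F] M) : M →* M)
    have he : Function.Injective e := by
      intro i j hij
      apply Fin.ext
      apply hinj _ i.2 _ j.2
      ext z
      exact DFunLike.congr_fun hij z
    have h4 := (Fintype.linearIndependent_iff.1 (hli.comp e he)) (fun i => c i) (by
      ext z
      have := hc z
      simp only [ψ] at this
      rw [Finset.sum_range] at this
      simpa [e, Finset.sum_apply] using this) ⟨0, hn0⟩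
    simp [c] at h4
  obtain ⟨z, hz⟩ := hz
  refine ⟨(ψ z)⁻¹, inv_ne_zero hz, ?_⟩
  have h5 := hψ z
  have hs : σ (ψ z) ≠ 0 := by simpa using hz
  rw [map_inv₀]
  field_simp
  rw [mul_comm]; exact h5.symm

end UBC

namespace UBC
section cyc
universe u
variable (p : ℕ) [Fact p.Prime] (F M : Type u) [Field F] [Algebra ℚ_[p] F]
  [FiniteDimensional ℚ_[p] F] [Field M] [Algebra ℚ_[p] M]
  [FiniteDimensional ℚ_[p] M] [Algebra F M] [IsScalarTower ℚ_[p] F M] [FiniteDimensional F M]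
  [IsGalois F M]

theorem index_le_of (e : ℕ) (he : rr p F = rr p M ^ e) (he0 : 0 < e) (H : Subgroup Mˣ)
    (hU : UU p M ≤ H) (hF : ∀ x : F, ∀ hx : algebraMap F M x ≠ 0, Units.mk0 _ hx ∈ H) :
    H.index ≠ 0 ∧ H.index ≤ e := by
  let π : Mˣ := Units.mk0 (unif p M) (unif_ne p)
  let φ : Fin e → Mˣ ⧸ H := fun i => QuotientGroup.mk (π ^ (i : ℕ))
  have hφ : Function.Surjective φ := by
    intro q
    obtain ⟨x, rfl⟩ := QuotientGroup.mk_surjective q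
    obtain ⟨k, hk⟩ := nm_zpow_exists p x.ne_zero
    have hlt := Int.emod_lt_of_pos k (b := (e : ℤ)) (by exact_mod_cast he0)
    have hge := Int.emod_nonneg k (b := (e : ℤ)) (by exact_mod_cast he0.ne')
    refine ⟨⟨(k % e).toNat, by omega⟩, QuotientGroup.eq.2 ?_⟩
    have hF0 : algebraMap F M (unif p F) ≠ 0 := by simpa using unif_ne p (E := F)
    set τ : Mˣ := Units.mk0 _ hF0 with hτ
    have hτH : τ ∈ H := hF _ hF0
    have h1 : (π ^ (k % e).toNat)⁻¹ * x * (τ ^ (k / e))⁻¹ ∈ UU p M := by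
      rw [mem_UU]
      have e1 : nm p (τ : M) = rr p M ^ (e : ℤ) := by
        rw [hτ, Units.val_mk0, nm_tower, nm_unif, he]; norm_cast
      have e2 : nm p (π : M) = rr p M := rfl
      have h0 := (rr_pos p M).ne'
      simp only [Units.val_mul, map_mul, Units.val_inv_eq_inv_val, map_inv₀, Units.val_zpow_eq_zpow_val,
        map_zpow₀, e1, e2, hk, Units.val_pow_eq_pow_val, map_pow]
      rw [← zpow_natCast (rr p M), Int.toNat_of_nonneg hge, ← zpow_mul, ← zpow_neg, ← zpow_neg, ← zpow_add₀ h0, ← zpow_add₀ h0]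
      have := Int.mul_ediv_add_emod k e
      rw [show -(k % e) + k + -(e * (k / e)) = 0 by linarith, zpow_zero]
    have h2 := H.mul_mem (hU h1) (H.zpow_mem hτH (k / e))
    simpa using h2
  have hfin : Finite (Mˣ ⧸ H) := Finite.of_surjective φ hφ
  refine ⟨Subgroup.index_ne_zero_of_finite, ?_⟩
  have := Nat.card_le_card_of_surjective φ hφ
  rw [Nat.card_fin] at this
  exact this

/-- unit inclusion -/
noncomputable def io : Fˣ →* Mˣ := Units.map (algebraMap F M)

theorem cyclic_bound (e : ℕ) (he : rr p F = rr p M ^ e) (he0 : 0 < e) (σ : M ≃ₐ[F] M)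
    (hσ : ∀ g : M ≃ₐ[F] M, g ∈ Subgroup.zpowers σ) :
    ((UU p M).map (NN F M)).relIndex (UU p F) ≠ 0 ∧ ((UU p M).map (NN F M)).relIndex (UU p F) ≤ e := by
  classical
  obtain ⟨B, hBU, hBi, hBaut, hBN⟩ := exists_V p F M
  have : IsCyclic (M ≃ₐ[F] M) := ⟨σ, hσ⟩
  let s : Mˣ →* Mˣ := Units.map (σ : M →* M)
  let f : Mˣ →* Mˣ := s / MonoidHom.id _
  let g : Mˣ →* Mˣ := (io F M).comp (NN F M)
  have hs : ∀ x : Mˣ, ((s x : Mˣ) : M) = σ x := fun _ => rfl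
  have hf : ∀ x : Mˣ, ((f x : Mˣ) : M) = σ x / x := fun x => by
    simp only [f, MonoidHom.div_apply, MonoidHom.id_apply, Units.val_div_eq_div_val]; rfl
  have hg : ∀ x : Mˣ, ((g x : Mˣ) : M) = algebraMap F M (Algebra.norm F (x : M)) := fun _ => rfl
  have hio : Function.Injective (io F M) := Units.map_injective (algebraMap F M).injective
  have hkf : ∀ x : Mˣ, x ∈ f.ker ↔ σ (x : M) = x := by
    intro x
    rw [MonoidHom.mem_ker, Units.ext_iff, hf, Units.val_one, div_eq_one_iff_eq x.ne_zero]
  have hfix : ∀ x : M, σ x = x → ∃ y : F, algebraMap F M y = x := by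
    intro x hx
    have : x ∈ (⊥ : IntermediateField F M) := by
      rw [IsGalois.mem_bot_iff_fixed]
      intro g
      have h1 : Subgroup.zpowers σ ≤ MulAction.stabilizer (M ≃ₐ[F] M) x := by
        rw [Subgroup.zpowers_le]; exact hx
      exact h1 (hσ g)
    exact IntermediateField.mem_bot.1 this
  have hfA : ∀ x, f x ∈ UU p M := by
    intro x
    rw [mem_UU, hf, map_div₀, nm_aut, div_self (nm_pos p x.ne_zero).ne']
  have hgf : ∀ x, g (f x) = 1 := by
    intro x
    rw [Units.ext_iff, hg, hf, Units.val_one, Algebra.norm_eq_prod_automorphisms]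
    simp_rw [map_div₀]
    rw [Finset.prod_div_distrib]
    have h1 : ∏ k : M ≃ₐ[F] M, k (σ x) = ∏ k : M ≃ₐ[F] M, k (x : M) :=
      Fintype.prod_equiv (Equiv.mulRight σ) _ _ (fun k => rfl)
    rw [h1, div_self]
    rw [← Algebra.norm_eq_prod_automorphisms]
    simp [Algebra.norm_ne_zero_iff]
  have hAf : UU p M ⊓ f.ker = (UU p F).map (io F M) := by
    ext x
    rw [Subgroup.mem_inf, hkf, Subgroup.mem_map]
    constructor
    · rintro ⟨h1, h2⟩
      obtain ⟨y, hy⟩ := hfix _ h2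
      have hy0 : y ≠ 0 := by rintro rfl; exact x.ne_zero (by rw [← hy, map_zero])
      refine ⟨Units.mk0 y hy0, ?_, Units.ext hy⟩
      rw [mem_UU] at *
      rw [Units.val_mk0, ← nm_tower p (E' := M), hy, h1]
    · rintro ⟨y, hy, rfl⟩
      refine ⟨?_, σ.commutes _⟩
      rw [mem_UU] at *
      change nm p (algebraMap F M y) = 1
      rw [nm_tower, hy]
  have hAg : UU p M ⊓ g.ker = (⊤ : Subgroup Mˣ).map f := by
    ext x
    rw [Subgroup.mem_inf, Subgroup.mem_map]
    constructor
    · rintro ⟨-, h2⟩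
      rw [MonoidHom.mem_ker, Units.ext_iff, hg, Units.val_one, ← map_one (algebraMap F M)] at h2
      have h3 := (algebraMap F M).injective h2
      obtain ⟨y, hy0, hy⟩ := hilbert90 σ (orderOf σ) (orderOf_pos σ) (pow_orderOf_eq_one σ)
        (fun i hi j hj h => pow_injOn_Iio_orderOf hi hj h) (x : M) (by
          rw [← map_one (algebraMap F M), ← h3, Algebra.norm_eq_prod_automorphisms]
          rw [Finset.prod_range]
          refine Fintype.prod_bijective (fun i : Fin (orderOf σ) => σ ^ (i : ℕ)) ⟨?_, ?_⟩ _ _ (fun _ => rfl)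
          · intro i j h
            exact Fin.ext (pow_injOn_Iio_orderOf i.2 j.2 h)
          · intro k
            obtain ⟨n, hn, rfl⟩ := (mem_zpowers_iff_mem_range_orderOf.1 (hσ k) |> Finset.mem_image.1)
            exact ⟨⟨n, Finset.mem_range.1 hn⟩, rfl⟩)
      refine ⟨Units.mk0 y hy0, trivial, Units.ext ?_⟩
      rw [hf, Units.val_mk0, hy, mul_div_cancel_right₀ _ hy0]
    · rintro ⟨y, -, rfl⟩
      exact ⟨hfA y, hgf y⟩
  have hidx : ((UU p M).map f).relIndex (UU p M ⊓ g.ker) = (UU p M ⊔ f.ker).index := by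
    rw [hAg, Subgroup.relIndex_map_map, top_sup_eq, Subgroup.relIndex_top_right]
  have hidx2 := index_le_of p F M e he he0 (UU p M ⊔ f.ker) le_sup_left (fun x hx =>
    (le_sup_right : f.ker ≤ UU p M ⊔ f.ker) ((hkf _).2 (by simp)))
  have key := herbrand f g (UU p M) B hBU hBi ?_ ?_ ?_ ?_ ?_ hgf ?_ e (hidx ▸ hidx2.2) (hidx ▸ hidx2.1)
  · have e1 : (UU p M).map g = ((UU p M).map (NN F M)).map (io F M) := by rw [Subgroup.map_map]
    rw [hAf, e1, Subgroup.relIndex_map_map_of_injective _ _ hio] at key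
    exact key
  · rintro _ ⟨x, hx, rfl⟩
    have := NN_mem p F M hx
    rw [mem_UU] at *
    rw [hg, nm_tower]; exact this
  · rintro _ ⟨x, hx, rfl⟩
    have h1 : g x = ∏ k : M ≃ₐ[F] M, Units.map (k : M →* M) x := by
      rw [Units.ext_iff, hg, Algebra.norm_eq_prod_automorphisms, Units.coe_prod]; rfl
    rw [h1]
    exact B.prod_mem (fun k _ => hBaut k x hx)
  · rintro _ ⟨x, hx, rfl⟩
    exact B.div_mem (hBaut σ x hx) hx
  · rintro _ ⟨x, hx, rfl⟩
    exact hfA x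
  · intro x
    have : g x ∈ f.ker := (hkf _).2 (by rw [hg]; exact σ.commutes _)
    exact this
  · rintro x ⟨hx, hxf⟩
    obtain ⟨y, hy⟩ := hfix _ ((hkf x).1 hxf)
    obtain ⟨w, hw, hwu⟩ := hBN x y hy hx
    exact ⟨w, hw, Units.ext (by rw [hg, hwu, hy])⟩

end cyc
end UBC

namespace UBC
section ff
universe u
variable {F M : Type u} [Field F] [Field M] [Algebra F M] [FiniteDimensional F M]

theorem ff_lift (H : Subgroup (M ≃ₐ[F] M)) (g : M ≃ₐ[F] M) (hg : g ∈ H) :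
    ∃ τ : M ≃ₐ[IntermediateField.fixedField H] M, ∀ x, τ x = g x := by
  refine ⟨AlgEquiv.ofRingEquiv (f := g.toRingEquiv) (fun x => ?_), fun x => rfl⟩
  exact x.2 ⟨g, hg⟩

theorem ff_mem (H : Subgroup (M ≃ₐ[F] M)) (τ : M ≃ₐ[IntermediateField.fixedField H] M) :
    ∃ g ∈ H, ∀ x, τ x = g x := by
  refine ⟨τ.restrictScalars F, ?_, fun x => rfl⟩
  have h : τ.restrictScalars F ∈ (IntermediateField.fixedField H).fixingSubgroup := fun x => τ.commutes x
  rwa [IntermediateField.fixingSubgroup_fixedField] at h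

theorem mem_ff (H : Subgroup (M ≃ₐ[F] M)) (x : M) :
    x ∈ IntermediateField.fixedField H ↔ ∀ g ∈ H, g x = x :=
  ⟨fun h g hg => h ⟨g, hg⟩, fun h g => h g.1 g.2⟩

theorem ab_quot [IsGalois F M] (hab : ∀ g h : M ≃ₐ[F] M, g * h = h * g) (E : IntermediateField F M)
    [IsGalois F E] : ∀ g h : E ≃ₐ[F] E, g * h = h * g := by
  intro a b
  obtain ⟨a', rfl⟩ := AlgEquiv.restrictNormalHom_surjective (F := F) (K₁ := E) M a
  obtain ⟨b', rfl⟩ := AlgEquiv.restrictNormalHom_surjective (F := F) (K₁ := E) M b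
  rw [← map_mul, hab, map_mul]

theorem ab_gal [IsGalois F M] (hab : ∀ g h : M ≃ₐ[F] M, g * h = h * g) (E : IntermediateField F M) :
    IsGalois F E := by
  have hn : E.fixingSubgroup.Normal := ⟨fun n hn g => by rw [hab g n, mul_assoc, mul_inv_cancel, mul_one]; exact hn⟩
  have : IsGalois F (IntermediateField.fixedField E.fixingSubgroup) := inferInstance
  rwa [IsGalois.fixedField_fixingSubgroup] at this

variable (p : ℕ) [Fact p.Prime] [Algebra ℚ_[p] F]
  [FiniteDimensional ℚ_[p] F] [Algebra ℚ_[p] M]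
  [FiniteDimensional ℚ_[p] M] [IsScalarTower ℚ_[p] F M]

theorem ff_tower' (E : IntermediateField F M) : IsScalarTower ℚ_[p] F E :=
  IsScalarTower.of_algebraMap_eq (fun x => by
    apply Subtype.ext
    exact IsScalarTower.algebraMap_apply ℚ_[p] F M x)

theorem ff_tower (E : IntermediateField F M) : IsScalarTower ℚ_[p] E M :=
  IsScalarTower.of_algebraMap_eq (fun x => by rfl)

theorem ff_fin (E : IntermediateField F M) : FiniteDimensional ℚ_[p] E :=
  have := ff_tower p E
  FiniteDimensional.left ℚ_[p] E M

end ff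
section ab
universe u
theorem ab_bound_aux (p : ℕ) [Fact p.Prime] (n : ℕ) : ∀ (F M : Type u) [Field F] [Algebra ℚ_[p] F]
  [FiniteDimensional ℚ_[p] F] [Field M] [Algebra ℚ_[p] M]
  [FiniteDimensional ℚ_[p] M] [Algebra F M] [IsScalarTower ℚ_[p] F M] [FiniteDimensional F M]
  [IsGalois F M] (_ : Module.finrank F M = n) (_ : ∀ g h : M ≃ₐ[F] M, g * h = h * g)
  (e : ℕ) (_ : rr p F = rr p M ^ e) (_ : 0 < e),
    ((UU p M).map (NN F M)).relIndex (UU p F) ≠ 0 ∧ ((UU p M).map (NN F M)).relIndex (UU p F) ≤ e := by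
  induction n using Nat.strong_induction_on with
  | _ n ih =>
  intro F M _ _ _ _ _ _ _ _ _ _ hn hab e he he0
  by_cases htriv : ∀ g : M ≃ₐ[F] M, g = 1
  · exact cyclic_bound p F M e he he0 1 (fun g => by rw [htriv g]; exact one_mem _)
  push Not at htriv
  obtain ⟨g, hg⟩ := htriv
  set E := IntermediateField.fixedField (Subgroup.zpowers g) with hE
  have : FiniteDimensional ℚ_[p] E := ff_fin p E
  have : IsScalarTower ℚ_[p] E M := ff_tower p E
  have : IsScalarTower ℚ_[p] F E := ff_tower' p E
  have : IsGalois F E := ab_gal hab E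
  have habE := ab_quot hab E
  obtain ⟨e1, he10, he1⟩ := exists_e p F E
  obtain ⟨e2, he20, he2⟩ := exists_e p E M
  have hee : e = e2 * e1 := by
    apply rr_pow_inj p M
    rw [← he, he1, he2, pow_mul]
  have hlt : Module.finrank F E < n := by
    have h1 := Module.finrank_mul_finrank F E M
    have h2 : Module.finrank E M = Nat.card (Subgroup.zpowers g) := by
      rw [hE, IntermediateField.finrank_fixedField_eq_card]
    have h3 : 1 < Nat.card (Subgroup.zpowers g) := by
      rw [Nat.card_zpowers]
      have : orderOf g ≠ 1 := by rwa [Ne, orderOf_eq_one_iff]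
      have := orderOf_pos g
      omega
    have h4 : 0 < Module.finrank F E := Module.finrank_pos
    rw [← hn, ← h1, h2]
    nlinarith
  obtain ⟨a1, a2⟩ := ih _ hlt F E rfl habE e1 he1 he10
  obtain ⟨σ, hσ⟩ := ff_lift (Subgroup.zpowers g) g (Subgroup.mem_zpowers g)
  obtain ⟨b1, b2⟩ := cyclic_bound p E M e2 he2 he20 σ (by
    intro τ
    obtain ⟨h, hh, hh'⟩ := ff_mem _ τ
    obtain ⟨k, rfl⟩ := Subgroup.mem_zpowers_iff.1 (mem_powers_iff_mem_zpowers.2 hh |> fun h => mem_powers_iff_mem_zpowers.1 h)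
    obtain ⟨m, hm⟩ := (Submonoid.mem_powers_iff _ _).1 (mem_powers_iff_mem_zpowers.2 hh)
    refine ⟨m, ?_⟩
    ext x
    rw [hh', ← hm]
    simp only [zpow_natCast]
    clear hm hh hh'
    induction m with
    | zero => simp
    | succ m ihm => rw [pow_succ', pow_succ', AlgEquiv.mul_apply, AlgEquiv.mul_apply, ihm, hσ])
  have hle : (UU p M).map (NN E M) ≤ UU p E := by
    rintro _ ⟨x, hx, rfl⟩; exact NN_mem p E M hx
  have hle2 : (UU p E).map (NN F E) ≤ UU p F := by
    rintro _ ⟨x, hx, rfl⟩; exact NN_mem p F E hx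
  have hmap : (UU p M).map (NN F M) = ((UU p M).map (NN E M)).map (NN F E) := by
    rw [Subgroup.map_map]
    congr 1
    ext x
    rw [MonoidHom.comp_apply, NN_apply, NN_apply, NN_apply, Algebra.norm_norm]
  have h1 := hb_aux (NN F E) (UU p E) _ hle
  rw [← hmap] at h1
  have h2 := Subgroup.relIndex_mul_relIndex ((UU p M).map (NN F M)) ((UU p E).map (NN F E)) (UU p F)
    (by rw [hmap]; exact Subgroup.map_mono hle) hle2
  rw [← h2]
  have h3 : ((UU p M).map (NN F M)).relIndex ((UU p E).map (NN F E)) ≠ 0 := by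
    intro h; rw [h, zero_mul] at h1; exact b1 h1
  refine ⟨mul_ne_zero h3 a1, ?_⟩
  rw [hee]
  refine Nat.mul_le_mul ?_ a2
  refine le_trans ?_ b2
  rw [h1]
  apply Nat.le_mul_of_pos_right
  apply Nat.pos_of_ne_zero
  intro h; rw [h, mul_zero] at h1; exact b1 h1

end ab
end UBC

namespace UBC
section unr
universe u
variable (p : ℕ) [Fact p.Prime] (F M : Type u) [Field F] [Algebra ℚ_[p] F]
  [FiniteDimensional ℚ_[p] F] [Field M] [Algebra ℚ_[p] M]
  [FiniteDimensional ℚ_[p] M] [Algebra F M] [IsScalarTower ℚ_[p] F M] [FiniteDimensional F M]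
  [IsGalois F M]

theorem inert_triv (h : rr p F = rr p M) (g : M ≃ₐ[F] M) (hg : g ∈ Inert p F M) : g = 1 := by
  have h1 := card_Inert p F M
  rw [h] at h1
  have h2 : Nat.card (Inert p F M) = 1 := (rr_pow_inj p M (by rw [pow_one]; exact h1)).symm
  rw [Subgroup.card_eq_one] at h2
  rw [h2] at hg
  exact Subgroup.mem_bot.1 hg

/-- residue characters -/
noncomputable def chi (g : M ≃ₐ[F] M) : OO p M →* IsLocalRing.ResidueField (OO p M) where
  toFun x := IsLocalRing.residue (OO p M) ⟨g x, by rw [mem_OO, nm_aut]; exact x.2⟩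
  map_one' := by rw [← map_one (IsLocalRing.residue (OO p M))]; congr 1; ext; exact map_one g
  map_mul' x y := by rw [← map_mul]; congr 1; ext; exact map_mul g _ _

theorem exists_tr_unit (h : rr p F = rr p M) :
    ∃ x : M, nm p x ≤ 1 ∧ nm p (Algebra.trace F M x) = 1 := by
  by_contra hc
  push Not at hc
  have hinj : Function.Injective (chi p F M) := by
    intro a b hab
    have : b⁻¹ * a ∈ Inert p F M := by
      intro x hx
      have h1 := DFunLike.congr_fun hab ⟨x, hx⟩
      change IsLocalRing.residue (OO p M) _ = IsLocalRing.residue (OO p M) _ at h1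
      rw [← sub_eq_zero, ← map_sub, IsLocalRing.residue_eq_zero_iff, mem_max_OO] at h1
      change nm p (a x - b x) < 1 at h1
      rw [← nm_aut p b⁻¹, map_sub, ← AlgEquiv.mul_apply, ← AlgEquiv.mul_apply, inv_mul_cancel] at h1
      exact h1
    have := inert_triv p F M h _ this
    exact (inv_mul_eq_one.1 this).symm
  have hli := (linearIndependent_monoidHom (OO p M) (IsLocalRing.ResidueField (OO p M))).comp _ hinj
  rw [Fintype.linearIndependent_iff] at hli
  refine one_ne_zero (hli (fun _ => 1) ?_ 1)
  ext x
  have h1 := hc x x.2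
  have h2 : nm p (Algebra.trace F M (x : M)) < 1 := lt_of_le_of_ne (nm_trace_le p F M zero_le_one x.2) h1
  rw [← nm_tower p (E' := M), trace_eq_sum_automorphisms] at h2
  have h3 : (IsLocalRing.residue (OO p M)) (∑ g : M ≃ₐ[F] M, (⟨g x, by rw [mem_OO, nm_aut]; exact x.2⟩ : OO p M)) = 0 := by
    rw [IsLocalRing.residue_eq_zero_iff, mem_max_OO]
    rw [show ((∑ g : M ≃ₐ[F] M, (⟨g x, by rw [mem_OO, nm_aut]; exact x.2⟩ : OO p M) : OO p M) : M) = ∑ g : M ≃ₐ[F] M, g x from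
      map_sum (OO p M).subtype _ _]
    exact h2
  rw [map_sum] at h3
  simp only [one_smul, Finset.sum_apply, Pi.zero_apply]
  exact h3

theorem lat_unr (h : rr p F = rr p M) : Lat p F M (OO p M).toSubring.toAddSubgroup where
  le x hx := hx
  aut g x hx := by change nm p (g x) ≤ 1; rw [nm_aut]; exact hx
  mul x hx y hy := (OO p M).mul_mem _ _ hx hy
  smul c hc x hx := (OO p M).mul_mem _ _ (by change nm p _ ≤ 1; rwa [nm_tower]) hx
  op := ⟨1, one_pos, fun x hx => hx⟩
  tr y hy := by
    have hy' : nm p y ≤ 1 := by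
      change nm p _ ≤ 1 at hy
      rwa [nm_tower] at hy
    obtain ⟨x, hx, hx1⟩ := exists_tr_unit p F M h
    have h0 : Algebra.trace F M x ≠ 0 := by
      intro h; rw [h, map_zero] at hx1; exact zero_ne_one hx1
    refine ⟨(y / Algebra.trace F M x) • x, ?_, ?_⟩
    · change nm p _ ≤ 1
      rw [Algebra.smul_def, map_mul, nm_tower, map_div₀, hx1, div_one]
      exact mul_le_one₀ hy' (nm_nonneg p _) hx
    · rw [map_smul, smul_eq_mul, div_mul_cancel₀ _ h0]

theorem unr_pos (h : rr p F = rr p M) (n : ℕ) (hn : 0 < n) (u : F) (hu : nm p (u - 1) ≤ rr p F ^ n) :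
    ∃ w : M, nm p (w - 1) ≤ rr p F ^ n ∧ nm p w = 1 ∧ Algebra.norm F w = u := by
  have hU := unif_ne p (E := F)
  have hnU : nm p (unif p F ^ n) = rr p F ^ n := by rw [map_pow, nm_unif]
  have ht : nm p (unif p F ^ n) < 1 := by
    rw [hnU]; exact pow_lt_one₀ (rr_pos p F).le (rr_lt p F) hn.ne'
  have hp : 0 < rr p F ^ n := pow_pos (rr_pos p F) n
  obtain ⟨w, hw, hw'⟩ := V_surj p (lat_unr p F M h) (unif p F ^ n) ht (pow_ne_zero _ hU) (u := u)
    ⟨algebraMap F M ((u - 1) / unif p F ^ n), by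
      change nm p _ ≤ 1
      rw [nm_tower, map_div₀, hnU, div_le_one hp]; exact hu, by
      rw [← map_mul, mul_div_cancel₀ _ (pow_ne_zero _ hU), map_sub, map_one]; ring⟩
  refine ⟨w, ?_, V_nm p (lat_unr p F M h) _ ht hw, hw'⟩
  obtain ⟨a, ha, rfl⟩ := hw
  rw [add_sub_cancel_left, map_mul, nm_tower, hnU]
  exact mul_le_of_le_one_right hp.le ha

theorem unr_zero (h : rr p F = rr p M) (u : F) (hu : nm p u = 1) :
    ∃ w : M, nm p w = 1 ∧ Algebra.norm F w = u := by
  obtain ⟨φ, hφ⟩ := exists_frob p F M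
  obtain ⟨h1, h2⟩ := cyclic_bound p F M 1 (by rw [pow_one]; exact h) one_pos φ (fun g => by
    obtain ⟨i, ρ, hρ, rfl⟩ := frob_decomp p F M φ hφ g
    rw [inert_triv p F M h ρ hρ, mul_one]
    exact ⟨i, by simp⟩)
  have h3 : ((UU p M).map (NN F M)).relIndex (UU p F) = 1 := by omega
  rw [Subgroup.relIndex_eq_one] at h3
  have h0 : u ≠ 0 := by rintro rfl; rw [map_zero] at hu; exact zero_ne_one hu
  obtain ⟨w, hw, hw'⟩ := h3 (show Units.mk0 u h0 ∈ UU p F from (mem_UU p).2 hu)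
  refine ⟨w, (mem_UU p).1 hw, ?_⟩
  rw [← NN_apply, hw', Units.val_mk0]

end unr
end UBC

namespace UBC
section unr2
universe u
variable (p : ℕ) [Fact p.Prime]

theorem nm_prod_sub {E : Type*} [Field E] [Algebra ℚ_[p] E] [FiniteDimensional ℚ_[p] E] {c : ℝ} (hc : c ≤ 1) (hc0 : 0 ≤ c)
    {ι : Type*} (s : Finset ι) (f : ι → E) (hf : ∀ i ∈ s, nm p (f i - 1) ≤ c) :
    nm p (∏ i ∈ s, f i - 1) ≤ c := by
  classical
  induction s using Finset.induction_on with
  | empty => simpa using hc0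
  | insert i s hi ih =>
    rw [Finset.prod_insert hi]
    have h1 := hf i (Finset.mem_insert_self _ _)
    have h2 := ih (fun j hj => hf j (Finset.mem_insert_of_mem hj))
    have h3 : nm p (f i) ≤ 1 := by
      have := nm_add_le' p (h1.trans hc) (show nm p (1 : E) ≤ 1 by simp)
      simpa using this
    have : f i * ∏ i ∈ s, f i - 1 = f i * (∏ i ∈ s, f i - 1) + (f i - 1) := by ring
    rw [this]
    refine nm_add_le' p ?_ h1
    rw [map_mul]
    exact (mul_le_of_le_one_left (nm_nonneg p _) h3).trans h2

theorem nm_norm_sub (F M : Type u) [Field F] [Algebra ℚ_[p] F]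
  [FiniteDimensional ℚ_[p] F] [Field M] [Algebra ℚ_[p] M]
  [FiniteDimensional ℚ_[p] M] [Algebra F M] [IsScalarTower ℚ_[p] F M] [FiniteDimensional F M]
  [IsGalois F M] {c : ℝ} (hc : c ≤ 1) (hc0 : 0 ≤ c) (x : M) (hx : nm p (x - 1) ≤ c) :
    nm p (Algebra.norm F x - 1) ≤ c := by
  rw [← nm_tower p (E' := M), map_sub, map_one, Algebra.norm_eq_prod_automorphisms]
  refine nm_prod_sub p hc hc0 _ _ (fun g _ => ?_)
  rw [show g x - 1 = g (x - 1) by simp, nm_aut]; exact hx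

/-- unit filtration predicate -/
def Un (E : Type*) [Field E] [Algebra ℚ_[p] E] [FiniteDimensional ℚ_[p] E] (n : ℕ) (u : E) : Prop :=
  nm p u = 1 ∧ nm p (u - 1) ≤ rr p E ^ n

theorem unr_gal (F M : Type u) [Field F] [Algebra ℚ_[p] F]
  [FiniteDimensional ℚ_[p] F] [Field M] [Algebra ℚ_[p] M]
  [FiniteDimensional ℚ_[p] M] [Algebra F M] [IsScalarTower ℚ_[p] F M] [FiniteDimensional F M]
  [IsGalois F M] (h : rr p F = rr p M) (n : ℕ) (u : F) (hu : Un p F n u) :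
    ∃ w : M, Un p M n w ∧ Algebra.norm F w = u := by
  rcases Nat.eq_zero_or_pos n with rfl | hn
  · obtain ⟨w, hw, hw'⟩ := unr_zero p F M h u hu.1
    refine ⟨w, ⟨hw, ?_⟩, hw'⟩
    rw [pow_zero]
    exact nm_sub_le' p hw.le (by simp)
  · obtain ⟨w, hw, h1, hw'⟩ := unr_pos p F M h n hn u hu.2
    exact ⟨w, ⟨h1, by rwa [← h]⟩, hw'⟩

theorem Un_norm (F M : Type u) [Field F] [Algebra ℚ_[p] F]
  [FiniteDimensional ℚ_[p] F] [Field M] [Algebra ℚ_[p] M]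
  [FiniteDimensional ℚ_[p] M] [Algebra F M] [IsScalarTower ℚ_[p] F M] [FiniteDimensional F M]
  [IsGalois F M] (h : rr p F = rr p M) (n : ℕ) (x : M) (hx : Un p M n x) : Un p F n (Algebra.norm F x) := by
  refine ⟨by rw [nm_norm, hx.1, one_pow], ?_⟩
  rw [h]
  exact nm_norm_sub p F M (pow_le_one₀ (rr_pos p M).le (rr_lt p M).le) (pow_nonneg (rr_pos p M).le _) x hx.2

theorem unr_two (K F E : Type u) [Field K] [Algebra ℚ_[p] K]
  [FiniteDimensional ℚ_[p] K] [Field F] [Algebra ℚ_[p] F]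
  [FiniteDimensional ℚ_[p] F] [Algebra K F] [IsScalarTower ℚ_[p] K F] [FiniteDimensional K F]
  [Field E] [Algebra ℚ_[p] E] [FiniteDimensional ℚ_[p] E] [Algebra K E] [Algebra F E]
  [IsScalarTower ℚ_[p] K E] [IsScalarTower ℚ_[p] F E] [FiniteDimensional K E] [FiniteDimensional F E]
  [IsScalarTower K F E] [IsGalois K E]
  (hFE : rr p F = rr p E) (hKF : rr p K = rr p F) (n : ℕ) :
    (∀ u : K, Un p K n u → ∃ w : F, Un p F n w ∧ Algebra.norm K w = u) ∧
      ∀ w : F, Un p F n w → Un p K n (Algebra.norm K w) := by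
  have : IsGalois F E := IsGalois.tower_top_of_isGalois K F E
  constructor
  · intro u hu
    obtain ⟨w, hw, hw'⟩ := unr_gal p K E (hKF.trans hFE) n u hu
    exact ⟨Algebra.norm F w, Un_norm p F E hFE n w hw, by rw [Algebra.norm_norm, hw']⟩
  · intro w hw
    obtain ⟨y, hy, rfl⟩ := unr_gal p F E hFE n w hw
    rw [Algebra.norm_norm]
    exact Un_norm p K E (hKF.trans hFE) n y hy

theorem unr_three (K F E : Type u) [Field K] [Algebra ℚ_[p] K]
  [FiniteDimensional ℚ_[p] K] [Field F] [Algebra ℚ_[p] F]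
  [FiniteDimensional ℚ_[p] F] [Algebra K F] [IsScalarTower ℚ_[p] K F] [FiniteDimensional K F]
  [Field E] [Algebra ℚ_[p] E] [FiniteDimensional ℚ_[p] E] [Algebra K E] [Algebra F E]
  [IsScalarTower ℚ_[p] K E] [IsScalarTower ℚ_[p] F E] [FiniteDimensional K E] [FiniteDimensional F E]
  [IsScalarTower K F E] [IsGalois K E]
  (hKF : rr p K = rr p F) (n : ℕ) :
    (∀ u : K, Un p K n u → ∃ w : F, Un p F n w ∧ Algebra.norm K w = u) ∧
      ∀ w : F, Un p F n w → Un p K n (Algebra.norm K w) := by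
  have : IsGalois F E := IsGalois.tower_top_of_isGalois K F E
  have hcard : Nat.card (Inert p F E) = Nat.card (Inert p K E) := by
    apply rr_pow_inj p E
    rw [← card_Inert, ← card_Inert, hKF]
  let r : (E ≃ₐ[F] E) → (E ≃ₐ[K] E) := fun g => g.restrictScalars K
  let f : Inert p F E → Inert p K E := fun g => ⟨r g.1, g.2⟩
  have hf : Function.Bijective f := by
    rw [Nat.bijective_iff_injective_and_card]
    refine ⟨fun a b hab => ?_, hcard⟩
    ext x
    exact DFunLike.congr_fun (congrArg Subtype.val hab) x
  have hfix : ∀ g ∈ Inert p K E, ∀ x : F, g (algebraMap F E x) = algebraMap F E x := by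
    intro g hg x
    obtain ⟨a, ha⟩ := hf.2 ⟨g, hg⟩
    have : g = r a.1 := (congrArg Subtype.val ha).symm
    rw [this]
    exact a.1.commutes x
  have hnorm : (Inert p K E).Normal := by
    constructor
    intro n hn g x hx
    have := hn (g⁻¹ x) (by rwa [nm_aut])
    rw [← nm_aut p g, map_sub, ← AlgEquiv.mul_apply g g⁻¹, mul_inv_cancel] at this
    exact this
  let T := IntermediateField.fixedField (Inert p K E)
  have : FiniteDimensional ℚ_[p] T := ff_fin p T
  have : IsScalarTower ℚ_[p] T E := ff_tower p T
  have : IsScalarTower ℚ_[p] K T := ff_tower' p T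
  have : IsGalois K T := inferInstance
  letI : Algebra F T := RingHom.toAlgebra ((algebraMap F E).codRestrict T.toSubring
    (fun x => (mem_ff _ _).2 (fun g hg => hfix g hg x)))
  have : IsScalarTower F T E := IsScalarTower.of_algebraMap_eq (fun _ => rfl)
  have : IsScalarTower K F T := IsScalarTower.of_algebraMap_eq (fun x => by
    apply Subtype.ext
    exact IsScalarTower.algebraMap_apply K F E x)
  have : IsScalarTower ℚ_[p] F T := IsScalarTower.of_algebraMap_eq (fun x => by
    apply Subtype.ext
    change algebraMap ℚ_[p] E x = _
    exact IsScalarTower.algebraMap_apply ℚ_[p] F E x)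
  have : FiniteDimensional F T := FiniteDimensional.left F T E
  have hT : rr p K = rr p T := by
    have h1 := card_Inert p K E
    have h2 := card_Inert p T E
    rw [h1, h2]
    congr 1
    let s : Inert p T E → Inert p K E := fun g => ⟨g.1.restrictScalars K, g.2⟩
    have hs : Function.Bijective s := by
      constructor
      · intro a b hab
        ext x
        exact DFunLike.congr_fun (congrArg Subtype.val hab) x
      · intro a
        obtain ⟨τ, hτ⟩ := ff_lift (Inert p K E) a.1 a.2
        refine ⟨⟨τ, ?_⟩, ?_⟩
        · intro x hx
          rw [hτ]; exact a.2 x hx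
        · ext x
          exact hτ x
    exact (Nat.card_congr (Equiv.ofBijective s hs)).symm
  exact unr_two p K F T (hKF.symm.trans hT) hKF n
end unr2
section unr4
universe u
variable (p : ℕ) [Fact p.Prime]
variable (K F : Type u) [Field K] [Algebra ℚ_[p] K]
  [FiniteDimensional ℚ_[p] K] [Field F] [Algebra ℚ_[p] F]
  [FiniteDimensional ℚ_[p] F] [Algebra K F] [IsScalarTower ℚ_[p] K F] [FiniteDimensional K F]

theorem unr_four (hKF : rr p K = rr p F) (n : ℕ) :
    (∀ u : K, Un p K n u → ∃ w : F, Un p F n w ∧ Algebra.norm K w = u) ∧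
      ∀ w : F, Un p F n w → Un p K n (Algebra.norm K w) := by
  have : CharZero K := charZero_of_injective_algebraMap (algebraMap ℚ_[p] K).injective
  have : IsScalarTower K F (AlgebraicClosure F) := inferInstance
  have : IsScalarTower ℚ_[p] K (AlgebraicClosure F) := IsScalarTower.of_algebraMap_eq (fun x => by
    rw [IsScalarTower.algebraMap_apply ℚ_[p] F (AlgebraicClosure F),
      IsScalarTower.algebraMap_apply K F (AlgebraicClosure F), IsScalarTower.algebraMap_apply ℚ_[p] K F])
  let E := IntermediateField.normalClosure K F (AlgebraicClosure F)
  have : Algebra.IsAlgebraic K (AlgebraicClosure F) := Algebra.IsAlgebraic.trans K F _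
  have : IsGalois K E := inferInstance
  have : FiniteDimensional K E := inferInstance
  have t1 : IsScalarTower ℚ_[p] K E := IsScalarTower.of_algebraMap_eq (fun x => by
    apply Subtype.ext
    exact IsScalarTower.algebraMap_apply ℚ_[p] K (AlgebraicClosure F) x)
  have t2 : IsScalarTower ℚ_[p] F E := IsScalarTower.of_algebraMap_eq (fun x => by
    apply Subtype.ext
    exact IsScalarTower.algebraMap_apply ℚ_[p] F (AlgebraicClosure F) x)
  have t3 : FiniteDimensional ℚ_[p] E := FiniteDimensional.trans ℚ_[p] K E
  have : IsScalarTower K F E := inferInstance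
  have : FiniteDimensional F E := FiniteDimensional.right K F E
  exact unr_three p K F E hKF n
end unr4
end UBC

namespace UBC
section ns
universe u
variable {K E : Type u} [Field K] [Field E] [Algebra K E] [FiniteDimensional K E]

open scoped Classical in
/-- product over a subgroup -/
noncomputable def NS (S : Subgroup (E ≃ₐ[K] E)) (x : E) : E :=
  ∏ g ∈ (Finset.univ.filter (fun g : E ≃ₐ[K] E => g ∈ S)), g x

variable (S : Subgroup (E ≃ₐ[K] E))

theorem NS_mul (x y : E) : NS S (x * y) = NS S x * NS S y := by
  simp only [NS, map_mul, Finset.prod_mul_distrib]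

theorem NS_div (x y : E) : NS S (x / y) = NS S x / NS S y := by
  simp only [NS, map_div₀, Finset.prod_div_distrib]

theorem NS_ne {x : E} (hx : x ≠ 0) : NS S x ≠ 0 := by
  rw [NS, Finset.prod_ne_zero_iff]
  intro g _
  simpa using hx

theorem NS_fix (h : E ≃ₐ[K] E) (hh : h ∈ S) (x : E) : h (NS S x) = NS S x := by
  classical
  rw [NS, map_prod]
  refine Finset.prod_nbij' (fun g => h * g) (fun g => h⁻¹ * g) ?_ ?_ ?_ ?_ ?_
  · intro g hg; simp only [Finset.mem_filter, Finset.mem_univ, true_and] at hg ⊢; exact S.mul_mem hh hg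
  · intro g hg; simp only [Finset.mem_filter, Finset.mem_univ, true_and] at hg ⊢; exact S.mul_mem (S.inv_mem hh) hg
  · intro g _; exact inv_mul_cancel_left _ _
  · intro g _; exact mul_inv_cancel_left _ _
  · intro g _; rfl

theorem NS_comm (hab : ∀ g h : E ≃ₐ[K] E, g * h = h * g) (h : E ≃ₐ[K] E) (x : E) :
    h (NS S x) = NS S (h x) := by
  rw [NS, map_prod]
  refine Finset.prod_congr rfl (fun g _ => ?_)
  rw [← AlgEquiv.mul_apply, hab, AlgEquiv.mul_apply]

theorem NS_dec (H : Subgroup (E ≃ₐ[K] E)) {ι : Type*} (J : Finset ι) (c : ι → E ≃ₐ[K] E)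
    (hinj : ∀ i ∈ J, ∀ j ∈ J, ∀ h ∈ H, ∀ h' ∈ H, c i * h = c j * h' → i = j)
    (hmem : ∀ i ∈ J, ∀ h ∈ H, c i * h ∈ S) (hsurj : ∀ g ∈ S, ∃ i ∈ J, ∃ h ∈ H, g = c i * h) (x : E) :
    NS S x = ∏ i ∈ J, (c i) (NS H x) := by
  classical
  simp only [NS, map_prod]
  rw [← Finset.prod_product', eq_comm]
  refine Finset.prod_bij (fun a _ => c a.1 * a.2) ?_ ?_ ?_ ?_
  · rintro ⟨i, h⟩ ha
    simp only [Finset.mem_product, Finset.mem_filter, Finset.mem_univ, true_and] at ha ⊢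
    exact hmem i ha.1 h ha.2
  · rintro ⟨i, h⟩ ha ⟨j, h'⟩ hb hab
    simp only [Finset.mem_product, Finset.mem_filter, Finset.mem_univ, true_and] at ha hb hab
    have := hinj i ha.1 j hb.1 h ha.2 h' hb.2 hab
    subst this
    rw [mul_left_cancel hab]
  · intro g hg
    simp only [Finset.mem_filter, Finset.mem_univ, true_and] at hg
    obtain ⟨i, hi, h, hh, rfl⟩ := hsurj g hg
    exact ⟨(i, h), by simp [hi, hh], rfl⟩
  · intro a _; rfl

variable (p : ℕ) [Fact p.Prime] [Algebra ℚ_[p] K] [FiniteDimensional ℚ_[p] K]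
  [Algebra ℚ_[p] E] [FiniteDimensional ℚ_[p] E] [IsScalarTower ℚ_[p] K E]

theorem nm_NS (x : E) : nm p (NS S x) = nm p x ^ Nat.card S := by
  classical
  rw [NS, map_prod, Finset.prod_congr rfl (fun g _ => nm_aut p g x), Finset.prod_const]
  congr 1
  rw [Nat.card_eq_fintype_card, Fintype.card_subtype]

theorem rr_ff [IsGalois K E] : 
    have := ff_fin p (IntermediateField.fixedField S)
    rr p (IntermediateField.fixedField S) = rr p E ^ Nat.card (Inert p K E ⊓ S : Subgroup (E ≃ₐ[K] E)) := by
  intro _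
  have := ff_tower p (IntermediateField.fixedField S)
  rw [card_Inert p (IntermediateField.fixedField S) E]
  congr 1
  let s : Inert p (IntermediateField.fixedField S) E → (Inert p K E ⊓ S : Subgroup (E ≃ₐ[K] E)) :=
    fun g => ⟨g.1.restrictScalars K, g.2, by
      obtain ⟨h, hh, hh'⟩ := ff_mem S g.1
      have : g.1.restrictScalars K = h := by ext x; exact hh' x
      rw [this]; exact hh⟩
  refine Nat.card_congr (Equiv.ofBijective s ⟨?_, ?_⟩)
  · intro a b hab
    ext x
    exact DFunLike.congr_fun (congrArg Subtype.val hab) x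
  · rintro ⟨a, ha, ha'⟩
    obtain ⟨τ, hτ⟩ := ff_lift S a ha'
    refine ⟨⟨τ, ?_⟩, ?_⟩
    · intro x hx
      rw [hτ]; exact ha x hx
    · ext x
      exact hτ x

end ns
end UBC

namespace UBC

theorem sep_cyc {G : Type*} [Group G] [Finite G] (hab : ∀ g h : G, g * h = h * g) (I : Subgroup G) (s : G)
    (hs : s ∈ I) (hs1 : s ≠ 1) : ∃ (H : Subgroup G) (ρ : G) (n : ℕ), H ≤ I ∧ ρ ∈ I ∧ 0 < n ∧ s ∉ H ∧
      ρ ^ n ∈ H ∧ (∀ i < n, ∀ j < n, ∀ h ∈ H, ∀ h' ∈ H, ρ ^ i * h = ρ ^ j * h' → i = j) ∧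
      (∀ g ∈ I, ∃ i < n, ∃ h ∈ H, g = ρ ^ i * h) ∧ Nat.card I = n * Nat.card H := by
  letI : CommGroup I := { (inferInstance : Group I) with mul_comm := fun a b => Subtype.ext (hab _ _) }
  have hs1' : (⟨s, hs⟩ : I) ≠ 1 := fun h => hs1 (congrArg Subtype.val h)
  obtain ⟨χ, hχ⟩ := CommGroup.exists_apply_ne_one_of_hasEnoughRootsOfUnity I ℂ hs1'
  have hfin : Finite χ.range := Set.finite_range χ
  obtain ⟨⟨_, ρ, rfl⟩, hρ⟩ := IsCyclic.exists_generator (α := χ.range)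
  have hpow : ∀ g : I, ∃ i < orderOf (χ ρ), χ g = (χ ρ) ^ i := by
    intro g
    have h1 := hρ ⟨χ g, g, rfl⟩
    rw [← mem_powers_iff_mem_zpowers] at h1
    obtain ⟨i, hi⟩ := h1
    refine ⟨i % orderOf (χ ρ), Nat.mod_lt _ ?_, ?_⟩
    · exact (MonoidHom.isOfFinOrder χ (isOfFinOrder_of_finite ρ)).orderOf_pos
    · rw [pow_mod_orderOf]
      exact (congrArg Subtype.val hi).symm
  have hpos : 0 < orderOf (χ ρ) := (MonoidHom.isOfFinOrder χ (isOfFinOrder_of_finite ρ)).orderOf_pos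
  have hmem : ∀ g : G, g ∈ χ.ker.map I.subtype ↔ ∃ hg : g ∈ I, χ ⟨g, hg⟩ = 1 := by
    intro g
    constructor
    · rintro ⟨a, ha, rfl⟩; exact ⟨a.2, ha⟩
    · rintro ⟨hg, h⟩; exact ⟨⟨g, hg⟩, h, rfl⟩
  refine ⟨χ.ker.map I.subtype, ρ, orderOf (χ ρ), ?_, ρ.2, hpos, ?_, ?_, ?_, ?_, ?_⟩
  · intro g hg; exact ((hmem g).1 hg).1
  · intro h
    exact hχ ((hmem s).1 h).2
  · exact ⟨ρ ^ orderOf (χ ρ), by change χ _ = 1; rw [map_pow, pow_orderOf_eq_one], rfl⟩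
  · rintro i hi j hj _ ⟨h, hh, rfl⟩ _ ⟨h', hh', rfl⟩ heq
    have h1 : ρ ^ i * h = ρ ^ j * h' := Subtype.ext heq
    have h2 := congrArg χ h1
    rw [map_mul, map_mul, MonoidHom.mem_ker.1 hh, MonoidHom.mem_ker.1 hh', mul_one, mul_one, map_pow, map_pow] at h2
    exact pow_injOn_Iio_orderOf hi hj h2
  · intro g hg
    obtain ⟨i, hi, h⟩ := hpow ⟨g, hg⟩
    refine ⟨i, hi, (ρ ^ i : I)⁻¹ * g, ⟨(ρ ^ i)⁻¹ * ⟨g, hg⟩, ?_, rfl⟩, ?_⟩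
    · change χ _ = 1
      rw [map_mul, h, map_inv, map_pow, inv_mul_cancel]
    · rw [← mul_assoc]; simp
  · have h1 : Nat.card (χ.ker.map I.subtype) = Nat.card χ.ker :=
      Nat.card_congr (χ.ker.equivMapOfInjective I.subtype I.subtype_injective).symm.toEquiv
    have h2 : orderOf (χ ρ) = Nat.card χ.range := by
      rw [← orderOf_eq_card_of_forall_mem_zpowers hρ, ← Subgroup.orderOf_coe]
    rw [h1, h2, ← Subgroup.index_ker, Subgroup.index_mul_card]

section key
universe u
variable {K E : Type u} [Field K] [Field E] [Algebra K E] [FiniteDimensional K E] [IsGalois K E]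

theorem h90H (hab : ∀ g h : E ≃ₐ[K] E, g * h = h * g) (H : Subgroup (E ≃ₐ[K] E)) (ρ : E ≃ₐ[K] E) (n : ℕ)
    (hn0 : 0 < n) (hn : ρ ^ n ∈ H)
    (hinj : ∀ i < n, ∀ j < n, ∀ h ∈ H, ∀ h' ∈ H, ρ ^ i * h = ρ ^ j * h' → i = j)
    (w : E) (hw : ∀ h ∈ H, h w = w) (hN : ∏ i ∈ Finset.range n, (ρ ^ i) w = 1) :
    ∃ a : E, a ≠ 0 ∧ (∀ h ∈ H, h a = a) ∧ ρ a = w * a := by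
  let T := IntermediateField.fixedField H
  have : IsGalois K T := ab_gal hab T
  let σ : T ≃ₐ[K] T := ρ.restrictNormal T
  have hσ : ∀ x : T, ((σ x : T) : E) = ρ x := fun x => AlgEquiv.restrictNormal_commutes ρ T x
  have hσi : ∀ (i : ℕ) (x : T), (((σ ^ i) x : T) : E) = (ρ ^ i) x := by
    intro i
    induction i with
    | zero => intro x; rfl
    | succ i ih => intro x; rw [pow_succ', pow_succ', AlgEquiv.mul_apply, AlgEquiv.mul_apply, hσ, ih]
  obtain ⟨a, ha, ha'⟩ := hilbert90 σ n hn0 (by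
      ext x
      rw [hσi, AlgEquiv.one_apply]
      exact (mem_ff H _).1 x.2 _ hn) (by
      intro i hi j hj hij
      have h1 : (ρ ^ j)⁻¹ * ρ ^ i ∈ T.fixingSubgroup := by
        intro x
        change ((ρ ^ j)⁻¹ * ρ ^ i) (x : E) = x
        rw [AlgEquiv.mul_apply, ← hσi, hij, hσi, ← AlgEquiv.mul_apply, inv_mul_cancel]; rfl
      rw [IntermediateField.fixingSubgroup_fixedField] at h1
      refine hinj i hi j hj 1 H.one_mem _ h1 ?_
      rw [mul_one, mul_inv_cancel_left]) ⟨w, (mem_ff H w).2 hw⟩ (by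
      apply Subtype.ext
      rw [show ((∏ i ∈ Finset.range n, (σ ^ i) ⟨w, (mem_ff H w).2 hw⟩ : T) : E) = ∏ i ∈ Finset.range n, (((σ ^ i) ⟨w, (mem_ff H w).2 hw⟩ : T) : E) from map_prod T.val _ _]
      simp_rw [hσi]
      exact hN)
  refine ⟨a, fun h => ha (Subtype.ext h), (mem_ff H _).1 a.2, ?_⟩
  rw [← hσ, ha']; rfl

theorem prod_shift (ρ : E ≃ₐ[K] E) (P : E) (j : ℕ) :
    ρ (∏ i ∈ Finset.range j, (ρ ^ i) P) * P = (∏ i ∈ Finset.range j, (ρ ^ i) P) * (ρ ^ j) P := by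
  rw [← Finset.prod_range_succ, Finset.prod_range_succ', map_prod, pow_zero, AlgEquiv.one_apply]
  simp_rw [pow_succ', AlgEquiv.mul_apply]

end key
end UBC

namespace UBC
section key2
universe u
variable {K E : Type u} [Field K] [Field E] [Algebra K E] [FiniteDimensional K E] [IsGalois K E]
variable (p : ℕ) [Fact p.Prime] [Algebra ℚ_[p] K] [FiniteDimensional ℚ_[p] K]
  [Algebra ℚ_[p] E] [FiniteDimensional ℚ_[p] E] [IsScalarTower ℚ_[p] K E]

theorem fixed_dvd (S : Subgroup (E ≃ₐ[K] E)) (hS : S ≤ Inert p K E) (z : E) (hz0 : z ≠ 0) (hz : ∀ g ∈ S, g z = z) :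
    ∃ k : ℤ, nm p z = rr p E ^ ((Nat.card S : ℤ) * k) := by
  have := ff_fin p (IntermediateField.fixedField S)
  have := ff_tower p (IntermediateField.fixedField S)
  have h1 := rr_ff S p
  rw [inf_eq_right.2 hS] at h1
  let z' : IntermediateField.fixedField S := ⟨z, (mem_ff S z).2 hz⟩
  obtain ⟨k, hk⟩ := nm_zpow_exists p (x := z') (fun h => hz0 (congrArg Subtype.val h))
  refine ⟨k, ?_⟩
  rw [← nm_tower p (E' := E), h1] at hk
  rw [zpow_mul, zpow_natCast, ← hk]
  rfl

theorem key (hab : ∀ g h : E ≃ₐ[K] E, g * h = h * g) (φ τ τ' : E ≃ₐ[K] E) (hτ : τ ∈ Inert p K E)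
    (hτ' : τ' ∈ Inert p K E) (x x' y : E) (hx : (φ * τ) x = x) (hx' : (φ * τ') x' = x') (hy : φ y = y)
    (nx : nm p x = rr p E) (nx' : nm p x' = rr p E) (ny : nm p y = 1)
    (hN : NS (Inert p K E) x = NS (Inert p K E) x' * NS (Inert p K E) y) : τ = τ' := by
  by_contra hne
  have hs1 : τ' * τ⁻¹ ≠ 1 := fun h => hne (mul_inv_eq_one.1 h).symm
  obtain ⟨H, ρ, n, hHI, hρI, hn0, hsH, hρn, hinj, hsurj, hcard⟩ := sep_cyc hab (Inert p K E) _
    ((Inert p K E).mul_mem hτ' ((Inert p K E).inv_mem hτ)) hs1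
  obtain ⟨j, hj, h, hh, hsj⟩ := hsurj _ ((Inert p K E).mul_mem hτ' ((Inert p K E).inv_mem hτ))
  obtain ⟨k, -, h', hh', hk⟩ := hsurj _ hτ'
  have r0 := rr_pos p E
  have ne_of : ∀ t : E, 0 < nm p t → t ≠ 0 := by rintro t ht rfl; simp at ht
  have x0 : x ≠ 0 := ne_of x (by rw [nx]; exact r0)
  have x0' : x' ≠ 0 := ne_of x' (by rw [nx']; exact r0)
  have y0 : y ≠ 0 := ne_of y (by rw [ny]; exact one_pos)
  set v := x / (x' * y) with hv
  have v0 : v ≠ 0 := div_ne_zero x0 (mul_ne_zero x0' y0)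
  set w := NS H v with hw
  have hNw : ∏ i ∈ Finset.range n, (ρ ^ i) w = 1 := by
    rw [hw, ← NS_dec (Inert p K E) H (Finset.range n) (fun i => ρ ^ i)
      (fun i hi j hj => hinj i (Finset.mem_range.1 hi) j (Finset.mem_range.1 hj))
      (fun i _ h hh => (Inert p K E).mul_mem ((Inert p K E).pow_mem hρI i) (hHI hh))
      (fun g hg => by obtain ⟨i, hi, h⟩ := hsurj g hg; exact ⟨i, Finset.mem_range.2 hi, h⟩), hv, NS_div, NS_mul, hN]
    exact div_self (mul_ne_zero (NS_ne _ x0') (NS_ne _ y0))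
  obtain ⟨a, a0, haH, ha⟩ := h90H hab H ρ n hn0 hρn hinj w (fun h hh => NS_fix H h hh v) hNw
  set ψ := φ * τ' with hψ
  set P := NS H x with hP
  set Y := NS H y with hY
  have P0 : P ≠ 0 := NS_ne _ x0
  have Y0 : Y ≠ 0 := NS_ne _ y0
  have w0 : w ≠ 0 := NS_ne _ v0
  have hsP : (τ' * τ⁻¹) P = (ρ ^ j) P := by
    rw [hsj, AlgEquiv.mul_apply, hP, NS_fix H h hh]
  have htY : τ' Y = (ρ ^ k) Y := by
    rw [hk, AlgEquiv.mul_apply, hY, NS_fix H h' hh']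
  have hψx : ψ x = (τ' * τ⁻¹) x := by
    have : ψ = (τ' * τ⁻¹) * (φ * τ) := by
      rw [hψ, hab φ τ, mul_assoc, inv_mul_cancel_left, hab]
    rw [this, AlgEquiv.mul_apply, hx]
  have hψy : ψ y = τ' y := by rw [hψ, hab, AlgEquiv.mul_apply, hy]
  have e1 : ψ v * (x * τ' y) = v * ((τ' * τ⁻¹) x * y) := by
    have : τ' y ≠ 0 := by simpa using y0
    rw [hv, map_div₀, map_mul, hψx, hψy, hx']
    field_simp
  have e2 : ψ w * (P * (ρ ^ k) Y) = w * ((ρ ^ j) P * Y) := by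
    have := congrArg (NS H) e1
    rw [NS_mul, NS_mul, NS_mul, NS_mul, ← NS_comm H hab, ← NS_comm H hab, ← NS_comm H hab] at this
    rw [← htY, ← hsP]; exact this
  set C := ∏ i ∈ Finset.range j, (ρ ^ i) P with hC
  set D := ∏ i ∈ Finset.range k, (ρ ^ i) Y with hD
  have C0 : C ≠ 0 := Finset.prod_ne_zero_iff.2 (fun i _ => (map_ne_zero (ρ ^ i)).2 P0)
  have D0 : D ≠ 0 := Finset.prod_ne_zero_iff.2 (fun i _ => (map_ne_zero (ρ ^ i)).2 Y0)
  have eC := prod_shift ρ P j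
  have eD := prod_shift ρ Y k
  have ψa0 : ψ a ≠ 0 := by simpa using a0
  have comm : ∀ (g g' : E ≃ₐ[K] E) (t : E), g (g' t) = g' (g t) := by
    intro g g' t; rw [← AlgEquiv.mul_apply, hab, AlgEquiv.mul_apply]
  set z := ψ a / a * D / C with hz
  have zρ : ρ z = z := by
    have k0 : (ρ ^ k) Y ≠ 0 := (map_ne_zero (ρ ^ k)).2 Y0
    have j0 : (ρ ^ j) P ≠ 0 := (map_ne_zero (ρ ^ j)).2 P0
    rw [hz]
    simp only [map_div₀, map_mul]
    rw [comm ρ ψ a, ha, map_mul]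
    have f1 : ρ C = C * (ρ ^ j) P / P := by rw [eq_div_iff P0]; exact eC
    have f2 : ρ D = D * (ρ ^ k) Y / Y := by rw [eq_div_iff Y0]; exact eD
    have f3 : ψ w = w * ((ρ ^ j) P * Y) / (P * (ρ ^ k) Y) := by
      rw [eq_div_iff (mul_ne_zero P0 k0)]; exact e2
    rw [f1, f2, f3]
    field_simp
  have zH : ∀ g ∈ H, g z = z := by
    intro g hg
    rw [hz]
    simp only [map_div₀, map_mul]
    rw [comm g ψ a, haH g hg, hC, hD, map_prod, map_prod]
    simp only [comm g _ P, comm g _ Y]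
    rw [hP, hY, NS_fix H g hg, NS_fix H g hg]
  have zρi : ∀ i : ℕ, (ρ ^ i) z = z := by
    intro i
    induction i with
    | zero => rfl
    | succ i ih => rw [pow_succ', AlgEquiv.mul_apply, ih, zρ]
  obtain ⟨m, hm⟩ := fixed_dvd p (Inert p K E) le_rfl z (by
    rw [hz]; exact div_ne_zero (mul_ne_zero (div_ne_zero ψa0 a0) D0) C0) (by
    intro g hg
    obtain ⟨i, -, h, hh, rfl⟩ := hsurj g hg
    rw [AlgEquiv.mul_apply, zH h hh, zρi])
  have nD : nm p D = 1 := by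
    rw [hD, map_prod]
    apply Finset.prod_eq_one
    intro i _
    rw [nm_aut, hY, nm_NS, ny, one_pow]
  have nC : nm p C = rr p E ^ (Nat.card H * j) := by
    rw [hC, map_prod, Finset.prod_congr rfl (fun i _ => nm_aut p _ P), Finset.prod_const, Finset.card_range, hP, nm_NS, nx, pow_mul]
  have nz : nm p z = rr p E ^ (-(Nat.card H * j : ℤ)) := by
    rw [hz, map_div₀, map_mul, map_div₀, nm_aut, nD, nC, mul_one, div_self (nm_pos p a0).ne', zpow_neg, one_div]
    norm_cast
  rw [nz] at hm
  have h3 := rr_zpow_inj p hm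
  rw [hcard] at h3
  have hH0 : (0 : ℤ) < Nat.card H := by exact_mod_cast Nat.card_pos
  have h4 : (j : ℤ) = n * (-m) := by
    push_cast at h3
    have : (Nat.card H : ℤ) * j = Nat.card H * (n * (-m)) := by linarith
    exact mul_left_cancel₀ hH0.ne' this
  have h5 : j = 0 := by
    have : n ∣ j := by exact_mod_cast (Dvd.intro _ h4.symm : (n : ℤ) ∣ j)
    exact Nat.eq_zero_of_dvd_of_lt this hj
  apply hsH
  rw [hsj, h5, pow_zero, one_mul]
  exact hh

end key2
end UBC

namespace UBC
section low
universe u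
variable {K E : Type u} [Field K] [Field E] [Algebra K E] [FiniteDimensional K E] [IsGalois K E]
variable (p : ℕ) [Fact p.Prime] [Algebra ℚ_[p] K] [FiniteDimensional ℚ_[p] K]
  [Algebra ℚ_[p] E] [FiniteDimensional ℚ_[p] E] [IsScalarTower ℚ_[p] K E]

theorem inf_bot (ψ : E ≃ₐ[K] E) (h : ∀ k : ℕ, ψ ^ k ∈ Inert p K E → ψ ^ k = 1) :
    Inert p K E ⊓ Subgroup.zpowers ψ = ⊥ := by
  rw [eq_bot_iff]
  rintro g ⟨hg, hg'⟩
  obtain ⟨k, rfl⟩ := (Submonoid.mem_powers_iff _ _).1 (mem_powers_iff_mem_zpowers.2 hg')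
  exact h k hg

theorem exists_unif_fix (ψ : E ≃ₐ[K] E) (h : ∀ k : ℕ, ψ ^ k ∈ Inert p K E → ψ ^ k = 1) :
    ∃ x : E, ψ x = x ∧ nm p x = rr p E := by
  have := ff_fin p (IntermediateField.fixedField (Subgroup.zpowers ψ))
  have := ff_tower p (IntermediateField.fixedField (Subgroup.zpowers ψ))
  have h1 := rr_ff (Subgroup.zpowers ψ) p
  rw [inf_bot p ψ h, Subgroup.card_bot, pow_one] at h1
  refine ⟨unif p (IntermediateField.fixedField (Subgroup.zpowers ψ)), ?_, ?_⟩
  · exact (mem_ff _ _).1 (unif p (IntermediateField.fixedField (Subgroup.zpowers ψ))).2 ψ (Subgroup.mem_zpowers ψ)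
  · rw [← h1]
    exact nm_tower p (E' := E) (unif p (IntermediateField.fixedField (Subgroup.zpowers ψ)))

theorem NS_top (x : E) : NS (⊤ : Subgroup (E ≃ₐ[K] E)) x = algebraMap K E (Algebra.norm K x) := by
  rw [NS, Algebra.norm_eq_prod_automorphisms]
  simp

theorem lower_aux (L : Type u) [Field L] [Algebra ℚ_[p] L] [FiniteDimensional ℚ_[p] L] [Algebra K L]
    [IsScalarTower ℚ_[p] K L] [FiniteDimensional K L] [IsGalois K L] [Algebra L E] [IsScalarTower K L E]
    [IsScalarTower ℚ_[p] L E] [FiniteDimensional L E] (hLE : rr p L = rr p E)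
    (hab : ∀ g h : E ≃ₐ[K] E, g * h = h * g) (φ : E ≃ₐ[K] E)
    (hgen : ∀ g : E ≃ₐ[K] E, ∃ i : ℕ, ∃ ρ ∈ Inert p K E, g = φ ^ i * ρ)
    (hH : ∀ τ ∈ Inert p K E, ∀ k : ℕ, (φ * τ) ^ k ∈ Inert p K E → (φ * τ) ^ k = 1)
    (hfin : ((UU p L).map (NN K L)).relIndex (UU p K) ≠ 0) :
    Nat.card (Inert p K E) ≤ ((UU p L).map (NN K L)).relIndex (UU p K) := by
  classical
  have : IsGalois L E := IsGalois.tower_top_of_isGalois K L E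
  set I := Inert p K E with hI
  have hφ : ∀ k : ℕ, φ ^ k ∈ I → φ ^ k = 1 := by
    have := hH 1 I.one_mem
    rwa [mul_one] at this
  have hdec : ∀ x : E, algebraMap K E (Algebra.norm K x) = NS I (NS (Subgroup.zpowers φ) x) := by
    intro x
    rw [← NS_top, NS_dec ⊤ I (Finset.univ.filter (fun g => g ∈ Subgroup.zpowers φ)) (fun g => g)]
    · change NS (Subgroup.zpowers φ) (NS I x) = _
      simp only [NS, map_prod]
      rw [Finset.prod_comm]
      refine Finset.prod_congr rfl (fun a _ => Finset.prod_congr rfl (fun b _ => ?_))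
      rw [← AlgEquiv.mul_apply, hab, AlgEquiv.mul_apply]
    · intro a ha b hb h hh h' hh' hab'
      simp only [Finset.mem_filter, Finset.mem_univ, true_and] at ha hb
      have h1 : b⁻¹ * a = h' * h⁻¹ := by
        rw [eq_mul_inv_iff_mul_eq, mul_assoc, hab', inv_mul_cancel_left]
      have h2 : b⁻¹ * a ∈ I ⊓ Subgroup.zpowers φ :=
        ⟨by rw [h1]; exact I.mul_mem hh' (I.inv_mem hh), Subgroup.mul_mem _ (Subgroup.inv_mem _ hb) ha⟩
      rw [inf_bot p φ hφ] at h2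
      exact (inv_mul_eq_one.1 (Subgroup.mem_bot.1 h2)).symm
    · intros; trivial
    · intro g _
      obtain ⟨i, ρ, hρ, rfl⟩ := hgen g
      exact ⟨φ ^ i, by simp, ρ, hρ, rfl⟩
  have hex : ∀ τ : I, ∃ x : E, (φ * τ) x = x ∧ nm p x = rr p E := fun τ => exists_unif_fix p _ (hH τ τ.2)
  choose X hX hXn using hex
  have hXK : ∀ τ : I, ∃ c : K, algebraMap K E c = NS I (X τ) := by
    intro τ
    refine (IsGalois.mem_range_algebraMap_iff_fixed _).2 (fun g => ?_)
    have h1 : φ (NS I (X τ)) = NS I (X τ) := by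
      have h2 := NS_comm I hab (φ * τ.1) (X τ)
      rw [hX, AlgEquiv.mul_apply, NS_fix I τ.1 τ.2] at h2
      exact h2
    obtain ⟨i, ρ, hρ, rfl⟩ := hgen g
    rw [AlgEquiv.mul_apply, NS_fix I ρ hρ]
    induction i with
    | zero => rfl
    | succ i ih => rw [pow_succ', AlgEquiv.mul_apply, ih, h1]
  choose c hc using hXK
  have hcn : ∀ τ, nm p (c τ) = rr p E ^ Nat.card I := by
    intro τ; rw [← nm_tower p (E' := E), hc, nm_NS, hXn]
  have r0 : rr p E ^ Nat.card I ≠ 0 := pow_ne_zero _ (rr_pos p E).ne'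
  have c0 : ∀ τ, c τ ≠ 0 := by
    intro τ h
    have := hcn τ
    rw [h, map_zero] at this
    exact r0 this.symm
  let f : I → UU p K := fun τ => ⟨Units.mk0 (c τ / c 1) (div_ne_zero (c0 _) (c0 _)), (mem_UU p).2 (by
    rw [Units.val_mk0, map_div₀, hcn, hcn, div_self r0])⟩
  have hfinq : Finite (UU p K ⧸ ((UU p L).map (NN K L)).subgroupOf (UU p K)) := by
    apply Nat.finite_of_card_ne_zero; exact hfin
  let q : I → UU p K ⧸ ((UU p L).map (NN K L)).subgroupOf (UU p K) := fun τ => QuotientGroup.mk (f τ)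
  have hq : Function.Injective q := by
    intro τ' τ hττ
    have h1 := QuotientGroup.eq.1 hττ
    rw [Subgroup.mem_subgroupOf] at h1
    obtain ⟨u, hu, hu'⟩ := h1
    have h2 : Algebra.norm K (u : L) = c τ / c τ' := by
      have := congrArg (Units.val) hu'
      rw [NN_apply] at this
      rw [this]
      have a1 := c0 1
      have a2 := c0 τ
      have a3 := c0 τ'
      simp only [f, Subgroup.coe_mul, InvMemClass.coe_inv, Units.val_mul, Units.val_inv_eq_inv_val, Units.val_mk0]
      field_simp
    obtain ⟨y, hy, hy'⟩ := unr_zero p L E hLE u ((mem_UU p).1 hu)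
    have h3 := hdec y
    rw [← Algebra.norm_norm (S := L), hy', h2, map_div₀, hc, hc] at h3
    have h4 : NS I (X τ') ≠ 0 := by rw [← hc]; simpa using c0 τ'
    rw [div_eq_iff h4] at h3
    have := key p hab φ τ τ' τ.2 τ'.2 (X τ) (X τ') (NS (Subgroup.zpowers φ) y) (hX τ) (hX τ')
      (NS_fix _ φ (Subgroup.mem_zpowers φ) y) (hXn _) (hXn _) (by rw [nm_NS, hy, one_pow])
      (by rw [h3, mul_comm])
    exact Subtype.ext this.symm
  exact Nat.card_le_card_of_injective q hq

end low
end UBC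

namespace UBC
section cyclo
universe u

theorem cyc_bound (p : ℕ) [Fact p.Prime] (K L E : Type u) [Field K] [Field L] [Field E]
    [Algebra ℚ_[p] K] [FiniteDimensional ℚ_[p] K]
    [Algebra ℚ_[p] L] [FiniteDimensional ℚ_[p] L] [Algebra K L]
    [IsScalarTower ℚ_[p] K L] [FiniteDimensional K L] [IsGalois K L]
    [Algebra ℚ_[p] E] [FiniteDimensional ℚ_[p] E] [Algebra K E] [Algebra L E] [IsScalarTower K L E]
    [IsScalarTower ℚ_[p] K E] [IsScalarTower ℚ_[p] L E] [FiniteDimensional L E] [FiniteDimensional K E]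
    [NeZero (qq p K ^ Module.finrank K L - 1)]
    [IsCyclotomicExtension {qq p K ^ Module.finrank K L - 1} L E]
    (habL : ∀ g h : L ≃ₐ[K] L, g * h = h * g)
    (hfin : ((UU p L).map (NN K L)).relIndex (UU p K) ≠ 0) (e : ℕ) (he : rr p K = rr p L ^ e) :
    e ≤ ((UU p L).map (NN K L)).relIndex (UU p K) := by
  have : CharZero K := charZero_of_injective_algebraMap (algebraMap ℚ_[p] K).injective
  set n := Module.finrank K L with hn
  set q := qq p K with hq
  set N := q ^ n - 1 with hN
  have hn0 : 0 < n := Module.finrank_pos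
  have hq1 : 1 < q := qq_gt p K
  have hN1 : N + 1 = q ^ n := by
    have : 0 < q ^ n := by positivity
    omega
  have : IsGalois K E := by
    obtain ⟨f, hf, hf'⟩ := IsGalois.is_separable_splitting_field K L
    have h1 : Polynomial.IsSplittingField L E (Polynomial.map (algebraMap K L) (Polynomial.X ^ N - 1)) := by
      have := IsCyclotomicExtension.isSplittingField_X_pow_sub_one N L E
      simpa using this
    have h2 := Polynomial.IsSplittingField.mul (K := L) E f (Polynomial.X ^ N - 1) hf.ne_zero
      (Polynomial.X_pow_sub_C_ne_zero (NeZero.pos N) (1 : K))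
    have := Normal.of_isSplittingField (F := K) (E := E) (f * (Polynomial.X ^ N - 1))
    exact ⟨⟩
  have hζ := IsCyclotomicExtension.zeta_spec N L E
  set ζ := IsCyclotomicExtension.zeta N L E with hζ'
  have hζ0 : ζ ≠ 0 := hζ.ne_zero (NeZero.ne N)
  have nζ : nm p ζ = 1 := by
    have h1 : nm p ζ ^ N = 1 := by rw [← map_pow, hζ.pow_eq_one, map_one]
    exact (pow_eq_one_iff_of_nonneg (nm_nonneg p _) (NeZero.ne N)).1 h1
  have hext : ∀ g : E ≃ₐ[K] E, (∀ x : L, g (algebraMap L E x) = algebraMap L E x) → g ζ = ζ → g = 1 := by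
    intro g hg hgζ
    let g' : E →ₐ[L] E := { (g : E →+* E) with commutes' := hg }
    have h1 : g' = AlgHom.id L E := by
      apply (hζ.powerBasis L).algHom_ext
      rw [IsPrimitiveRoot.powerBasis_gen]
      exact hgζ
    ext x
    exact DFunLike.congr_fun h1 x
  have hres : ∀ (g : E ≃ₐ[K] E) (x : L), g (algebraMap L E x) = algebraMap L E (AlgEquiv.restrictNormalHom L g x) :=
    fun g x => (AlgEquiv.restrictNormal_commutes g L x).symm
  have hζpow : ∀ g : E ≃ₐ[K] E, ∃ a : ℕ, g ζ = ζ ^ a := by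
    intro g
    obtain ⟨a, -, ha⟩ := hζ.eq_pow_of_pow_eq_one (ξ := g ζ) (by rw [← map_pow, hζ.pow_eq_one, map_one])
    exact ⟨a, ha.symm⟩
  have hab : ∀ g h : E ≃ₐ[K] E, g * h = h * g := by
    intro g h
    have h1 : (h * g)⁻¹ * (g * h) = 1 := by
      apply hext
      · intro x
        rw [hres]
        have : AlgEquiv.restrictNormalHom L ((h * g)⁻¹ * (g * h)) = 1 := by
          rw [map_mul, map_inv, map_mul, map_mul, inv_mul_eq_one]; exact habL _ _
        rw [this]; rfl
      · obtain ⟨a, ha⟩ := hζpow g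
        obtain ⟨b, hb⟩ := hζpow h
        have : (g * h) ζ = (h * g) ζ := by
          rw [AlgEquiv.mul_apply, AlgEquiv.mul_apply, ha, hb, map_pow, map_pow, ha, hb, ← pow_mul, ← pow_mul, mul_comm]
        rw [AlgEquiv.mul_apply, this, ← AlgEquiv.mul_apply, inv_mul_cancel]; rfl
    exact (inv_mul_eq_one.1 h1).symm
  have hQ : nm p ((N + 1 : ℕ) : E) < 1 := by
    rw [hN1, Nat.cast_pow, map_pow]
    have : nm p ((q : ℕ) : E) < 1 := by
      have h1 := nm_qq_lt p (E := K)
      rw [← nm_tower p (E' := E), map_natCast] at h1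
      exact h1
    exact pow_lt_one₀ (nm_nonneg p _) this hn0.ne'
  have hteich : ∀ (g : E ≃ₐ[K] E) (a : ℕ), nm p (g ζ - ζ ^ a) < 1 → g ζ = ζ ^ a := by
    intro g a h
    have hp0 : ζ ^ a ≠ 0 := pow_ne_zero _ hζ0
    have h1 : g ζ / ζ ^ a = 1 := by
      apply teich_eq_one p hQ
      · rw [pow_succ, div_pow, ← map_pow, ← pow_mul, mul_comm a, pow_mul, hζ.pow_eq_one, map_one, one_pow, div_one, one_mul]
      · rw [div_sub_one hp0, map_div₀, map_pow, nζ, one_pow, div_one]; exact h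
    exact (div_eq_one_iff_eq hp0).1 h1
  have hIζ : ∀ g ∈ Inert p K E, g ζ = ζ := by
    intro g hg
    have := hteich g 1 (by rw [pow_one]; exact hg ζ nζ.le)
    rwa [pow_one] at this
  obtain ⟨φ, hφ⟩ := exists_frob p K E
  have hφζ : φ ζ = ζ ^ q := hteich φ q (hφ ζ nζ.le)
  have hLE : rr p L = rr p E := by
    have : IsGalois L E := IsGalois.tower_top_of_isGalois K L E
    have h1 := card_Inert p L E
    have h2 : Inert p L E = ⊥ := by
      rw [eq_bot_iff]
      intro g hg
      have h3 := hext (g.restrictScalars K) (fun x => g.commutes x) (hIζ _ hg)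
      rw [Subgroup.mem_bot]
      ext x
      exact DFunLike.congr_fun h3 x
    rw [h1, h2, Subgroup.card_bot, pow_one]
  have hlow := lower_aux p L hLE hab φ (frob_decomp p K E φ hφ) (by
    intro τ hτ k hk
    have hpow : ∀ k : ℕ, ((φ * τ) ^ k) ζ = ζ ^ (q ^ k) := by
      intro k
      induction k with
      | zero => simp
      | succ k ih => rw [pow_succ, AlgEquiv.mul_apply, AlgEquiv.mul_apply, hIζ τ hτ, hφζ, map_pow, ih, ← pow_mul, pow_succ]
    have h1 := hIζ _ hk
    apply hext _ _ h1
    rw [hpow] at h1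
    have hqk : 0 < q ^ k := by positivity
    have h2 : ζ ^ (q ^ k - 1) = 1 := by
      have : ζ * ζ ^ (q ^ k - 1) = ζ * 1 := by
        rw [← pow_succ', Nat.sub_add_cancel hqk, h1, mul_one]
      exact mul_left_cancel₀ hζ0 this
    rw [hζ.pow_eq_one_iff_dvd] at h2
    have h3 := Nat.pow_sub_one_gcd_pow_sub_one q n k
    rw [← hN, Nat.gcd_eq_left h2] at h3
    have h4 : q ^ n = q ^ (n.gcd k) := by
      have : 0 < q ^ (n.gcd k) := by positivity
      omega
    have h5 := Nat.pow_right_injective hq1 h4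
    have h6 : n ∣ k := h5 ▸ Nat.gcd_dvd_right n k
    intro x
    rw [hres, map_pow]
    obtain ⟨m, rfl⟩ := h6
    rw [pow_mul, hn, ← IsGalois.card_aut_eq_finrank, pow_card_eq_one', one_pow]
    rfl) hfin
  have : Nat.card (Inert p K E) = e := by
    apply rr_pow_inj p E
    rw [← card_Inert, he, hLE]
  rwa [this] at hlow

theorem lower (p : ℕ) [Fact p.Prime] (K L : Type u) [Field K] [Field L]
    [Algebra ℚ_[p] K] [FiniteDimensional ℚ_[p] K]
    [Algebra ℚ_[p] L] [FiniteDimensional ℚ_[p] L] [Algebra K L]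
    [IsScalarTower ℚ_[p] K L] [FiniteDimensional K L] [IsGalois K L]
    (habL : ∀ g h : L ≃ₐ[K] L, g * h = h * g)
    (hfin : ((UU p L).map (NN K L)).relIndex (UU p K) ≠ 0) (e : ℕ) (he : rr p K = rr p L ^ e) :
    e ≤ ((UU p L).map (NN K L)).relIndex (UU p K) := by
  have : CharZero L := charZero_of_injective_algebraMap (algebraMap ℚ_[p] L).injective
  have : NeZero (qq p K ^ Module.finrank K L - 1) := ⟨by
    have := Nat.one_lt_pow (Module.finrank_pos (R := K) (M := L)).ne' (qq_gt p K)
    omega⟩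
  let E := CyclotomicField (qq p K ^ Module.finrank K L - 1) L
  have t0 : FiniteDimensional L E := IsCyclotomicExtension.finite {qq p K ^ Module.finrank K L - 1} _ _
  have t1 : IsScalarTower K L E := inferInstance
  have t2 : IsScalarTower ℚ_[p] L E := inferInstance
  have t3 : IsScalarTower ℚ_[p] K E := IsScalarTower.of_algebraMap_eq (fun x => by
    rw [IsScalarTower.algebraMap_apply ℚ_[p] L E, IsScalarTower.algebraMap_apply K L E, IsScalarTower.algebraMap_apply ℚ_[p] K L])
  have t4 : FiniteDimensional K E := FiniteDimensional.trans K L E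
  have t5 : FiniteDimensional ℚ_[p] E := FiniteDimensional.trans ℚ_[p] L E
  exact cyc_bound p K L E habL hfin e he

end cyclo
end UBC

namespace UBC
section fin
universe u

theorem condExp_eq (p : ℕ) [Fact p.Prime] (K L : Type u) [Field K] [Field L]
    [Algebra ℚ_[p] K] [FiniteDimensional ℚ_[p] K]
    [Algebra ℚ_[p] L] [FiniteDimensional ℚ_[p] L] [Algebra K L]
    [IsScalarTower ℚ_[p] K L] [FiniteDimensional K L] [IsGalois K L] {vK : K → ℤ}
    (hvK : IsNormalizedVal p K vK) :
    condExp vK L = sInf {n : ℕ | ∀ u : K, Un p K n u → ∃ x : Lˣ, x ∈ UU p L ∧ Algebra.norm K (x : L) = u} := by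
  unfold condExp
  congr 1
  ext n
  change (∀ u : K, _) ↔ (∀ u : K, _)
  refine forall_congr' (fun u => ?_)
  have h1 : Un p K n u ↔ u ≠ 0 ∧ vK u = 0 ∧ (n = 0 ∨ u = 1 ∨ (n : ℤ) ≤ vK (u - 1)) := by
    constructor
    · rintro ⟨a, b⟩
      have h0 : u ≠ 0 := by rintro rfl; simp at a
      refine ⟨h0, ?_, ?_⟩
      · rw [v_eq p K hvK h0, a, zpow_zero]
      · by_cases hu : u = 1
        · exact Or.inr (Or.inl hu)
        · right; right
          rw [v_ge p K hvK (sub_ne_zero.2 hu), zpow_natCast]; exact b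
    · rintro ⟨h0, a, b⟩
      rw [v_eq p K hvK h0, zpow_zero] at a
      refine ⟨a, ?_⟩
      rcases b with rfl | rfl | b
      · rw [pow_zero]
        exact nm_sub_le' p a.le (by simp)
      · rw [sub_self, map_zero]; exact pow_nonneg (rr_pos p K).le _
      · by_cases hu : u = 1
        · rw [hu, sub_self, map_zero]; exact pow_nonneg (rr_pos p K).le _
        · rwa [v_ge p K hvK (sub_ne_zero.2 hu), zpow_natCast] at b
  rw [h1]
  constructor
  · rintro h ⟨h0, a, b⟩
    obtain ⟨x, hx, hx'⟩ := h h0 a b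
    refine ⟨Units.mk0 x hx, (mem_UU p).2 ?_, hx'⟩
    have h2 := (h1.2 ⟨h0, a, b⟩).1
    rw [← hx', nm_norm] at h2
    exact (pow_eq_one_iff_of_nonneg (nm_nonneg p _) (Module.finrank_pos).ne').1 h2
  · intro h h0 a b
    obtain ⟨x, -, hx'⟩ := h ⟨h0, a, b⟩
    exact ⟨x, x.ne_zero, hx'⟩

theorem cond_main (p : ℕ) [Fact p.Prime] (K F L M : Type u) [Field K] [Algebra ℚ_[p] K]
  [FiniteDimensional ℚ_[p] K] [Field L] [Algebra ℚ_[p] L]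
  [FiniteDimensional ℚ_[p] L] [Algebra K L] [IsScalarTower ℚ_[p] K L]
  [Field F] [Algebra ℚ_[p] F] [FiniteDimensional ℚ_[p] F]
  [Field M] [Algebra ℚ_[p] M] [FiniteDimensional ℚ_[p] M]
  [Algebra K F] [IsScalarTower ℚ_[p] K F]
  [Algebra K M] [IsScalarTower ℚ_[p] K M]
  [Algebra F M] [IsScalarTower ℚ_[p] F M]
  [Algebra L M] [IsScalarTower ℚ_[p] L M]
  [IsScalarTower K F M] [IsScalarTower K L M]
  [FiniteDimensional K F] [FiniteDimensional K L] [FiniteDimensional K M]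
  [FiniteDimensional F M] [IsGalois K L] [IsGalois F M] {vK : K → ℤ} {vF : F → ℤ}
    (hvK : IsNormalizedVal p K vK) (hvF : IsNormalizedVal p F vF)
    (hK : rr p K = rr p F) (hcomp : IntermediateField.adjoin K
      (Set.range (algebraMap F M) ∪ Set.range (algebraMap L M)) = ⊤)
    (hab : ∀ g h : L ≃ₐ[K] L, g * h = h * g) : condExp vF M = condExp vK L := by
  obtain ⟨hLM, -, -⟩ := bc_main p K F L M hK hcomp
  have habM : ∀ g h : M ≃ₐ[F] M, g * h = h * g := by
    intro g h
    apply res_inj K F L M hcomp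
    rw [map_mul, map_mul, hab]
  have : FiniteDimensional L M := FiniteDimensional.right K L M
  obtain ⟨e, he0, he⟩ := exists_e p K L
  have heM : rr p F = rr p M ^ e := by rw [← hK, he, hLM]
  obtain ⟨hA0, -⟩ := ab_bound_aux p _ K L rfl hab e he he0
  obtain ⟨hB0, hB⟩ := ab_bound_aux p _ F M rfl habM e heM he0
  have hA := lower p K L hab hA0 e he
  have hU0 : ∀ (E : Type u) [Field E] [Algebra ℚ_[p] E] [FiniteDimensional ℚ_[p] E] (x : E), nm p x = 1 → Un p E 0 x := by
    intro E _ _ _ x hx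
    exact ⟨hx, by rw [pow_zero]; exact nm_sub_le' p hx.le (by simp)⟩
  have hmap : (UU p F).map (NN K F) = UU p K := by
    apply le_antisymm
    · rintro _ ⟨x, hx, rfl⟩
      rw [mem_UU, NN_apply]
      exact ((unr_four p K F hK 0).2 _ (hU0 F _ ((mem_UU p).1 hx))).1
    · intro u hu
      obtain ⟨w, hw, hw'⟩ := (unr_four p K F hK 0).1 u (hU0 K _ ((mem_UU p).1 hu))
      have w0 : w ≠ 0 := by rintro rfl; have := hw.1; simp at this
      refine ⟨Units.mk0 w w0, (mem_UU p).2 hw.1, ?_⟩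
      ext
      rw [NN_apply]; exact hw'
  have hBC : (UU p M).map (NN F M) ≤ ((UU p L).map (NN K L)).comap (NN K F) := by
    rintro _ ⟨x, hx, rfl⟩
    have h1 := ((unr_four p L M hLM 0).2 _ (hU0 M _ ((mem_UU p).1 hx))).1
    refine ⟨NN L M x, (mem_UU p).2 (by rw [NN_apply]; exact h1), ?_⟩
    ext
    simp only [NN_apply]
    rw [Algebra.norm_norm, Algebra.norm_norm]
  have hBU : (UU p M).map (NN F M) ≤ UU p F := by
    rintro _ ⟨x, hx, rfl⟩; exact NN_mem p F M hx
  have hcl : ∀ u : Fˣ, u ∈ UU p F → NN K F u ∈ (UU p L).map (NN K L) → u ∈ (UU p M).map (NN F M) := by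
    set B := (UU p M).map (NN F M) with hBd
    set A := (UU p L).map (NN K L) with hAd
    have i1 : (A.comap (NN K F)).relIndex (UU p F) = A.relIndex (UU p K) := by
      rw [Subgroup.relIndex_comap, hmap]
    have i2 := Subgroup.relIndex_mul_relIndex B (A.comap (NN K F) ⊓ UU p F) (UU p F)
      (le_inf hBC hBU) inf_le_right
    rw [Subgroup.inf_relIndex_right, i1] at i2
    have i3 : B.relIndex (A.comap (NN K F) ⊓ UU p F) = 1 := by
      have j1 : B.relIndex (A.comap (NN K F) ⊓ UU p F) ≠ 0 := by
        intro h; rw [h, zero_mul] at i2; exact hB0 i2.symm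
      by_contra hne
      have j2 : 2 ≤ B.relIndex (A.comap (NN K F) ⊓ UU p F) := by omega
      have := Nat.mul_le_mul_right (A.relIndex (UU p K)) j2
      omega
    rw [Subgroup.relIndex_eq_one] at i3
    intro u hu hu'
    exact i3 ⟨hu', hu⟩
  rw [condExp_eq p F M hvF, condExp_eq p K L hvK]
  congr 1
  ext n
  constructor
  · intro h u hu
    obtain ⟨w, hw, rfl⟩ := (unr_four p K F hK n).1 u hu
    obtain ⟨x, hx, rfl⟩ := h w hw
    obtain ⟨y, hy, hy'⟩ := hBC ⟨x, hx, rfl⟩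
    refine ⟨y, hy, ?_⟩
    rw [← NN_apply, hy', NN_apply, NN_apply]
  · intro h u hu
    have u0 : u ≠ 0 := by rintro rfl; have := hu.1; simp at this
    obtain ⟨x, hx, hx'⟩ := h _ ((unr_four p K F hK n).2 u hu)
    obtain ⟨y, hy, hy'⟩ := hcl (Units.mk0 u u0) ((mem_UU p).2 hu.1) ⟨x, hx, by
      ext; rw [NN_apply, NN_apply]; exact hx'⟩
    refine ⟨y, hy, ?_⟩
    rw [← NN_apply, hy']; rfl

end fin
end UBC

/-- Let `F/K` be a finite unramified extension of `p`-adic fields and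
`L/K` a finite Galois extension, with compositum `M = LF`.  Then
`m_{LF/F} = m_{L/K}` (equality of the largest upper-numbering ramification jumps); in
particular if `L/K` is abelian then the conductor exponents satisfy
`f(LF/F) = f(L/K)`. -/
theorem unramified_base_change_jump_and_conductor
    (p : ℕ) [Fact p.Prime]
    (K F L M : Type v) [Field K] [Field F] [Field L] [Field M]
    [Algebra ℚ_[p] K] [FiniteDimensional ℚ_[p] K]
    [Algebra ℚ_[p] F] [FiniteDimensional ℚ_[p] F]
    [Algebra K F] [Algebra K L] [Algebra K M] [Algebra F M] [Algebra L M]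
    [IsScalarTower ℚ_[p] K F]
    [IsScalarTower K F M] [IsScalarTower K L M]
    [FiniteDimensional K F] [FiniteDimensional K L] [FiniteDimensional K M]
    [FiniteDimensional F M] [IsGalois K L] [IsGalois F M]
    (vK : K → ℤ) (vF : F → ℤ) (vL : L → ℤ) (vM : M → ℤ)
    (hvK : IsNormalizedVal p K vK) (hvF : IsNormalizedVal p F vF)
    (hvL : IsNormalizedVal p L vL) (hvM : IsNormalizedVal p M vM)
    -- `F/K` is unramified (ramification index 1):
    (hunram : ∀ x : K, x ≠ 0 → vF (algebraMap K F x) = vK x)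
    -- compatibility of the valuations on the compositum:
    (hextL : ∃ e : ℤ, 0 < e ∧ ∀ x : L, x ≠ 0 → vM (algebraMap L M x) = e * vL x)
    (hextF : ∃ e : ℤ, 0 < e ∧ ∀ x : F, x ≠ 0 → vM (algebraMap F M x) = e * vF x)
    -- `M = L F` :
    (hcomp : IntermediateField.adjoin K
      (Set.range (algebraMap F M) ∪ Set.range (algebraMap L M)) = ⊤)
    -- `θL` generates `O_L` over `O_K` and `θM` generates `O_M` over `O_F`:
    (θL : L) (hθLint : θL = 0 ∨ 0 ≤ vL θL)
    (hθLgen : ∀ x : L, x ≠ 0 → 0 ≤ vL x → ∃ q : Polynomial K,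
      (∀ i, q.coeff i = 0 ∨ 0 ≤ vK (q.coeff i)) ∧ Polynomial.aeval θL q = x)
    (θM : M) (hθMint : θM = 0 ∨ 0 ≤ vM θM)
    (hθMgen : ∀ x : M, x ≠ 0 → 0 ≤ vM x → ∃ q : Polynomial F,
      (∀ i, q.coeff i = 0 ∨ 0 ≤ vF (q.coeff i)) ∧ Polynomial.aeval θM q = x) :
    mJump F vM θM = mJump K vL θL ∧
    ((∀ g h : L ≃ₐ[K] L, g * h = h * g) → condExp vF M = condExp vK L) := by
  letI : Algebra ℚ_[p] L := ((algebraMap K L).comp (algebraMap ℚ_[p] K)).toAlgebra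
  letI : Algebra ℚ_[p] M := ((algebraMap K M).comp (algebraMap ℚ_[p] K)).toAlgebra
  haveI : IsScalarTower ℚ_[p] K L := IsScalarTower.of_algebraMap_eq (fun _ => rfl)
  haveI : IsScalarTower ℚ_[p] K M := IsScalarTower.of_algebraMap_eq (fun _ => rfl)
  haveI : IsScalarTower ℚ_[p] F M := IsScalarTower.of_algebraMap_eq (fun x => by
    rw [IsScalarTower.algebraMap_apply ℚ_[p] K F, ← IsScalarTower.algebraMap_apply K F M]; rfl)
  haveI : IsScalarTower ℚ_[p] L M := IsScalarTower.of_algebraMap_eq (fun x => by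
    rw [IsScalarTower.algebraMap_apply ℚ_[p] K L, ← IsScalarTower.algebraMap_apply K L M]; rfl)
  haveI : FiniteDimensional ℚ_[p] L := FiniteDimensional.trans ℚ_[p] K L
  haveI : FiniteDimensional ℚ_[p] M := FiniteDimensional.trans ℚ_[p] K M
  have hK : UBC.rr p K = UBC.rr p F := by
    have hu : UBC.unif p K ≠ 0 := UBC.unif_ne p
    have h1 : vK (UBC.unif p K) = 1 :=
      (UBC.v_eq p K hvK hu).2 (by rw [UBC.nm_unif, zpow_one])
    have h2 := UBC.nm_eq_v hvF
      ((map_ne_zero_iff _ (algebraMap K F).injective).2 hu)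
    rw [hunram _ hu, h1, zpow_one, UBC.nm_tower, UBC.nm_unif] at h2
    exact h2
  exact ⟨UBC.mJump_eq p K F L M hvL hvM hK hcomp
      (UBC.gen_of p K L hvK hvL hθLint hθLgen) (UBC.gen_of p F M hvF hvM hθMint hθMgen),
    fun hab => UBC.cond_main p K F L M hvK hvF hK hcomp hab⟩
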